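/- Every discounted stochastic game with a decomposable coarser transition kernel on the atomless part has a stationary Markov perfect equilibrium; that is, there exists a stationary Markov strategy profile f = (f_1,...,f_m) whose continuation values v_i(.,f) satisfy, for every player i and every state s, v_i(s,f) = max over x_i in A_i(s) of the integral over X_{-i} of [(1-beta_i) u_i(s, x_i, x_{-i}) + beta_i * integral over S of v_i(s_1,f) Q(ds_1 | s, x_i, x_{-i})] with respect to f_{-i}(dx_{-i} | s). -/

import Mathlib

open MeasureTheory Filter

/-- `D` is a `G`-atom for the measure `lam`: it has positive measure and every
measurable subset of `D` agrees modulo null sets with `D₁ ∩ D` for some `G`-measurable `D₁`. -/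
def IsGAtom {S : Type*} (mS : MeasurableSpace S) (G : MeasurableSpace S)
    (lam : @Measure S mS) (D : Set S) : Prop :=
  0 < lam D ∧ ∀ D₀ ⊆ D, MeasurableSet[mS] D₀ →
    ∃ D₁ : Set S, MeasurableSet[G] D₁ ∧ lam (symmDiff D₀ (D₁ ∩ D)) = 0

namespace SMPE

section Brouwer
open Metric Set Topology

variable {E : Type*} [NormedAddCommGroup E] [InnerProductSpace ℝ E] [FiniteDimensional ℝ E]
  

/-- `det (1 + t A)` is, for every `t`, the same affine combination of values at given nodes. -/
lemma det_interp (n : ℕ) (hn : Module.finrank ℝ E = n) (τ : ℕ → ℝ) (hτ : Function.Injective τ)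
    (A : E →L[ℝ] E) (t : ℝ) :
    (ContinuousLinearMap.id ℝ E + t • A).det = ∑ k ∈ Finset.range (n + 1),
      (Lagrange.basis (Finset.range (n+1)) τ k).eval t *
        (ContinuousLinearMap.id ℝ E + τ k • A).det := by
  classical
  let b := Module.finBasis ℝ E
  let M := LinearMap.toMatrix b b (A : E →ₗ[ℝ] E)
  let P : Polynomial ℝ := Matrix.det ((Polynomial.X : Polynomial ℝ) • M.map Polynomial.C
    + (1 : Matrix _ _ ℝ).map Polynomial.C)
  have hP : ∀ t : ℝ, (ContinuousLinearMap.id ℝ E + t • A).det = P.eval t := by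
    intro t
    have h1 : (ContinuousLinearMap.id ℝ E + t • A).det
        = Matrix.det (1 + t • M) := by
      rw [ContinuousLinearMap.det, ← LinearMap.det_toMatrix b]
      congr 1
      ext i j
      simp [M, LinearMap.toMatrix_apply, Matrix.one_apply, Finsupp.single_apply, eq_comm]
    rw [h1]
    simp only [P]
    rw [← Polynomial.coe_evalRingHom, RingHom.map_det]
    congr 1
    ext i j
    by_cases hij : i = j
    · simp [hij, add_comm]; exact mul_comm _ _
    · simp [hij]; exact mul_comm _ _
  have hdeg : P.degree < (Finset.range (n+1)).card := by
    have := Polynomial.natDegree_det_X_add_C_le M 1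
    rw [Finset.card_range]
    refine lt_of_le_of_lt Polynomial.degree_le_natDegree ?_
    have h2 : P.natDegree < n + 1 := by
      have : P.natDegree ≤ n := by
        rw [Fintype.card_fin] at this
        exact this.trans hn.le
      omega
    exact_mod_cast h2
  have := Lagrange.eq_interpolate (v := τ) (s := Finset.range (n+1)) (f := P) hτ.injOn hdeg
  rw [hP]
  conv_lhs => rw [this]
  rw [Lagrange.interpolate_apply, Polynomial.eval_finsetSum]
  refine Finset.sum_congr rfl fun k _ => ?_
  rw [hP]; simp [mul_comm]

lemma det_pos_of_small (A : E →L[ℝ] E) (h : ‖A‖ < 1) :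
    0 < (ContinuousLinearMap.id ℝ E + A).det := by
  have hne : ∀ t ∈ Icc (0:ℝ) 1, (ContinuousLinearMap.id ℝ E + t • A).det ≠ 0 := by
    intro t ht h0
    have : ¬ Function.Injective (ContinuousLinearMap.id ℝ E + t • A) := by
      intro hinj
      have hu : IsUnit ((ContinuousLinearMap.id ℝ E + t • A : E →L[ℝ] E) : E →ₗ[ℝ] E) := by
        rw [Module.End.isUnit_iff]
        exact ⟨hinj, LinearMap.injective_iff_surjective.1 hinj⟩
      rw [LinearMap.isUnit_iff_isUnit_det] at hu
      exact hu.ne_zero h0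
    apply this
    rw [injective_iff_map_eq_zero]
    intro x hx
    have hx' : x = - (t • A x) := by
      have : x + t • A x = 0 := by simpa using hx
      exact eq_neg_of_add_eq_zero_left this
    have h1 : ‖x‖ ≤ ‖A‖ * ‖x‖ := by
      calc ‖x‖ = ‖t • A x‖ := by conv_lhs => rw [hx', norm_neg]
        _ = |t| * ‖A x‖ := norm_smul _ _
        _ ≤ 1 * (‖A‖ * ‖x‖) := by
            gcongr
            · rw [abs_le]; constructor <;> linarith [ht.1, ht.2]
            · exact A.le_opNorm x
        _ = _ := one_mul _
    by_contra hx0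
    have : 0 < ‖x‖ := norm_pos_iff.2 hx0
    nlinarith
  by_contra hneg
  push Not at hneg
  have hc : ContinuousOn (fun t : ℝ => (ContinuousLinearMap.id ℝ E + t • A).det) (Icc 0 1) := by
    apply Continuous.continuousOn
    exact ContinuousLinearMap.continuous_det.comp (by fun_prop)
  have := intermediate_value_Icc' (zero_le_one' ℝ) hc
  have h0 : (0:ℝ) ∈ Icc ((ContinuousLinearMap.id ℝ E + (1:ℝ) • A).det)
      ((ContinuousLinearMap.id ℝ E + (0:ℝ) • A).det) := by
    constructor
    · simpa using hneg
    · simp [ContinuousLinearMap.det]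
  obtain ⟨t, ht, ht0⟩ := this h0
  exact hne t ht ht0

variable [MeasurableSpace E] [BorelSpace E]

lemma no_retraction (r : E → E) (U : Set E) (hU : IsOpen U) (hBU : closedBall (0:E) 1 ⊆ U)
    (hr : ContDiffOn ℝ 1 r U) (hr1 : ∀ x ∈ closedBall (0:E) 1, ‖r x‖ = 1)
    (hrs : ∀ x ∈ sphere (0:E) 1, r x = x) : False := by
  classical
  set B := closedBall (0:E) 1 with hB
  have hBc : IsCompact B := isCompact_closedBall _ _
  let g : E → E := fun x => if x ∈ B then r x - x else 0
  let A : E → E →L[ℝ] E := fun x => fderiv ℝ r x - ContinuousLinearMap.id ℝ E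
  have hderiv : ∀ x ∈ B, HasFDerivAt (fun x => r x - x) (A x) x := by
    intro x hx
    have : DifferentiableAt ℝ r x :=
      (hr.differentiableOn (by simp)).differentiableAt (hU.mem_nhds (hBU hx))
    exact this.hasFDerivAt.sub (hasFDerivAt_id x)
  have hAcont : ContinuousOn A B := by
    refine ContinuousOn.sub ?_ continuousOn_const
    exact (hr.continuousOn_fderiv_of_isOpen hU (by simp)).mono hBU
  obtain ⟨L0, hL0⟩ := hBc.exists_bound_of_continuousOn hAcont
  let L : NNReal := (L0.toNNReal + 1)
  have hL : ∀ x ∈ B, ‖A x‖ ≤ L := fun x hx => by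
    refine (hL0 x hx).trans ?_
    simp only [L, NNReal.coe_add, NNReal.coe_one]
    linarith [Real.le_coe_toNNReal L0]
  have hLpos : (0:ℝ) < L := by positivity
  have hlipB : ∀ x ∈ B, ∀ y ∈ B, ‖g x - g y‖ ≤ L * ‖x - y‖ := by
    intro x hx y hy
    have := (convex_closedBall (0:E) 1).norm_image_sub_le_of_norm_hasFDerivWithin_le
      (f := fun x => r x - x) (f' := A) (C := L)
      (fun z hz => (hderiv z hz).hasFDerivWithinAt) hL hy hx
    simpa [g, hx, hy] using this
  have hg_out : ∀ x, 1 ≤ ‖x‖ → g x = 0 := by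
    intro x hx
    by_cases hxB : x ∈ B
    · have : ‖x‖ = 1 := le_antisymm (by simpa [hB] using hxB) hx
      have : r x = x := hrs x (by simpa using this)
      simp [g, this]
    · simp [g, hxB]
  have hlip1 : ∀ x ∈ B, ∀ y, y ∉ B → ‖g x - g y‖ ≤ L * ‖x - y‖ := by
    intro x hx y hy
    have hc : ContinuousOn (fun t : ℝ => ‖x + t • (y - x)‖) (Icc 0 1) := by
      apply Continuous.continuousOn; fun_prop
    have h1 : (1:ℝ) ∈ Icc (‖x + (0:ℝ) • (y - x)‖) (‖x + (1:ℝ) • (y - x)‖) := by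
      simp only [hB, mem_closedBall, dist_zero_right, not_le] at hx hy
      constructor <;> simp <;> linarith
    obtain ⟨t, ht, htz⟩ := intermediate_value_Icc (zero_le_one' ℝ) hc h1
    set z := x + t • (y - x) with hz
    have htz' : ‖z‖ = 1 := htz
    have hzB : z ∈ B := by simp [hB, htz']
    have hyo : g y = 0 := by simp [g, hy]
    have hzo : g z = 0 := hg_out z htz'.ge
    calc ‖g x - g y‖ = ‖g x - g z‖ := by rw [hyo, hzo]
      _ ≤ L * ‖x - z‖ := hlipB x hx z hzB
      _ ≤ L * ‖x - y‖ := by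
        gcongr
        have : x - z = t • (x - y) := by rw [hz, smul_sub, smul_sub]; abel
        rw [this, norm_smul, Real.norm_eq_abs, abs_of_nonneg ht.1]
        exact mul_le_of_le_one_left (norm_nonneg _) ht.2
  have hlip : LipschitzWith L g := by
    apply LipschitzWith.of_dist_le_mul
    intro x y
    rw [dist_eq_norm, dist_eq_norm]
    by_cases hx : x ∈ B <;> by_cases hy : y ∈ B
    · exact hlipB x hx y hy
    · exact hlip1 x hx y hy
    · rw [norm_sub_rev, norm_sub_rev x y]; exact hlip1 y hy x hx
    · simp [g, hx, hy]; positivity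
  -- volume identity for small t
  have hvol : ∀ t : ℝ, 0 ≤ t → t * L < 1 →
      ∫ x in ball (0:E) 1, (ContinuousLinearMap.id ℝ E + t • A x).det = 
        ∫ x in ball (0:E) 1, (1:ℝ) := by
    intro t ht htL
    let h : E → E := fun x => x + t • g x
    have happ : ApproximatesLinearOn h ((ContinuousLinearEquiv.refl ℝ E : E ≃L[ℝ] E) : E →L[ℝ] E)
        univ (t.toNNReal * L) := by
      intro x _ y _
      have : h x - h y - ((ContinuousLinearEquiv.refl ℝ E : E ≃L[ℝ] E) : E →L[ℝ] E) (x - y)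
          = t • (g x - g y) := by
        simp [h, smul_sub]; abel
      rw [this, norm_smul, Real.norm_eq_abs, abs_of_nonneg ht, NNReal.coe_mul,
        Real.coe_toNNReal t ht, mul_assoc]
      gcongr
      simpa [dist_eq_norm] using hlip.dist_le_mul x y
    have hc : Subsingleton E ∨ t.toNNReal * L <
        ‖((ContinuousLinearEquiv.refl ℝ E).symm : E →L[ℝ] E)‖₊⁻¹ := by
      rcases subsingleton_or_nontrivial E with h | h
      · exact Or.inl h
      · right
        have : ‖((ContinuousLinearEquiv.refl ℝ E).symm : E →L[ℝ] E)‖₊ = 1 := by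
          have : ((ContinuousLinearEquiv.refl ℝ E).symm : E →L[ℝ] E)
            = ContinuousLinearMap.id ℝ E := rfl
          rw [this]; ext; simp
        rw [this, inv_one, ← NNReal.coe_lt_coe]
        simpa [Real.coe_toNNReal t ht] using htL
    have hinj : Function.Injective h := Set.injOn_univ.1 (happ.injOn hc)
    have hsurj : Function.Surjective h := happ.surjective hc
    have hout : ∀ x, 1 ≤ ‖x‖ → h x = x := fun x hx => by simp [h, hg_out x hx]
    have himg : h '' ball 0 1 = ball 0 1 := by
      ext y
      simp only [mem_image, mem_ball, dist_zero_right]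
      constructor
      · rintro ⟨x, hx, rfl⟩
        by_contra hcon
        push Not at hcon
        have := hinj (hout _ hcon)
        rw [this] at hcon; linarith
      · intro hy
        obtain ⟨x, hx⟩ := hsurj y
        refine ⟨x, ?_, hx⟩
        by_contra hcon
        push Not at hcon
        rw [hout x hcon] at hx
        rw [hx] at hcon; linarith
    have hder : ∀ x ∈ ball (0:E) 1, HasFDerivWithinAt h
        (ContinuousLinearMap.id ℝ E + t • A x) (ball 0 1) x := by
      intro x hx
      have h1 := (hderiv x (ball_subset_closedBall hx))
      have h2 : HasFDerivAt (fun x => x + t • (r x - x)) 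
        (ContinuousLinearMap.id ℝ E + t • A x) x := (hasFDerivAt_id x).add (h1.const_smul t)
      refine h2.hasFDerivWithinAt.congr (fun y hy => ?_) ?_
      · simp only [h, g]; rw [if_pos (ball_subset_closedBall hy)]
      · simp only [h, g]; rw [if_pos (ball_subset_closedBall hx)]
    have key := integral_image_eq_integral_abs_det_fderiv_smul (volume : Measure E)
      measurableSet_ball hder hinj.injOn (fun _ => (1:ℝ))
    rw [himg] at key
    rw [key]
    refine setIntegral_congr_fun measurableSet_ball fun x hx => ?_
    have : 0 < (ContinuousLinearMap.id ℝ E + t • A x).det := by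
      apply det_pos_of_small
      rw [norm_smul, Real.norm_eq_abs, abs_of_nonneg ht]
      refine lt_of_le_of_lt ?_ htL
      gcongr
      exact hL x (ball_subset_closedBall hx)
    simp [abs_of_pos this]
  -- nodes
  set n := Module.finrank ℝ E with hn
  let τ : ℕ → ℝ := fun k => 1 / (L * (k + 2))
  have hτinj : Function.Injective τ := by
    intro a b hab
    simp only [τ, one_div] at hab
    have := mul_left_cancel₀ hLpos.ne' (inv_injective hab)
    have h2 : (a:ℝ) = b := by linarith
    exact_mod_cast h2
  have hτ0 : ∀ k, 0 ≤ τ k := fun k => by positivity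
  have hτ1 : ∀ k, τ k * L < 1 := fun k => by
    have : τ k * L = 1 / (k + 2) := by simp only [τ]; field_simp
    rw [this, div_lt_one (by positivity)]
    have : (0:ℝ) ≤ k := Nat.cast_nonneg k
    linarith
  have hint : ∀ t : ℝ, IntegrableOn (fun x => (ContinuousLinearMap.id ℝ E + t • A x).det)
      (ball (0:E) 1) := by
    intro t
    refine IntegrableOn.mono_set ?_ ball_subset_closedBall
    refine ContinuousOn.integrableOn_compact hBc ?_
    exact ContinuousLinearMap.continuous_det.comp_continuousOn
      (continuousOn_const.add (hAcont.const_smul t))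
  have hone : ∑ k ∈ Finset.range (n + 1), (Lagrange.basis (Finset.range (n+1)) τ k).eval 1 = 1 := by
    rw [← Polynomial.eval_finsetSum, Lagrange.sum_basis hτinj.injOn (by simp)]; simp
  have h1 : ∫ x in ball (0:E) 1, (ContinuousLinearMap.id ℝ E + (1:ℝ) • A x).det
      = ∫ x in ball (0:E) 1, (1:ℝ) := by
    calc _ = ∫ x in ball (0:E) 1, ∑ k ∈ Finset.range (n + 1),
        (Lagrange.basis (Finset.range (n+1)) τ k).eval 1 *
          (ContinuousLinearMap.id ℝ E + τ k • A x).det := by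
          congr 1; ext x; exact det_interp n rfl τ hτinj (A x) 1
      _ = ∑ k ∈ Finset.range (n + 1), (Lagrange.basis (Finset.range (n+1)) τ k).eval 1 *
          ∫ x in ball (0:E) 1, (1:ℝ) := by
          rw [integral_finsetSum]
          · refine Finset.sum_congr rfl fun k _ => ?_
            rw [integral_const_mul, hvol (τ k) (hτ0 k) (hτ1 k)]
          · intro k _
            exact (hint (τ k)).const_mul _
      _ = _ := by rw [← Finset.sum_mul, hone, one_mul]
  have h0 : ∀ x ∈ ball (0:E) 1, (ContinuousLinearMap.id ℝ E + (1:ℝ) • A x).det = 0 := by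
    intro x hx
    have hx' : x ∈ B := ball_subset_closedBall hx
    have heq : ContinuousLinearMap.id ℝ E + (1:ℝ) • A x = fderiv ℝ r x := by
      simp [A]
    rw [heq]
    have hd : HasFDerivAt r (fderiv ℝ r x) x :=
      ((hr.differentiableOn (by simp)).differentiableAt (hU.mem_nhds (hBU hx'))).hasFDerivAt
    have hconst : (fun y => ‖r y‖ ^ 2) =ᶠ[𝓝 x] fun _ => (1:ℝ) := by
      filter_upwards [isOpen_ball.mem_nhds hx] with y hy
      rw [hr1 y (ball_subset_closedBall hy)]; norm_num
    have hz := (hd.norm_sq).congr_of_eventuallyEq hconst.symm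
    have hz' := hz.unique (hasFDerivAt_const (1:ℝ) x)
    by_contra hdet
    have hu : IsUnit ((fderiv ℝ r x : E →L[ℝ] E) : E →ₗ[ℝ] E) := by
      rw [LinearMap.isUnit_iff_isUnit_det]
      exact isUnit_iff_ne_zero.2 hdet
    rw [Module.End.isUnit_iff] at hu
    obtain ⟨v, hv⟩ := hu.2 (r x)
    have := congrArg (fun T => T v) hz'
    have hv' : fderiv ℝ r x v = r x := hv
    simp [hv', hr1 x hx'] at this
  rw [setIntegral_congr_fun measurableSet_ball h0] at h1
  simp at h1
  have : 0 < volume.real (ball (0:E) 1) := by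
    rw [Measure.real, ENNReal.toReal_pos_iff]
    exact ⟨measure_ball_pos _ _ one_pos, measure_ball_lt_top⟩
  linarith [h1]

/-- Brouwer for smooth maps into the unit ball. -/
lemma brouwer_unit (F : E → E) (hF : ContDiff ℝ 1 F) (hb : ∀ x, ‖F x‖ ≤ 1) :
    ∃ x, F x = x := by
  by_contra hno
  push Not at hno
  let w : E → E := fun x => x - F x
  have hw : ∀ x, w x ≠ 0 := fun x h => hno x (sub_eq_zero.1 h).symm
  have hws : ContDiff ℝ 1 w := contDiff_id.sub hF
  let disc : E → ℝ := fun x => (inner ℝ x (w x))^2 + ‖w x‖^2 * (1 - ‖x‖^2)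
  have hdisc : ContDiff ℝ 1 disc := by
    refine ((contDiff_id.inner ℝ hws).pow 2).add ((hws.norm_sq ℝ).mul
      (contDiff_const.sub (contDiff_id.norm_sq ℝ)))
  let U : Set E := {x | 0 < disc x}
  have hU : IsOpen U := isOpen_lt continuous_const hdisc.continuous
  have hpos : ∀ x, ‖x‖ = 1 → 0 < inner ℝ x (w x) := by
    intro x hx
    have h1 : inner ℝ x (w x) = 1 - inner ℝ x (F x) := by
      simp [w, inner_sub_right, hx]
    have h2 : inner ℝ x (F x) ≤ 1 := by
      refine (real_inner_le_norm _ _).trans ?_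
      rw [hx, one_mul]; exact hb x
    rcases h2.lt_or_eq with h | h
    · linarith
    · exfalso
      have : ‖x - F x‖^2 ≤ 0 := by
        rw [norm_sub_sq_real, h, hx]
        nlinarith [hb x, norm_nonneg (F x)]
      have h3 : ‖w x‖ = 0 := by
        have := sq_nonneg ‖x - F x‖
        exact pow_eq_zero_iff (two_ne_zero) |>.1 (le_antisymm ‹_› this)
      exact hw x (norm_eq_zero.1 h3)
  have hwpos : ∀ x, 0 < ‖w x‖^2 := fun x => by have := norm_pos_iff.2 (hw x); positivity
  have hBU : closedBall (0:E) 1 ⊆ U := by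
    intro x hx
    have hx : ‖x‖ ≤ 1 := by simpa using hx
    rcases hx.lt_or_eq with h | h
    · have : 0 < 1 - ‖x‖^2 := by nlinarith [norm_nonneg x]
      have := mul_pos (hwpos x) this
      simp only [U, disc, mem_ofPred_eq]; positivity
    · have := hpos x h
      simp only [U, disc, mem_ofPred_eq, h]; simp; positivity
  let τ : E → ℝ := fun x => (- inner ℝ x (w x) + Real.sqrt (disc x)) / ‖w x‖^2
  let r : E → E := fun x => x + τ x • w x
  refine no_retraction r U hU hBU ?_ ?_ ?_
  · refine contDiffOn_id.add (ContDiffOn.smul ?_ hws.contDiffOn)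
    refine ContDiffOn.div ?_ (hws.norm_sq ℝ).contDiffOn (fun x _ => (hwpos x).ne')
    exact (contDiff_id.inner ℝ hws).neg.contDiffOn.add
      (hdisc.contDiffOn.sqrt (fun x hx => (ne_of_gt hx)))
  · intro x hx
    have hd : 0 < disc x := hBU hx
    have h2 : ‖r x‖^2 = 1 := by
      have hs : Real.sqrt (disc x) ^ 2 = disc x := Real.sq_sqrt hd.le
      simp only [r]
      rw [norm_add_sq_real, inner_smul_right, norm_smul, mul_pow, Real.norm_eq_abs, sq_abs]
      have ht : τ x * ‖w x‖^2 = - inner ℝ x (w x) + Real.sqrt (disc x) := by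
        simp only [τ]; exact div_mul_cancel₀ _ (hwpos x).ne'
      have h3 : (τ x * ‖w x‖^2 + inner ℝ x (w x))^2 = disc x := by
        rw [ht]; ring_nf; ring_nf at hs; rw [hs]
      have h4 : ‖w x‖^2 * (‖x‖^2 + 2 * (τ x * inner ℝ x (w x)) + τ x ^2 * ‖w x‖^2 - 1) = 0 := by
        simp only [disc] at h3
        linear_combination h3
      rcases mul_eq_zero.1 h4 with h | h
      · exact absurd h (hwpos x).ne'
      · linarith
    have := norm_nonneg (r x)
    nlinarith
  · intro x hx
    have hx1 : ‖x‖ = 1 := by simpa using hx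
    have : τ x = 0 := by
      simp only [τ, disc, hx1]
      simp [Real.sqrt_sq (hpos x hx1).le]
    simp [r, this]

lemma brouwer_bounded (F : E → E) (hF : ContDiff ℝ 1 F) (R : ℝ) (hb : ∀ x, ‖F x‖ ≤ R) :
    ∃ x, F x = x := by
  have hR : 0 ≤ R := (norm_nonneg _).trans (hb 0)
  set R' := R + 1
  have hR' : 0 < R' := by positivity
  obtain ⟨x, hx⟩ := brouwer_unit (fun x => R'⁻¹ • F (R' • x))
    (by
      refine ContDiff.const_smul _ (hF.comp ?_)
      exact contDiff_id.const_smul R')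
    (by
      intro x
      rw [norm_smul, Real.norm_eq_abs, abs_of_pos (inv_pos.2 hR')]
      rw [inv_mul_le_iff₀ hR']
      linarith [hb (R' • x)])
  refine ⟨R' • x, ?_⟩
  conv_rhs => rw [← hx]
  rw [smul_smul, mul_inv_cancel₀ hR'.ne', one_smul]

end Brouwer
end SMPE

namespace SMPE

section FiniteGame
variable {m K : ℕ}

lemma sum_prod_eq_one (p : Fin m → Fin K → ℝ) (hp : ∀ i, ∑ a, p i a = 1) :
    ∑ b : Fin m → Fin K, ∏ j, p j (b j) = 1 := by
  rw [← Fintype.prod_sum]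
  simp [hp]

lemma sum_update_fubini (p : Fin m → Fin K → ℝ) (hp : ∀ i, ∑ a, p i a = 1) (i : Fin m)
    (U : (Fin m → Fin K) → ℝ) :
    ∑ a, p i a * ∑ b : Fin m → Fin K, (∏ j, p j (b j)) * U (Function.update b i a)
      = ∑ b : Fin m → Fin K, (∏ j, p j (b j)) * U b := by
  classical
  have hprod : ∀ (b : Fin m → Fin K), ∏ j, p j (b j) =
      p i (b i) * ∏ j ∈ Finset.univ.erase i, p j (b j) := fun b =>
    (Finset.mul_prod_erase Finset.univ (fun j => p j (b j)) (Finset.mem_univ i)).symm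
  have herase : ∀ (b : Fin m → Fin K) a, ∏ j ∈ Finset.univ.erase i, p j (Function.update b i a j)
      = ∏ j ∈ Finset.univ.erase i, p j (b j) := fun b a => by
    refine Finset.prod_congr rfl fun j hj => ?_
    rw [Function.update_of_ne (Finset.ne_of_mem_erase hj)]
  calc ∑ a, p i a * ∑ b : Fin m → Fin K, (∏ j, p j (b j)) * U (Function.update b i a)
      = ∑ x : Fin K × (Fin m → Fin K), p i x.1 * ((∏ j, p j (x.2 j))
          * U (Function.update x.2 i x.1)) := by
        rw [Fintype.sum_prod_type]
        simp_rw [Finset.mul_sum]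
    _ = ∑ x : Fin K × (Fin m → Fin K), p i x.1 * ((∏ j, p j (x.2 j)) * U x.2) := by
        refine Finset.sum_nbij' (fun x => (x.2 i, Function.update x.2 i x.1))
          (fun x => (x.2 i, Function.update x.2 i x.1)) (by simp) (by simp) (by simp) (by simp) ?_
        intro x _
        simp only
        rw [hprod x.2, hprod (Function.update x.2 i x.1), herase, Function.update_self]
        ring
    _ = _ := by
        rw [Fintype.sum_prod_type]
        simp_rw [← Finset.mul_sum]
        rw [← Finset.sum_mul, hp, one_mul]

/-- one-period payoff with continuation values -/
noncomputable def finU {T : Type*} [Fintype T] (β : Fin m → ℝ) (ub : Fin m → T → (Fin m → Fin K) → ℝ)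
    (κ : T → (Fin m → Fin K) → T → ℝ) (v : Fin m → T → ℝ) (i : Fin m) (c : T)
    (b : Fin m → Fin K) : ℝ :=
  (1 - β i) * ub i c b + β i * ∑ c', κ c b c' * v i c'

/-- logit choice probabilities -/
noncomputable def logit (τ : ℝ) (F : Finset (Fin K)) (z : Fin K → ℝ) (a : Fin K) : ℝ :=
  open Classical in if a ∈ F then Real.exp (z a / τ) / ∑ a' ∈ F, Real.exp (z a' / τ) else 0

lemma logit_nonneg (τ : ℝ) (F : Finset (Fin K)) (z : Fin K → ℝ) (a : Fin K) :
    0 ≤ logit τ F z a := by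
  unfold logit; split_ifs <;> positivity

lemma logit_denom_pos (τ : ℝ) (F : Finset (Fin K)) (hF : F.Nonempty) (z : Fin K → ℝ) :
    0 < ∑ a' ∈ F, Real.exp (z a' / τ) := 
  Finset.sum_pos (fun _ _ => Real.exp_pos _) hF

lemma logit_sum (τ : ℝ) (F : Finset (Fin K)) (hF : F.Nonempty) (z : Fin K → ℝ) :
    ∑ a, logit τ F z a = 1 := by
  unfold logit
  rw [Finset.sum_ite_mem, Finset.univ_inter, ← Finset.sum_div,
    div_self (logit_denom_pos τ F hF z).ne']

lemma logit_near_opt (τ : ℝ) (hτ : 0 < τ) (F : Finset (Fin K)) (hF : F.Nonempty) (z : Fin K → ℝ)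
    (a₀ : Fin K) (ha₀ : a₀ ∈ F) : z a₀ ≤ ∑ a, logit τ F z a * z a + K * τ := by
  have h : ∀ a, logit τ F z a * (z a₀ - z a) ≤ τ := by
    intro a
    rcases le_or_gt (z a₀ - z a) 0 with h | h
    · have := mul_nonpos_of_nonneg_of_nonpos (logit_nonneg τ F z a) h
      linarith
    · by_cases ha : a ∈ F
      · have h1 : logit τ F z a ≤ Real.exp (z a / τ) / Real.exp (z a₀ / τ) := by
          unfold logit
          rw [if_pos ha]
          gcongr
          exact Finset.single_le_sum (f := fun a => Real.exp (z a / τ))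
            (fun _ _ => (Real.exp_pos _).le) ha₀
        have h2 : Real.exp (z a / τ) / Real.exp (z a₀ / τ) = (Real.exp ((z a₀ - z a) / τ))⁻¹ := by
          rw [← Real.exp_sub, ← Real.exp_neg]; congr 1; ring
        have h3 : (z a₀ - z a) / τ ≤ Real.exp ((z a₀ - z a) / τ) := by
          linarith [Real.add_one_le_exp ((z a₀ - z a) / τ)]
        calc logit τ F z a * (z a₀ - z a) ≤ (Real.exp ((z a₀ - z a) / τ))⁻¹ * (z a₀ - z a) := by
              rw [← h2]; gcongr
          _ ≤ τ := by
              rw [inv_mul_le_iff₀ (Real.exp_pos _)]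
              rwa [div_le_iff₀ hτ] at h3
      · simp [logit, ha, hτ.le]
  have hs := Finset.sum_le_sum (s := Finset.univ) (fun a _ => h a)
  simp_rw [mul_sub] at hs
  rw [Finset.sum_sub_distrib, ← Finset.sum_mul, logit_sum τ F hF z] at hs
  simp at hs
  linarith

lemma finU_bound {T : Type*} [Fintype T] (β : Fin m → ℝ) (hβ : ∀ i, β i ∈ Set.Ico (0 : ℝ) 1)
    (ub : Fin m → T → (Fin m → Fin K) → ℝ) (C : ℝ) (hub : ∀ i c b, |ub i c b| ≤ C)
    (κ : T → (Fin m → Fin K) → T → ℝ) (hκ0 : ∀ c b c', 0 ≤ κ c b c')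
    (hκ1 : ∀ c b, ∑ c', κ c b c' = 1) (v : Fin m → T → ℝ) (i : Fin m) (M : ℝ)
    (hv : ∀ c, |v i c| ≤ M) (c : T)
    (b : Fin m → Fin K) : |finU β ub κ v i c b| ≤ (1 - β i) * C + β i * M := by
  unfold finU
  have h0 := (hβ i).1
  have h1 := (hβ i).2
  refine (abs_add_le _ _).trans ?_
  rw [abs_mul, abs_mul, abs_of_nonneg h0, abs_of_nonneg (by linarith : 0 ≤ 1 - β i)]
  have : 0 ≤ 1 - β i := by linarith
  gcongr
  · exact hub i c b
  · calc |∑ c', κ c b c' * v i c'| ≤ ∑ c', |κ c b c' * v i c'| := Finset.abs_sum_le_sum_abs _ _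
      _ ≤ ∑ c', κ c b c' * M := by
          refine Finset.sum_le_sum fun c' _ => ?_
          rw [abs_mul, abs_of_nonneg (hκ0 c b c')]
          exact mul_le_mul_of_nonneg_left (hv c') (hκ0 c b c')
      _ = M := by rw [← Finset.sum_mul, hκ1, one_mul]

lemma abs_mix_le (p : Fin m → Fin K → ℝ) (hp0 : ∀ i a, 0 ≤ p i a) (hp : ∀ i, ∑ a, p i a = 1) 
    (U : (Fin m → Fin K) → ℝ) (M : ℝ) (hU : ∀ b, |U b| ≤ M) :
    |∑ b : Fin m → Fin K, (∏ j, p j (b j)) * U b| ≤ M := by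
  have hn : ∀ b : Fin m → Fin K, 0 ≤ ∏ j, p j (b j) := 
    fun b => Finset.prod_nonneg fun j _ => hp0 _ _
  calc _ ≤ ∑ b : Fin m → Fin K, |(∏ j, p j (b j)) * U b| := Finset.abs_sum_le_sum_abs _ _
      _ ≤ ∑ b : Fin m → Fin K, (∏ j, p j (b j)) * M := by
          refine Finset.sum_le_sum fun b _ => ?_
          rw [abs_mul, abs_of_nonneg (hn b)]
          exact mul_le_mul_of_nonneg_left (hU b) (hn b)
      _ = M := by rw [← Finset.sum_mul, sum_prod_eq_one p hp, one_mul]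

/-- smooth truncation -/
lemma exists_trunc (C : ℝ) : ∃ θ : ℝ → ℝ, ContDiff ℝ 1 θ ∧ (∀ y, |θ y| ≤ |y|) ∧
    (∀ y, |y| ≤ C → θ y = y) ∧ ∃ M, ∀ y, |θ y| ≤ M := by
  let f : ContDiffBump (0:ℝ) := ⟨|C| + 1, |C| + 2, by positivity, by linarith⟩
  refine ⟨fun y => f y * y, f.contDiff.mul contDiff_id, ?_, ?_, |C| + 2, ?_⟩
  · intro y
    rw [abs_mul, abs_of_nonneg f.nonneg]
    exact mul_le_of_le_one_left (abs_nonneg _) f.le_one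
  · intro y hy
    have : f y = 1 := f.one_of_mem_closedBall (by
      simp only [Metric.mem_closedBall, dist_zero_right, Real.norm_eq_abs, f]
      linarith [le_abs_self C])
    simp [this]
  · intro y
    rw [abs_mul, abs_of_nonneg f.nonneg]
    rcases le_or_gt (|C| + 2) |y| with h | h
    · have : f y = 0 := f.zero_of_le_dist (by
        simpa [f] using h)
      rw [this]; simp; positivity
    · calc f y * |y| ≤ 1 * |y| := by gcongr; exact f.le_one
        _ ≤ _ := by linarith

theorem finite_game {T : Type*} [Fintype T] (β : Fin m → ℝ) (hβ : ∀ i, β i ∈ Set.Ico (0 : ℝ) 1)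
    (ub : Fin m → T → (Fin m → Fin K) → ℝ) (C : ℝ) (hub : ∀ i c b, |ub i c b| ≤ C)
    (κ : T → (Fin m → Fin K) → T → ℝ) (hκ0 : ∀ c b c', 0 ≤ κ c b c')
    (hκ1 : ∀ c b, ∑ c', κ c b c' = 1)
    (feas : T → Fin m → Finset (Fin K)) (hfeas : ∀ c i, (feas c i).Nonempty)
    (ε : ℝ) (hε : 0 < ε) :
    ∃ (p : T → Fin m → Fin K → ℝ) (v : Fin m → T → ℝ),
      (∀ c i a, 0 ≤ p c i a) ∧ (∀ c i, ∑ a, p c i a = 1) ∧ (∀ c i a, a ∉ feas c i → p c i a = 0) ∧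
      (∀ i c, |v i c| ≤ C) ∧
      (∀ i c, v i c = ∑ b : Fin m → Fin K, (∏ j, p c j (b j)) * finU β ub κ v i c b) ∧
      (∀ i c, ∀ a ∈ feas c i, ∑ b : Fin m → Fin K, (∏ j, p c j (b j)) *
        finU β ub κ v i c (Function.update b i a) ≤ v i c + ε) := by
  classical
  obtain ⟨θ, hθs, hθle, hθid, M, hθM⟩ := exists_trunc C
  set τ := ε / (K + 1) with hτ
  have hτ0 : 0 < τ := by positivity
  let ι := (T × Fin m × Fin K) ⊕ (T × Fin m)
  let V := EuclideanSpace ℝ ι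
  let P : V → T → Fin m → Fin K → ℝ := fun x c i => 
    logit τ (feas c i) (fun a => x (Sum.inl (c, i, a)))
  let Y : V → Fin m → T → ℝ := fun x i c => θ (x (Sum.inr (c, i)))
  let Fz : V → T → Fin m → Fin K → ℝ := fun x c i a =>
    ∑ b : Fin m → Fin K, (∏ j, P x c j (b j)) * finU β ub κ (Y x) i c (Function.update b i a)
  let Fy : V → T → Fin m → ℝ := fun x c i =>
    ∑ b : Fin m → Fin K, (∏ j, P x c j (b j)) * finU β ub κ (Y x) i c b
  let F : V → V := fun x => WithLp.toLp 2
    (Sum.elim (fun t : T × Fin m × Fin K => Fz x t.1 t.2.1 t.2.2) (fun t : T × Fin m => Fy x t.1 t.2))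
  have hP0 : ∀ x c i a, 0 ≤ P x c i a := fun x c i a => logit_nonneg _ _ _ _
  have hP1 : ∀ x c i, ∑ a, P x c i a = 1 := fun x c i => logit_sum _ _ (hfeas c i) _
  have hcoord : ∀ k : ι, ContDiff ℝ 1 (fun x : V => (x : EuclideanSpace ℝ ι) k) :=
    fun k => contDiff_euclidean.1 (contDiff_id (E := EuclideanSpace ℝ ι)) k
  have hPs : ∀ c i a, ContDiff ℝ 1 (fun x => P x c i a) := by
    intro c i a
    simp only [P, logit]
    split_ifs with ha
    · refine ContDiff.div ?_ ?_ ?_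
      · exact ((hcoord _).div_const _).exp
      · exact ContDiff.sum fun a' _ => ((hcoord _).div_const _).exp
      · intro x
        exact (logit_denom_pos τ _ (hfeas c i) fun a => x (Sum.inl (c, i, a))).ne'
    · exact contDiff_const
  have hYs : ∀ i c, ContDiff ℝ 1 (fun x => Y x i c) := fun i c => hθs.comp (hcoord _)
  have hUs : ∀ i c b, ContDiff ℝ 1 (fun x => finU β ub κ (Y x) i c b) := by
    intro i c b
    unfold finU
    refine contDiff_const.add (contDiff_const.mul (ContDiff.sum fun c' _ => ?_))
    exact contDiff_const.mul (hYs _ _)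
  have hFs : ContDiff ℝ 1 F := by
    rw [contDiff_euclidean]
    rintro (⟨c, i, a⟩ | ⟨c, i⟩)
    · simp only [F, Sum.elim_inl, Fz]
      refine ContDiff.sum fun b _ => (ContDiff.mul ?_ (hUs _ _ _))
      exact contDiff_prod fun j _ => hPs _ _ _
    · simp only [F, Sum.elim_inr, Fy]
      refine ContDiff.sum fun b _ => (ContDiff.mul ?_ (hUs _ _ _))
      exact contDiff_prod fun j _ => hPs _ _ _
  have hUb : ∀ x i c b, |finU β ub κ (Y x) i c b| ≤ |C| + |M| := by
    intro x i c b
    refine (finU_bound β hβ ub C hub κ hκ0 hκ1 (Y x) i M (fun c => hθM _) c b).trans ?_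
    have h0 := (hβ i).1
    have h1 := (hβ i).2
    nlinarith [le_abs_self C, le_abs_self M, abs_nonneg C, abs_nonneg M]
  have hFb : ∀ x, ‖F x‖ ≤ Real.sqrt (∑ _k : ι, (|C| + |M|)^2) := by
    intro x
    rw [EuclideanSpace.norm_eq]
    apply Real.sqrt_le_sqrt
    refine Finset.sum_le_sum fun k _ => ?_
    rw [Real.norm_eq_abs]
    gcongr
    rcases k with ⟨c, i, a⟩ | ⟨c, i⟩
    · exact abs_mix_le _ (hP0 x c) (hP1 x c) _ _ (fun b => hUb x i c _)
    · exact abs_mix_le _ (hP0 x c) (hP1 x c) _ _ (fun b => hUb x i c _)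
  obtain ⟨x, hx⟩ := brouwer_bounded F hFs _ hFb
  have hz : ∀ c i a, x (Sum.inl (c, i, a)) = Fz x c i a := fun c i a => by
    conv_lhs => rw [← hx]
    rfl
  have hy : ∀ c i, x (Sum.inr (c, i)) = Fy x c i := fun c i => by
    conv_lhs => rw [← hx]
    rfl
  have hyC : ∀ i c, |x (Sum.inr (c, i))| ≤ C := by
    intro i c0
    have : Nonempty T := ⟨c0⟩
    obtain ⟨c, hc⟩ := Finite.exists_max (fun c => |x (Sum.inr (c, i))|)
    refine (hc c0).trans ?_
    have h1 : |Fy x c i| ≤ (1 - β i) * C + β i * |x (Sum.inr (c, i))| := 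
      abs_mix_le _ (hP0 x c) (hP1 x c) _ _ (fun b =>
        finU_bound β hβ ub C hub κ hκ0 hκ1 (Y x) i _ (fun c' => (hθle _).trans (hc c')) c b)
    rw [← hy] at h1
    have := (hβ i).2
    nlinarith
  have hYx : Y x = fun i c => x (Sum.inr (c, i)) := by
    funext i c
    exact hθid _ (hyC i c)
  refine ⟨P x, fun i c => x (Sum.inr (c, i)), hP0 x, hP1 x, ?_, hyC, ?_, ?_⟩
  · intro c i a ha
    simp [P, logit, ha]
  · intro i c
    beta_reduce
    rw [hy, ← hYx]
  · intro i c a ha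
    have h1 := logit_near_opt τ hτ0 (feas c i) (hfeas c i) (fun a => x (Sum.inl (c, i, a))) a ha
    have h2 : ∑ a, P x c i a * x (Sum.inl (c, i, a)) = x (Sum.inr (c, i)) := by
      rw [hy]
      simp_rw [hz]
      exact sum_update_fubini (P x c) (hP1 x c) i _
    have h3 : (K:ℝ) * τ ≤ ε := by
      rw [hτ, mul_div_assoc', div_le_iff₀ (by positivity)]
      nlinarith
    rw [← hYx]
    simp only [P] at h2
    rw [h2, hz] at h1
    simp only [Fz] at h1
    have h4 : Y x i c = x (Sum.inr (c, i)) := hθid _ (hyC i c)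
    linarith
end FiniteGame
end SMPE

namespace SMPE

section Purify
variable {S : Type*} {G mS : MeasurableSpace S} {μ : Measure S}

lemma exists_hull [IsFiniteMeasure μ] (hG : G ≤ mS) (f : S → ℝ) (hf : Integrable f μ)
    (hf0 : ∀ x, 0 ≤ f x) :
    ∃ H : Set S, MeasurableSet[G] H ∧ (∀ᵐ x ∂μ, f x ≠ 0 → x ∈ H) ∧
      ∀ C : Set S, MeasurableSet[G] C → C ⊆ H → (∀ᵐ x ∂μ, x ∈ C → f x = 0) → μ C = 0 := by
  have hsm : StronglyMeasurable[G] (μ[f|G]) := stronglyMeasurable_condExp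
  have hH : MeasurableSet[G] {x | 0 < (μ[f|G]) x} :=
    @measurableSet_lt _ _ _ _ _ G _ _ _ _ _ (@measurable_const _ _ _ G _) hsm.measurable
  refine ⟨{x | 0 < (μ[f|G]) x}, hH, ?_, ?_⟩
  · have h1 : ∫ x in {x | 0 < (μ[f|G]) x}ᶜ, f x ∂μ ≤ 0 := by
      rw [← setIntegral_condExp hG hf hH.compl]
      apply setIntegral_nonpos (hG _ hH.compl)
      intro x hx
      simpa using hx
    have h2 : ∫ x in {x | 0 < (μ[f|G]) x}ᶜ, f x ∂μ = 0 :=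
      le_antisymm h1 (integral_nonneg hf0)
    rw [setIntegral_eq_zero_iff_of_nonneg_ae (Eventually.of_forall hf0) hf.integrableOn] at h2
    have h3 := (ae_restrict_iff' (hG _ hH.compl)).1 h2
    filter_upwards [h3] with x hx hne
    by_contra hc
    exact hne (hx hc)
  · intro C hC hCH h0
    have h1 : ∫ x in C, (μ[f|G]) x ∂μ = 0 := by
      rw [setIntegral_condExp hG hf hC]
      apply setIntegral_eq_zero_of_ae_eq_zero
      exact h0
    have hnn : 0 ≤ᵐ[μ.restrict C] (μ[f|G]) := by
      rw [EventuallyLE, ae_restrict_iff' (hG _ hC)]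
      exact Eventually.of_forall fun x hx => le_of_lt (hCH hx)
    rw [setIntegral_eq_zero_iff_of_nonneg_ae hnn integrable_condExp.integrableOn] at h1
    have h3 := (ae_restrict_iff' (hG _ hC)).1 h1
    rw [← compl_compl C, ← mem_ae_iff]
    filter_upwards [h3] with x hx hxC
    have := hx hxC
    have h4 := hCH hxC
    simp only [Set.mem_ofPred_eq] at h4
    simp at this
    linarith

def NoAtom (G : MeasurableSpace S) {mS : MeasurableSpace S} (μ : Measure S) : Prop :=
  ∀ D : Set S, MeasurableSet D → ¬ (0 < μ D ∧ ∀ D₀ ⊆ D, MeasurableSet D₀ →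
    ∃ D₁ : Set S, MeasurableSet[G] D₁ ∧ μ (symmDiff D₀ (D₁ ∩ D)) = 0)

lemma exists_split [IsFiniteMeasure μ] (hG : G ≤ mS) (hna : NoAtom G μ)
    (D : Set S) (hD : MeasurableSet D) (hpos : 0 < μ D) :
    ∃ D' D'' : Set S, MeasurableSet D' ∧ MeasurableSet D'' ∧ D' ⊆ D ∧ D'' ⊆ D ∧ Disjoint D' D'' ∧
      0 < μ D' ∧ ∀ C, MeasurableSet[G] C → μ (C ∩ D'') = 0 → μ (C ∩ D') = 0 := by
  have h := hna D hD
  push Not at h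
  obtain ⟨D₀, hD₀s, hD₀, hne⟩ := h hpos
  obtain ⟨H0, hH0, hH0i, hH0ii⟩ := exists_hull (μ := μ) hG (D₀.indicator fun _ => (1:ℝ))
    ((integrable_const _).indicator hD₀) (fun x => Set.indicator_nonneg (fun _ _ => zero_le_one) x)
  obtain ⟨H1, hH1, hH1i, hH1ii⟩ := exists_hull (μ := μ) hG ((D \ D₀).indicator fun _ => (1:ℝ))
    ((integrable_const _).indicator (hD.diff hD₀))
    (fun x => Set.indicator_nonneg (fun _ _ => zero_le_one) x)
  have hB : MeasurableSet[G] (H0 ∩ H1) := hH0.inter hH1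
  have key : ∀ C, MeasurableSet[G] C → C ⊆ H1 → μ (C ∩ (D \ D₀)) = 0 → μ C = 0 := by
    intro C hC hC1 h0
    apply hH1ii C hC hC1
    rw [measure_eq_zero_iff_ae_notMem] at h0
    filter_upwards [h0] with x hx hxC
    simp only [Set.indicator_apply_eq_zero]
    intro hxD
    exact absurd ⟨hxC, hxD⟩ hx
  have key0 : ∀ C, MeasurableSet[G] C → C ⊆ H0 → μ (C ∩ D₀) = 0 → μ C = 0 := by
    intro C hC hC1 h0
    apply hH0ii C hC hC1
    rw [measure_eq_zero_iff_ae_notMem] at h0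
    filter_upwards [h0] with x hx hxC
    simp only [Set.indicator_apply_eq_zero]
    intro hxD
    exact absurd ⟨hxC, hxD⟩ hx
  refine ⟨D₀ ∩ (H0 ∩ H1), (D \ D₀) ∩ (H0 ∩ H1), hD₀.inter (hG _ hB),
    (hD.diff hD₀).inter (hG _ hB), fun x hx => hD₀s hx.1, fun x hx => hx.1.1, ?_, ?_, ?_⟩
  · rw [Set.disjoint_left]
    intro x hx hx'
    exact hx'.1.2 hx.1
  · rw [pos_iff_ne_zero]
    intro h0
    have hB0 : μ (H0 ∩ H1) = 0 := key0 _ hB Set.inter_subset_left (by rwa [Set.inter_comm])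
    apply hne H0 hH0
    rw [measure_eq_zero_iff_ae_notMem] at hB0 ⊢
    filter_upwards [hB0, hH0i, hH1i] with x h1 h2 h3 hx
    rcases hx with ⟨ha, hb⟩ | ⟨ha, hb⟩
    · exact hb ⟨h2 (by simp [ha]), hD₀s ha⟩
    · refine h1 ⟨ha.1, h3 ?_⟩
      have : x ∈ D \ D₀ := ⟨ha.2, hb⟩
      simp [this]
  · intro C hC h0
    have : μ (C ∩ (H0 ∩ H1)) = 0 := by
      apply key _ (hC.inter hB) (fun x hx => hx.2.2)
      rw [show C ∩ (H0 ∩ H1) ∩ (D \ D₀) = C ∩ ((D \ D₀) ∩ (H0 ∩ H1)) by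
        ext; simp; tauto]
      exact h0
    refine measure_mono_null ?_ this
    rintro x ⟨hx1, hx2, hx3⟩
    exact ⟨hx1, hx3⟩

lemma condExp_pull [IsFiniteMeasure μ] (hG : G ≤ mS) (a f : S → ℝ) (ha : Measurable[G] a)
    (hb : ∀ x, |a x| ≤ 1) (hf : Integrable f μ) :
    μ[fun x => a x * f x|G] =ᵐ[μ] fun x => a x * (μ[f|G]) x := by
  have := condExp_mul_of_stronglyMeasurable_left (μ := μ) (m := G) (f := a) (g := f)
    ha.stronglyMeasurable
    (hf.bdd_mul (c := 1) (ha.mono hG le_rfl).aestronglyMeasurable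
      (Eventually.of_forall hb)) hf
  exact this

lemma exists_perturb [IsFiniteMeasure μ] (hG : G ≤ mS) (hna : NoAtom G μ) {ι : Type*}
    (g : ι → S → ℝ) (hg : ∀ l, Integrable (g l) μ) (s : Finset ι) :
    ∀ (D : Set S), MeasurableSet D → 0 < μ D →
    ∃ k : S → ℝ, Measurable k ∧ (∀ x, |k x| ≤ 1) ∧ (∀ x ∉ D, k x = 0) ∧ ¬ (k =ᵐ[μ] 0) ∧
      ∀ l ∈ s, μ[fun x => k x * g l x|G] =ᵐ[μ] 0 := by
  classical
  induction s using Finset.induction_on with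
  | empty =>
    intro D hD hpos
    refine ⟨D.indicator fun _ => 1, measurable_const.indicator hD, ?_, ?_, ?_, by simp⟩
    · intro x
      by_cases hx : x ∈ D <;> simp [hx]
    · intro x hx; simp [hx]
    · intro h
      apply hpos.ne'
      rw [measure_eq_zero_iff_ae_notMem]
      filter_upwards [h] with x hx hxD
      simp [hxD] at hx
  | insert l₀ s hl₀ ih =>
    intro D hD hpos
    obtain ⟨D', D'', hD', hD'', hs', hs'', hdj, hpos', hC⟩ := exists_split hG hna D hD hpos
    obtain ⟨k', hk'm, hk'b, hk'0, hk'n, hk'e⟩ := ih D' hD' hpos'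
    obtain ⟨B, hB, hBi, hBii⟩ := exists_hull (μ := μ) hG (fun x => |k' x|)
      (Integrable.of_bound hk'm.norm.aestronglyMeasurable 1
        (Eventually.of_forall fun x => by simpa using hk'b x))
      (fun x => abs_nonneg _)
    have hposB : 0 < μ (B ∩ D'') := by
      rw [pos_iff_ne_zero]
      intro h0
      have := hC B hB h0
      apply hk'n
      rw [measure_eq_zero_iff_ae_notMem] at this
      filter_upwards [this, hBi] with x hx hx2
      by_contra hne
      apply hx
      refine ⟨hx2 (by simpa using hne), ?_⟩
      by_contra hc
      exact hne (hk'0 x hc)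
    obtain ⟨k'', hk''m, hk''b, hk''0, hk''n, hk''e⟩ := ih (B ∩ D'') ((hG _ hB).inter hD'') hposB
    have hint' : ∀ l, Integrable (fun x => k' x * g l x) μ := fun l =>
      (hg l).bdd_mul (c := 1) hk'm.aestronglyMeasurable (Eventually.of_forall hk'b)
    have hint'' : ∀ l, Integrable (fun x => k'' x * g l x) μ := fun l =>
      (hg l).bdd_mul (c := 1) hk''m.aestronglyMeasurable (Eventually.of_forall hk''b)
    set α := μ[fun x => k' x * g l₀ x|G] with hα
    set γ := μ[fun x => k'' x * g l₀ x|G] with hγ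
    have hαm : Measurable[G] α := stronglyMeasurable_condExp.measurable
    have hγm : Measurable[G] γ := stronglyMeasurable_condExp.measurable
    have hΓ : MeasurableSet[G] {x | γ x = 0} := hγm (measurableSet_singleton 0)
    by_cases hcase : ({x | γ x = 0}.indicator (fun _ => (1:ℝ)) * k'') =ᵐ[μ] 0
    · -- combination
      let a : S → ℝ := fun x => γ x / (1 + |α x| + |γ x|)
      let b : S → ℝ := fun x => -α x / (1 + |α x| + |γ x|)
      have habs : ∀ {f : S → ℝ}, Measurable[G] f → Measurable[G] (fun x => |f x|) := by
        intro f hf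
        exact continuous_abs.measurable.comp hf
      have hden : Measurable[G] (fun x => 1 + |α x| + |γ x|) :=
        ((@measurable_const _ _ _ G (1:ℝ)).add (habs hαm)).add (habs hγm)
      have ham : Measurable[G] a := hγm.div hden
      have hbm : Measurable[G] b := hαm.neg.div hden
      have hden0 : ∀ x, 0 < 1 + |α x| + |γ x| := fun x => by positivity
      have hab : ∀ x, |a x| + |b x| ≤ 1 := by
        intro x
        simp only [a, b, abs_div, abs_neg, abs_of_pos (hden0 x)]
        rw [← add_div, div_le_one (hden0 x)]
        linarith
      have ha1 : ∀ x, |a x| ≤ 1 := fun x => by linarith [hab x, abs_nonneg (b x)]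
      have hb1 : ∀ x, |b x| ≤ 1 := fun x => by linarith [hab x, abs_nonneg (a x)]
      refine ⟨fun x => a x * k' x + b x * k'' x,
        ((ham.mono hG le_rfl).mul hk'm).add ((hbm.mono hG le_rfl).mul hk''m), ?_, ?_, ?_, ?_⟩
      · intro x
        calc |a x * k' x + b x * k'' x| ≤ |a x| * |k' x| + |b x| * |k'' x| := by
              rw [← abs_mul, ← abs_mul]; exact abs_add_le _ _
          _ ≤ |a x| * 1 + |b x| * 1 := by
              gcongr
              · exact hk'b x
              · exact hk''b x
          _ ≤ 1 := by linarith [hab x]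
      · intro x hx
        show a x * k' x + b x * k'' x = 0
        rw [hk'0 x (fun h => hx (hs' h)), hk''0 x (fun h => hx (hs'' h.2))]
        simp
      · intro h0
        apply hk''n
        have hnull : μ ({x | γ x = 0}ᶜ ∩ B) = 0 := by
          apply hBii _ (hΓ.compl.inter hB) Set.inter_subset_right
          filter_upwards [h0] with x hx hxG
          by_contra hne
          have hne' : k' x ≠ 0 := by simpa using hne
          have hxD' : x ∈ D' := by
            by_contra hc; exact hne' (hk'0 x hc)
          have hk2 : k'' x = 0 := hk''0 x (fun h => (Set.disjoint_left.1 hdj hxD' h.2))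
          simp only [hk2, mul_zero, add_zero, Pi.zero_apply, mul_eq_zero, hne', or_false, a,
            div_eq_zero_iff, (hden0 x).ne'] at hx
          exact hxG.1 hx
        rw [measure_eq_zero_iff_ae_notMem] at hnull
        filter_upwards [hnull, hcase] with x hx hx2
        by_contra hne
        apply hx
        refine ⟨fun hz => ?_, ?_⟩
        · simp only [Set.mem_ofPred_eq] at hz
          simp [hz] at hx2
          exact hne hx2
        · by_contra hc
          exact hne (hk''0 x (fun h => hc h.1))
      · intro l hl
        have e1 := condExp_pull hG a _ ham ha1 (hint' l)
        have e2 := condExp_pull hG b _ hbm hb1 (hint'' l)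
        have i1 : Integrable (fun x => a x * (k' x * g l x)) μ :=
          (hint' l).bdd_mul (c := 1) (ham.mono hG le_rfl).aestronglyMeasurable
            (Eventually.of_forall ha1)
        have i2 : Integrable (fun x => b x * (k'' x * g l x)) μ :=
          (hint'' l).bdd_mul (c := 1) (hbm.mono hG le_rfl).aestronglyMeasurable
            (Eventually.of_forall hb1)
        have e3 := condExp_add i1 i2 G
        have e4 : (fun x => (a x * k' x + b x * k'' x) * g l x) =
            (fun x => a x * (k' x * g l x)) + fun x => b x * (k'' x * g l x) := by
          ext x; simp; ring
        rw [e4]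
        rcases Finset.mem_insert.1 hl with rfl | hl
        · filter_upwards [e1, e2, e3] with x h1 h2 h3
          rw [h3, Pi.add_apply, h1, h2, ← hα, ← hγ]
          simp only [a, b, Pi.zero_apply]
          ring
        · filter_upwards [e1, e2, e3, hk'e l hl, hk''e l hl] with x h1 h2 h3 h4 h5
          rw [h3, Pi.add_apply, h1, h2, h4, h5]
          simp
    · have hgm : Measurable[G] ({x | γ x = 0}.indicator (fun _ => (1:ℝ))) :=
        (@measurable_const _ _ _ G (1:ℝ)).indicator hΓ
      have hgb : ∀ x, |{x | γ x = 0}.indicator (fun _ => (1:ℝ)) x| ≤ 1 := by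
        intro x
        by_cases hx : γ x = 0 <;> simp [hx]
      refine ⟨_, (hgm.mono hG le_rfl).mul hk''m, ?_, ?_, hcase, ?_⟩
      · intro x
        rw [Pi.mul_apply, abs_mul]
        exact mul_le_one₀ (hgb x) (abs_nonneg _) (hk''b x)
      · intro x hx
        rw [Pi.mul_apply, hk''0 x (fun h => hx (hs'' h.2)), mul_zero]
      · intro l hl
        have e1 := condExp_pull hG _ _ hgm hgb (hint'' l)
        have e4 : (fun x => ({x | γ x = 0}.indicator (fun _ => (1:ℝ)) * k'') x * g l x) =
            (fun x => {x | γ x = 0}.indicator (fun _ => (1:ℝ)) x * (k'' x * g l x)) := by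
          ext x; simp only [Pi.mul_apply]; ring
        rw [e4]
        rcases Finset.mem_insert.1 hl with rfl | hl
        · filter_upwards [e1] with x h1
          rw [h1, ← hγ]
          by_cases hx : γ x = 0 <;> simp [hx]
        · filter_upwards [e1, hk''e l hl] with x h1 h2
          rw [h1, h2]
          simp

end Purify
end SMPE

namespace SMPE

section Purify2
variable {S : Type*} {G mS : MeasurableSpace S} {μ : Measure S}

lemma memLp_of_bdd [IsFiniteMeasure μ] {f : S → ℝ} (hf : Measurable f) {c : ℝ}
    (hb : ∀ x, |f x| ≤ c) : MemLp f 2 μ :=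
  MemLp.of_bound hf.aestronglyMeasurable c (Eventually.of_forall hb)

lemma toDual_toLp_apply {h f : S → ℝ} (hh : MemLp h 2 μ) (hf : MemLp f 2 μ) :
    (InnerProductSpace.toDual ℝ (Lp ℝ 2 μ) (hh.toLp h)) (hf.toLp f) = ∫ x, h x * f x ∂μ := by
  rw [InnerProductSpace.toDual_apply_apply, L2.inner_def]
  apply integral_congr_ae
  filter_upwards [hh.coeFn_toLp, hf.coeFn_toLp] with x h1 h2
  rw [h1, h2]
  simp [mul_comm]

/-- The set of admissible densities, as a subset of the weak dual of `L²`. -/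
def admSet (G : MeasurableSpace S) {mS : MeasurableSpace S} (μ : Measure S) [IsFiniteMeasure μ] {ι : Type*}
    (g : ι → S → ℝ) (h : S → ℝ) :
    Set (WeakDual ℝ (Lp ℝ 2 μ)) :=
  {φ | (∀ (f : S → ℝ) (hf : MemLp f 2 μ), (∀ x, 0 ≤ f x) →
      0 ≤ φ (hf.toLp f) ∧ φ (hf.toLp f) ≤ ∫ x, f x ∂μ) ∧
    ∀ (B : Set S), MeasurableSet[G] B → ∀ (l : ι) (hf : MemLp (B.indicator (g l)) 2 μ),
      φ (hf.toLp _) = ∫ x, h x * B.indicator (g l) x ∂μ}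

lemma admSet_closed [IsFiniteMeasure μ] {ι : Type*} (g : ι → S → ℝ) (h : S → ℝ) :
    IsClosed (admSet G μ g h) := by
  have : admSet G μ g h = (⋂ (f : S → ℝ) (hf : MemLp f 2 μ) (_ : ∀ x, 0 ≤ f x),
      {φ : WeakDual ℝ (Lp ℝ 2 μ) | 0 ≤ φ (hf.toLp f) ∧ φ (hf.toLp f) ≤ ∫ x, f x ∂μ}) ∩
      ⋂ (B : Set S) (_ : MeasurableSet[G] B) (l : ι) (hf : MemLp (B.indicator (g l)) 2 μ),
      {φ : WeakDual ℝ (Lp ℝ 2 μ) | φ (hf.toLp _) = ∫ x, h x * B.indicator (g l) x ∂μ} := by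
    ext φ
    simp [admSet]
  rw [this]
  refine IsClosed.inter ?_ ?_
  · refine isClosed_iInter fun f => isClosed_iInter fun hf => isClosed_iInter fun _ => ?_
    exact (isClosed_le continuous_const (WeakDual.eval_continuous _)).inter
      (isClosed_le (WeakDual.eval_continuous _) continuous_const)
  · refine isClosed_iInter fun B => isClosed_iInter fun _ => isClosed_iInter fun l =>
      isClosed_iInter fun hf => ?_
    exact isClosed_eq (WeakDual.eval_continuous _) continuous_const

lemma mem_admSet [IsFiniteMeasure μ] {ι : Type*} (g : ι → S → ℝ) (h h' : S → ℝ)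
    (hm : Measurable h') (hb : ∀ x, 0 ≤ h' x ∧ h' x ≤ 1) (hh : MemLp h' 2 μ)
    (heq : ∀ B, MeasurableSet[G] B → ∀ l, ∫ x, h' x * B.indicator (g l) x ∂μ =
      ∫ x, h x * B.indicator (g l) x ∂μ) :
    StrongDual.toWeakDual (InnerProductSpace.toDual ℝ (Lp ℝ 2 μ) (hh.toLp h')) ∈
      admSet G μ g h := by
  refine ⟨fun f hf hf0 => ?_, fun B hB l hf => ?_⟩
  · have h0 : (StrongDual.toWeakDual (InnerProductSpace.toDual ℝ (Lp ℝ 2 μ) (hh.toLp h')))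
        (hf.toLp f) = ∫ x, h' x * f x ∂μ := toDual_toLp_apply hh hf
    rw [h0]
    have hi : Integrable f μ := hf.integrable (by norm_num)
    refine ⟨integral_nonneg fun x => mul_nonneg (hb x).1 (hf0 x), ?_⟩
    apply integral_mono (hi.bdd_mul (c := 1) hm.aestronglyMeasurable
      (Eventually.of_forall fun x => by
        rw [Real.norm_eq_abs, abs_of_nonneg (hb x).1]; exact (hb x).2)) hi
    intro x
    exact mul_le_of_le_one_left (hf0 x) (hb x).2
  · rw [← heq B hB l]
    exact toDual_toLp_apply hh hf

lemma admSet_rep [IsFiniteMeasure μ] {ι : Type*} (g : ι → S → ℝ) (h : S → ℝ)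
    (φ : WeakDual ℝ (Lp ℝ 2 μ)) (hφ : φ ∈ admSet G μ g h) :
    ∃ h' : S → ℝ, Measurable h' ∧ (∀ x, 0 ≤ h' x ∧ h' x ≤ 1) ∧ ∀ hh : MemLp h' 2 μ,
      φ = StrongDual.toWeakDual (InnerProductSpace.toDual ℝ (Lp ℝ 2 μ) (hh.toLp h')) := by
  set w : Lp ℝ 2 μ := (InnerProductSpace.toDual ℝ (Lp ℝ 2 μ)).symm (WeakDual.toStrongDual φ)
    with hw
  have hwφ : ∀ y, φ y = inner ℝ w y := by
    intro y
    rw [hw, InnerProductSpace.toDual_symm_apply]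
    rfl
  have hwi : Integrable w μ := (Lp.memLp w).integrable (by norm_num)
  have hset : ∀ (s : Set S), MeasurableSet s →
      0 ≤ ∫ x in s, w x ∂μ ∧ ∫ x in s, w x ∂μ ≤ ∫ x in s, (1:ℝ) ∂μ := by
    intro s hs
    have hmem : MemLp (s.indicator fun _ => (1:ℝ)) 2 μ := (memLp_const 1).indicator hs
    have h1 := hφ.1 (s.indicator fun _ => (1:ℝ)) hmem
      (fun x => Set.indicator_nonneg (fun _ _ => zero_le_one) x)
    have h2 : φ (hmem.toLp _) = ∫ x in s, w x ∂μ := by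
      rw [hwφ, L2.inner_def, ← integral_indicator hs]
      apply integral_congr_ae
      filter_upwards [hmem.coeFn_toLp] with x hx
      rw [hx]
      by_cases hxs : x ∈ s <;> simp [hxs]
    rw [h2, integral_indicator hs] at h1
    exact h1
  have hn : 0 ≤ᵐ[μ] w := ae_nonneg_of_forall_setIntegral_nonneg hwi fun s hs _ => (hset s hs).1
  have hl : w ≤ᵐ[μ] fun _ => (1:ℝ) := ae_le_of_forall_setIntegral_le hwi (integrable_const _)
    fun s hs _ => (hset s hs).2
  have hwm : StronglyMeasurable w := Lp.stronglyMeasurable w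
  refine ⟨fun x => max 0 (min (w x) 1), measurable_const.max (hwm.measurable.min measurable_const),
    fun x => ⟨le_max_left _ _, max_le zero_le_one (min_le_right _ _)⟩, fun hh => ?_⟩
  have : hh.toLp _ = w := by
    ext1
    filter_upwards [hh.coeFn_toLp, hn, hl] with x h1 h2 h3
    rw [h1, min_eq_left h3]
    exact max_eq_right h2
  rw [this]
  apply DFunLike.ext
  intro y
  rw [hwφ]
  exact (InnerProductSpace.toDual_apply_apply).symm

lemma admSet_compact [IsFiniteMeasure μ] {ι : Type*} (g : ι → S → ℝ) (h : S → ℝ) :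
    IsCompact (admSet G μ g h) := by
  refine WeakDual.isCompact_of_bounded_of_closed ?_ (admSet_closed g h)
  have hsub : admSet G μ g h ⊆ WeakDual.toStrongDual ⁻¹'
      Metric.closedBall (0 : StrongDual ℝ (Lp ℝ 2 μ))
        ((measureUnivNNReal μ : ℝ) ^ (2:ENNReal).toReal⁻¹ * 1) := by
    intro φ hφ
    obtain ⟨h', hm, hb, he⟩ := admSet_rep g h φ hφ
    have hh : MemLp h' 2 μ := memLp_of_bdd hm (c := 1) fun x => by
      rw [abs_of_nonneg (hb x).1]; exact (hb x).2
    have hφ' : WeakDual.toStrongDual φ = InnerProductSpace.toDual ℝ (Lp ℝ 2 μ) (hh.toLp h') := by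
      rw [he hh]; rfl
    rw [Set.mem_preimage, mem_closedBall_zero_iff, hφ', LinearIsometryEquiv.norm_map]
    apply Lp.norm_le_of_ae_bound zero_le_one
    filter_upwards [hh.coeFn_toLp] with x hx
    rw [hx, Real.norm_eq_abs, abs_of_nonneg (hb x).1]
    exact (hb x).2
  exact Bornology.IsBounded.subset (WeakDual.isBounded_closedBall _ _) hsub

/-- Scalar purification. -/
lemma purify_scalar [IsFiniteMeasure μ] (hG : G ≤ mS) (hna : NoAtom G μ) {ι : Type*} [Fintype ι]
    (g : ι → S → ℝ) (hg : ∀ l, Measurable (g l)) (c : ℝ) (hgb : ∀ l x, |g l x| ≤ c)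
    (h : S → ℝ) (hm : Measurable h) (hb : ∀ x, 0 ≤ h x ∧ h x ≤ 1) :
    ∃ E : Set S, MeasurableSet E ∧ ∀ B, MeasurableSet[G] B → ∀ l,
      ∫ x in B, E.indicator (g l) x ∂μ = ∫ x in B, h x * g l x ∂μ := by
  have labs : ∀ {h' : S → ℝ}, (∀ x, 0 ≤ h' x ∧ h' x ≤ 1) → ∀ x, |h' x| ≤ 1 := by
    intro h' hb x
    rw [abs_of_nonneg (hb x).1]; exact (hb x).2
  have hgi : ∀ l, Integrable (g l) μ := fun l =>
    Integrable.of_bound (hg l).aestronglyMeasurable c (Eventually.of_forall (hgb l))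
  have hgB : ∀ B, MeasurableSet[G] B → ∀ l, MemLp (B.indicator (g l)) 2 μ := by
    intro B hB l
    exact (memLp_of_bdd (hg l) (hgb l)).indicator (hG _ hB)
  have : LocallyConvexSpace ℝ (WeakDual ℝ (Lp ℝ 2 μ)) :=
    inferInstanceAs (LocallyConvexSpace ℝ (WeakBilin (topDualPairing ℝ (Lp ℝ 2 μ))))
  have hne : (admSet G μ g h).Nonempty :=
    ⟨_, mem_admSet g h h hm hb (memLp_of_bdd hm (labs hb)) fun _ _ _ => rfl⟩
  obtain ⟨φ, hφ⟩ := (admSet_compact (G := G) (μ := μ) g h).extremePoints_nonempty hne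
  rw [mem_extremePoints] at hφ
  obtain ⟨hφK, hext⟩ := hφ
  obtain ⟨h', hm', hb', he⟩ := admSet_rep g h φ hφK
  have hh' : MemLp h' 2 μ := memLp_of_bdd hm' (labs hb')
  have hφ' := he hh'
  have hcon : ∀ B, MeasurableSet[G] B → ∀ l, ∫ x, h' x * B.indicator (g l) x ∂μ =
      ∫ x, h x * B.indicator (g l) x ∂μ := by
    intro B hB l
    rw [← hφK.2 B hB l (hgB B hB l), hφ']
    exact (toDual_toLp_apply hh' (hgB B hB l)).symm
  have key : ∀ n : ℕ, μ {x | 1 / (n + 1 : ℝ) ≤ h' x ∧ h' x ≤ 1 - 1 / (n + 1 : ℝ)} = 0 := by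
    intro n
    by_contra hpos
    set δ : ℝ := 1 / (n + 1 : ℝ) with hδ
    have hδ0 : 0 < δ := by positivity
    have hDm : MeasurableSet {x | δ ≤ h' x ∧ h' x ≤ 1 - δ} :=
      (measurableSet_le measurable_const hm').inter (measurableSet_le hm' measurable_const)
    obtain ⟨k, hkm, hkb, hk0, hkn, hke⟩ := exists_perturb hG hna g hgi Finset.univ _ hDm
      (pos_iff_ne_zero.2 hpos)
    have hkint : ∀ B, MeasurableSet[G] B → ∀ l, ∫ x, k x * B.indicator (g l) x ∂μ = 0 := by
      intro B hB l
      have h1 : Integrable (fun x => k x * g l x) μ :=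
        (hgi l).bdd_mul (c := 1) hkm.aestronglyMeasurable (Eventually.of_forall hkb)
      have h2 : ∫ x, k x * B.indicator (g l) x ∂μ = ∫ x in B, k x * g l x ∂μ := by
        rw [← integral_indicator (hG _ hB)]
        congr 1; ext x
        by_cases hx : x ∈ B <;> simp [hx]
      rw [h2, ← setIntegral_condExp hG h1 hB]
      apply setIntegral_eq_zero_of_ae_eq_zero
      filter_upwards [hke l (Finset.mem_univ l)] with x hx _ using hx
    have hpm : ∀ σ : ℝ, |σ| = 1 → (Measurable fun x => h' x + σ * δ * k x) ∧
        (∀ x, 0 ≤ h' x + σ * δ * k x ∧ h' x + σ * δ * k x ≤ 1) ∧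
        ∀ hh : MemLp (fun x => h' x + σ * δ * k x) 2 μ,
          StrongDual.toWeakDual (InnerProductSpace.toDual ℝ (Lp ℝ 2 μ) (hh.toLp _)) ∈
            admSet G μ g h := by
      intro σ hσ
      have hmm : Measurable fun x => h' x + σ * δ * k x := hm'.add (hkm.const_mul _)
      have hbb : ∀ x, 0 ≤ h' x + σ * δ * k x ∧ h' x + σ * δ * k x ≤ 1 := by
        intro x
        by_cases hx : x ∈ {x | δ ≤ h' x ∧ h' x ≤ 1 - δ}
        · have : |σ * δ * k x| ≤ δ := by
            rw [abs_mul, abs_mul, hσ, one_mul, abs_of_pos hδ0]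
            exact mul_le_of_le_one_right hδ0.le (hkb x)
          have h3 := abs_le.1 this
          simp only [Set.mem_ofPred_eq] at hx
          constructor <;> linarith [hx.1, hx.2]
        · rw [hk0 x hx]; simpa using hb' x
      refine ⟨hmm, hbb, fun hh => mem_admSet g h _ hmm hbb hh ?_⟩
      intro B hB l
      rw [← hcon B hB l]
      have i0 : Integrable (B.indicator (g l)) μ := (hgi l).indicator (hG _ hB)
      have i1 : Integrable (fun x => h' x * B.indicator (g l) x) μ :=
        i0.bdd_mul (c := 1) hm'.aestronglyMeasurable (Eventually.of_forall (labs hb'))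
      have i2 : Integrable (fun x => k x * B.indicator (g l) x) μ :=
        i0.bdd_mul (c := 1) hkm.aestronglyMeasurable (Eventually.of_forall hkb)
      have : (fun x => (h' x + σ * δ * k x) * B.indicator (g l) x) =
          fun x => h' x * B.indicator (g l) x + σ * δ * (k x * B.indicator (g l) x) := by
        ext x; ring
      rw [this, integral_add i1 (i2.const_mul _), integral_const_mul, hkint B hB l]
      simp
    obtain ⟨m1, b1, a1⟩ := hpm 1 (by simp)
    obtain ⟨m2, b2, a2⟩ := hpm (-1) (by simp)
    have l1 := memLp_of_bdd (μ := μ) m1 (labs b1)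
    have l2 := memLp_of_bdd (μ := μ) m2 (labs b2)
    have hsum : hh'.toLp h' = (1/2:ℝ) • l1.toLp _ + (1/2:ℝ) • l2.toLp _ := by
      rw [← MemLp.toLp_const_smul, ← MemLp.toLp_const_smul, ← MemLp.toLp_add]
      congr 1
      ext x
      simp
      ring
    have hseg := hext _ (a1 l1) _ (a2 l2) ⟨1/2, 1/2, by norm_num, by norm_num, by norm_num, by
      rw [hφ', hsum, map_add, map_add, map_smulₛₗ, map_smulₛₗ, map_smulₛₗ, map_smulₛₗ]
      rfl⟩
    have e1 : StrongDual.toWeakDual (InnerProductSpace.toDual ℝ (Lp ℝ 2 μ) (l1.toLp _)) =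
      StrongDual.toWeakDual (InnerProductSpace.toDual ℝ (Lp ℝ 2 μ) (hh'.toLp _)) :=
      hseg.1.trans hφ'
    have e2 := (InnerProductSpace.toDual ℝ (Lp ℝ 2 μ)).injective
      (StrongDual.toWeakDual.injective e1)
    rw [MemLp.toLp_eq_toLp_iff] at e2
    apply hkn
    filter_upwards [e2] with x hx
    have : δ * k x = 0 := by linarith
    simpa [hδ0.ne'] using this
  refine ⟨{x | h' x = 1}, hm' (measurableSet_singleton 1), fun B hB l => ?_⟩
  have hae : ∀ᵐ x ∂μ, h' x = 0 ∨ h' x = 1 := by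
    have : ∀ᵐ x ∂μ, ∀ n : ℕ, ¬ (1 / (n + 1 : ℝ) ≤ h' x ∧ h' x ≤ 1 - 1 / (n + 1 : ℝ)) := by
      rw [ae_all_iff]
      intro n
      exact measure_eq_zero_iff_ae_notMem.1 (key n)
    filter_upwards [this] with x hx
    by_contra hc
    push Not at hc
    have p0 : 0 < h' x := lt_of_le_of_ne (hb' x).1 (Ne.symm hc.1)
    have p1 : 0 < 1 - h' x := by
      have := lt_of_le_of_ne (hb' x).2 hc.2
      linarith
    obtain ⟨n, hn⟩ := exists_nat_one_div_lt (lt_min p0 p1)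
    have h1 := lt_min_iff.1 hn
    exact hx n ⟨h1.1.le, by linarith [h1.2]⟩
  have h1 := hcon B hB l
  have h2 : ∀ F : S → ℝ, ∫ x, F x * B.indicator (g l) x ∂μ = ∫ x in B, F x * g l x ∂μ := by
    intro F
    rw [← integral_indicator (hG _ hB)]
    congr 1; ext x
    by_cases hx : x ∈ B <;> simp [hx]
  rw [h2, h2] at h1
  rw [← h1]
  apply setIntegral_congr_ae (hG _ hB)
  filter_upwards [hae] with x hx _
  rcases hx with hx | hx <;> simp [Set.indicator, hx]

end Purify2
end SMPE

namespace SMPE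

section Purify3
variable {S : Type*} {G mS : MeasurableSpace S} {μ : Measure S}

lemma abs_sum_wt_le {M : ℕ} (a g : Fin M → ℝ) (ha : ∀ k, 0 ≤ a k) (hs : ∑ k, a k = 1)
    {c : ℝ} (hg : ∀ k, |g k| ≤ c) : |∑ k, a k * g k| ≤ c := by
  calc |∑ k, a k * g k| ≤ ∑ k, |a k * g k| := Finset.abs_sum_le_sum_abs _ _
    _ ≤ ∑ k, a k * c := by
        apply Finset.sum_le_sum
        intro k _
        rw [abs_mul, abs_of_nonneg (ha k)]
        exact mul_le_mul_of_nonneg_left (hg k) (ha k)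
    _ = c := by rw [← Finset.sum_mul, hs, one_mul]

/-- Vector purification. -/
lemma purify [IsFiniteMeasure μ] (hG : G ≤ mS) (hna : NoAtom G μ) {ι : Type*} [Fintype ι]
    (M : ℕ) : ∀ (a : Fin (M + 1) → S → ℝ) (_ : ∀ k, Measurable (a k)) (_ : ∀ k x, 0 ≤ a k x)
    (_ : ∀ x, ∑ k, a k x = 1)
    (g : Fin (M + 1) → ι → S → ℝ) (_ : ∀ k l, Measurable (g k l)) (c : ℝ)
    (_ : ∀ k l x, |g k l x| ≤ c),
    ∃ κ : S → Fin (M + 1), Measurable κ ∧ ∀ B, MeasurableSet[G] B → ∀ l,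
      ∫ x in B, g (κ x) l x ∂μ = ∫ x in B, ∑ k, a k x * g k l x ∂μ := by
  induction M with
  | zero =>
    intro a ham ha0 ha1 g hg c hgb
    refine ⟨fun _ => 0, measurable_const, fun B hB l => ?_⟩
    congr 1
    ext x
    have := ha1 x
    simp only [Nat.reduceAdd, Finset.univ_unique, Fin.default_eq_zero, Fin.isValue,
      Finset.sum_singleton] at this ⊢
    rw [this, one_mul]
  | succ M ih =>
    intro a ham ha0 ha1 g hg c hgb
    classical
    let a' : Fin (M + 1) → S → ℝ := fun k x =>
      if a 0 x = 1 then (if k = 0 then 1 else 0) else a k.succ x / (1 - a 0 x)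
    have hle : ∀ x, a 0 x ≤ 1 := fun x => by
      rw [← ha1 x]
      exact Finset.single_le_sum (f := fun k => a k x) (fun k _ => ha0 k x) (Finset.mem_univ _)
    have hsucc : ∀ x, ∑ k : Fin (M+1), a k.succ x = 1 - a 0 x := fun x => by
      have := ha1 x
      rw [Fin.sum_univ_succ] at this
      linarith
    have ha'm : ∀ k, Measurable (a' k) := fun k =>
      Measurable.ite (ham 0 (measurableSet_singleton 1)) measurable_const
        ((ham _).div (measurable_const.sub (ham 0)))
    have ha'0 : ∀ k x, 0 ≤ a' k x := by
      intro k x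
      simp only [a']
      split_ifs
      · exact zero_le_one
      · exact le_rfl
      · exact div_nonneg (ha0 _ _) (by linarith [hle x])
    have ha'1 : ∀ x, ∑ k, a' k x = 1 := by
      intro x
      by_cases h : a 0 x = 1
      · simp [a', h]
      · simp only [a', h, if_false]
        rw [← Finset.sum_div, hsucc, div_self]
        intro h'
        apply h; linarith
    have hmul : ∀ k x, (1 - a 0 x) * a' k x = a k.succ x := by
      intro k x
      by_cases h : a 0 x = 1
      · have h1 := hsucc x
        rw [h, sub_self, Finset.sum_eq_zero_iff_of_nonneg (fun k _ => ha0 _ _)] at h1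
        rw [h1 k (Finset.mem_univ _), h]; ring
      · simp only [a', h, if_false]
        have : 1 - a 0 x ≠ 0 := fun h' => h (by linarith)
        field_simp
    let g' : ι → S → ℝ := fun l x => ∑ k, a' k x * g k.succ l x
    have hg'm : ∀ l, Measurable (g' l) := fun l =>
      Finset.measurable_sum _ fun k _ => (ha'm k).mul (hg _ _)
    have hg'b : ∀ l x, |g' l x| ≤ c := fun l x =>
      abs_sum_wt_le (fun k => a' k x) (fun k => g k.succ l x) (fun k => ha'0 k x) (ha'1 x)
        (fun k => hgb _ _ _)
    obtain ⟨E, hE, hEe⟩ := purify_scalar (μ := μ) hG hna (ι := ι ⊕ ι)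
      (fun l => l.elim (g 0) g') (by rintro (l | l); exacts [hg 0 l, hg'm l]) c
      (by rintro (l | l) x; exacts [hgb 0 l x, hg'b l x]) (a 0) (ham 0)
      (fun x => ⟨ha0 0 x, hle x⟩)
    have hc : ∀ (l : ι) (x : S), 0 ≤ c := fun l x => (abs_nonneg _).trans (hgb 0 l x)
    obtain ⟨κ', hκ'm, hκ'⟩ := ih a' ha'm ha'0 ha'1
      (fun k l => Eᶜ.indicator (g k.succ l)) (fun k l => (hg _ _).indicator hE.compl) c (by
        intro k l x
        by_cases hx : x ∈ Eᶜ
        · rw [Set.indicator_of_mem hx]; exact hgb _ _ _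
        · rw [Set.indicator_of_notMem hx, abs_zero]; exact hc l x)
    refine ⟨fun x => if x ∈ E then 0 else (κ' x).succ,
      Measurable.ite hE measurable_const ((measurable_of_countable Fin.succ).comp hκ'm), ?_⟩
    intro B hB l
    have hbint : ∀ {f : S → ℝ}, Measurable f → (∀ x, |f x| ≤ c) → IntegrableOn f B μ :=
      fun hf hb => (Integrable.of_bound hf.aestronglyMeasurable c
        (Eventually.of_forall hb)).integrableOn
    have hindb : ∀ {f : S → ℝ} {D : Set S}, (∀ x, |f x| ≤ c) → ∀ x, |D.indicator f x| ≤ c := by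
      intro f D hb x
      by_cases hx : x ∈ D
      · rw [Set.indicator_of_mem hx]; exact hb x
      · rw [Set.indicator_of_notMem hx, abs_zero]; exact hc l x
    have hmulb : ∀ {f : S → ℝ}, (∀ x, |f x| ≤ c) → ∀ x, |a 0 x * f x| ≤ c := by
      intro f hb x
      rw [abs_mul, abs_of_nonneg (ha0 0 x)]
      exact (mul_le_of_le_one_left (abs_nonneg _) (hle x)).trans (hb x)
    have e1 := hEe B hB (Sum.inl l)
    have e2 := hEe B hB (Sum.inr l)
    simp only [Sum.elim_inl, Sum.elim_inr] at e1 e2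
    have e3 := hκ' B hB l
    have hκg : Measurable fun x => Eᶜ.indicator (g (κ' x).succ l) x := by
      have : (fun x => Eᶜ.indicator (g (κ' x).succ l) x) = fun x => ∑ k,
          if κ' x = k then Eᶜ.indicator (g k.succ l) x else 0 := by
        ext x; simp
      rw [this]
      exact Finset.measurable_sum _ fun k _ => Measurable.ite (hκ'm (measurableSet_singleton k))
        ((hg _ _).indicator hE.compl) measurable_const
    have lhs : ∀ x, g (if x ∈ E then 0 else (κ' x).succ) l x =
        E.indicator (g 0 l) x + Eᶜ.indicator (g (κ' x).succ l) x := by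
      intro x
      by_cases hx : x ∈ E <;> simp [hx]
    have rhs : ∀ x, ∑ k, a k x * g k l x = a 0 x * g 0 l x + (g' l x - a 0 x * g' l x) := by
      intro x
      rw [Fin.sum_univ_succ]
      congr 1
      have : g' l x - a 0 x * g' l x = (1 - a 0 x) * g' l x := by ring
      rw [this]
      simp only [g']
      rw [Finset.mul_sum]
      apply Finset.sum_congr rfl
      intro k _
      rw [← mul_assoc, hmul]
    have e4 : ∀ x, ∑ k, a' k x * Eᶜ.indicator (g k.succ l) x = g' l x - E.indicator (g' l) x := by
      intro x
      by_cases hx : x ∈ E <;> simp [hx, g']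
    simp_rw [lhs, rhs]
    simp_rw [e4] at e3
    rw [integral_add, integral_add, integral_sub, e1, e3, integral_sub, e2]
    · exact hbint (hg'm l) (hg'b l)
    · exact hbint ((hg'm l).indicator hE) (hindb (hg'b l))
    · exact hbint (hg'm l) (hg'b l)
    · exact hbint ((ham 0).mul (hg'm l)) (hmulb (hg'b l))
    · exact hbint ((ham 0).mul (hg 0 l)) (hmulb (hgb 0 l))
    · exact Integrable.sub (hbint (hg'm l) (hg'b l))
        (hbint ((ham 0).mul (hg'm l)) (hmulb (hg'b l)))
    · exact hbint ((hg 0 l).indicator hE) (hindb (hgb 0 l))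
    · exact hbint hκg fun x => by
        by_cases hx : x ∈ Eᶜ
        · rw [Set.indicator_of_mem hx]; exact hgb _ _ _
        · rw [Set.indicator_of_notMem hx, abs_zero]; exact hc l x

end Purify3
end SMPE

namespace SMPE

lemma infinite_iff_frequently (N : Set ℕ) : N.Infinite ↔ ∀ m, ∃ n, m ≤ n ∧ n ∈ N := by
  rw [Set.infinite_iff_exists_gt]
  constructor
  · intro h m
    obtain ⟨b, hb, hlt⟩ := h m
    exact ⟨b, hlt.le, hb⟩
  · intro h m
    obtain ⟨b, hb, hN⟩ := h (m + 1)
    exact ⟨b, hN, hb⟩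

section Cluster
variable {S : Type*} [MeasurableSpace S] {K : Type*} [MetricSpace K] [CompactSpace K] [Nonempty K]

/-- a measurable family of infinite index sets -/
def GoodIdx (N : S → Set ℕ) : Prop :=
  (∀ n, MeasurableSet {s | n ∈ N s}) ∧ ∀ s, (N s).Infinite

lemma cluster_step (g : ℕ → S → K) (hg : ∀ n (B : Set K), MeasurableSet (g n ⁻¹' B))
    (N : S → Set ℕ) (hN : GoodIdx N) (r : ℝ) (hr : 0 < r) :
    ∃ (N' : S → Set ℕ) (c : S → K), GoodIdx N' ∧ (∀ s, N' s ⊆ N s) ∧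
      (∀ B : Set K, MeasurableSet (c ⁻¹' B)) ∧ ∀ s, ∀ n ∈ N' s, dist (g n s) (c s) < r := by
  classical
  let d := TopologicalSpace.denseSeq K
  let T : ℕ → S → Set ℕ := fun j s => {n | n ∈ N s ∧ dist (g n s) (d j) < r}
  have hTm : ∀ j n, MeasurableSet {s | n ∈ T j s} := fun j n =>
    (hN.1 n).inter (hg n {y | dist y (d j) < r})
  have hTinf : ∀ j, MeasurableSet {s | (T j s).Infinite} := by
    intro j
    simp_rw [infinite_iff_frequently]
    have : {s | ∀ m, ∃ n, m ≤ n ∧ n ∈ T j s} = ⋂ m, ⋃ n, ⋃ (_ : m ≤ n), {s | n ∈ T j s} := by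
      ext s; simp
    rw [this]
    exact MeasurableSet.iInter fun m => MeasurableSet.iUnion fun n => MeasurableSet.iUnion
      fun _ => hTm j n
  have hex : ∀ s, ∃ j, (T j s).Infinite := by
    intro s
    have hcov : (Set.univ : Set K) ⊆ ⋃ j, Metric.ball (d j) r := by
      intro y _
      obtain ⟨j, hj⟩ := (TopologicalSpace.denseRange_denseSeq K).exists_dist_lt y hr
      exact Set.mem_iUnion.2 ⟨j, hj⟩
    obtain ⟨t, ht⟩ := isCompact_univ.elim_finite_subcover _ (fun j => Metric.isOpen_ball) hcov
    by_contra hc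
    push Not at hc
    apply hN.2 s
    have hfin : (⋃ j ∈ t, T j s).Finite := t.finite_toSet.biUnion fun j _ => Set.not_infinite.1 (by simpa using hc j)
    refine hfin.subset ?_
    intro n hn
    obtain ⟨j, hjt, hj⟩ := Set.mem_iUnion₂.1 (ht (Set.mem_univ (g n s)))
    exact Set.mem_iUnion₂.2 ⟨j, hjt, hn, hj⟩
  let j : S → ℕ := fun s => Nat.find (hex s)
  have hjm : Measurable j := measurable_find hex hTinf
  refine ⟨fun s => T (j s) s, fun s => d (j s), ⟨fun n => ?_, fun s => Nat.find_spec (hex s)⟩,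
    fun s n hn => hn.1, fun B => ?_, fun s n hn => hn.2⟩
  · have : {s | n ∈ T (j s) s} = ⋃ i, (j ⁻¹' {i} ∩ {s | n ∈ T i s}) := by
      ext s; simp
    rw [this]
    exact MeasurableSet.iUnion fun i => (hjm (measurableSet_singleton i)).inter (hTm i n)
  · exact hjm (MeasurableSet.of_discrete (s := d ⁻¹' B))

lemma exists_measurable_cluster (g : ℕ → S → K)
    (hg : ∀ n (B : Set K), MeasurableSet (g n ⁻¹' B)) :
    ∃ φ : S → K, (∀ s, MapClusterPt (φ s) atTop (fun n => g n s)) ∧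
      ∀ ψ : K → ℝ, Continuous ψ → Measurable fun s => ψ (φ s) := by
  classical
  have step := fun (N : {N : S → Set ℕ // GoodIdx N}) (k : ℕ) =>
    cluster_step g hg N.1 N.2 ((1/2:ℝ)^k) (by positivity)
  choose N' c hN' hsub hc hdist using step
  let N : ℕ → {N : S → Set ℕ // GoodIdx N} := fun k => Nat.rec
    ⟨fun _ => Set.univ, ⟨fun n => by simp, fun s => Set.infinite_univ⟩⟩
    (fun k N => ⟨N' N k, hN' N k⟩) k
  have hNs : ∀ k, (N (k+1)).1 = N' (N k) k := fun k => rfl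
  let C : ℕ → S → K := fun k => c (N k) k
  have hanti : ∀ s, Antitone fun k => (N k).1 s := fun s =>
    antitone_nat_of_succ_le fun k => by rw [hNs]; exact hsub (N k) k s
  have hd : ∀ s k l n, k < l → n ∈ (N l).1 s → dist (g n s) (C k s) < (1/2:ℝ)^k := by
    intro s k l n hkl hn
    apply hdist (N k) k s n
    rw [← hNs]
    exact hanti s hkl hn
  have hCd : ∀ s k l, k ≤ l → dist (C k s) (C l s) ≤ 2 * (1/2:ℝ)^k := by
    intro s k l hkl
    obtain ⟨n, hn⟩ := ((N (l+1)).2.2 s).nonempty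
    have h1 := hd s k (l+1) n (by omega) hn
    have h2 := hd s l (l+1) n (by omega) hn
    have h3 : (1/2:ℝ)^l ≤ (1/2:ℝ)^k := pow_le_pow_of_le_one (by norm_num) (by norm_num) hkl
    have h4 := dist_triangle_left (C k s) (C l s) (g n s)
    linarith
  have hlim0 : Tendsto (fun k : ℕ => 2 * (1/2:ℝ)^k) atTop (nhds 0) := by
    have := (tendsto_pow_atTop_nhds_zero_of_lt_one (r := (1/2:ℝ)) (by norm_num)
      (by norm_num)).const_mul 2
    simpa using this
  have hcau : ∀ s, ∃ y, Tendsto (fun k => C k s) atTop (nhds y) := by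
    intro s
    apply cauchySeq_tendsto_of_complete
    exact cauchySeq_of_le_tendsto_0' _ (fun k l hkl => hCd s k l hkl) hlim0
  choose φ hφ using hcau
  refine ⟨φ, fun s => ?_, fun ψ hψ => ?_⟩
  · rw [mapClusterPt_iff_frequently]
    intro U hU
    obtain ⟨ε, hε, hball⟩ := Metric.mem_nhds_iff.1 hU
    rw [frequently_atTop]
    intro n0
    obtain ⟨k, hk1, hk2⟩ := ((hlim0.eventually (gt_mem_nhds (half_pos hε))).and
      ((Metric.tendsto_nhds.1 (hφ s)) (ε/2) (half_pos hε))).exists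
    obtain ⟨n, hn, hnN⟩ := (infinite_iff_frequently _).1 ((N (k+1)).2.2 s) n0
    refine ⟨n, hn, hball ?_⟩
    rw [Metric.mem_ball]
    have h1 := hd s k (k+1) n (by omega) hnN
    have h2 := dist_triangle (g n s) (C k s) (φ s)
    have h3 : 0 < (1/2:ℝ)^k := by positivity
    linarith
  · refine measurable_of_tendsto_metrizable (f := fun k s => ψ (C k s)) (fun k => ?_) ?_
    · intro B hB
      exact hc (N k) k (ψ ⁻¹' B)
    · rw [tendsto_pi_nhds]
      intro s
      exact (hψ.tendsto _).comp (hφ s)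

end Cluster
end SMPE

namespace SMPE

section Weak

lemma weak_seq_compact {H : Type*} [NormedAddCommGroup H] [InnerProductSpace ℝ H]
    [CompleteSpace H] (F : ℕ → H) (R : ℝ) (hF : ∀ n, ‖F n‖ ≤ R) :
    ∃ (σ : ℕ → ℕ) (W : H), StrictMono σ ∧
      ∀ y, Tendsto (fun n => inner ℝ (F (σ n)) y) atTop (nhds (inner ℝ W y)) := by
  let V : Submodule ℝ H := (Submodule.span ℝ (Set.range F)).topologicalClosure
  have hVs : TopologicalSpace.SeparableSpace V := by
    have h1 : TopologicalSpace.IsSeparable (Set.range F) :=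
      (Set.countable_range F).isSeparable
    have h2 := (h1.span (R := ℝ)).closure
    exact h2.separableSpace
  have hVc : IsClosed (V : Set H) := Submodule.isClosed_topologicalClosure _
  have hVcomp : CompleteSpace V := hVc.completeSpace_coe
  have hFV : ∀ n, F n ∈ V := fun n =>
    Submodule.le_topologicalClosure _ (Submodule.subset_span ⟨n, rfl⟩)
  let F' : ℕ → V := fun n => ⟨F n, hFV n⟩
  let x : ℕ → WeakDual ℝ V := fun n =>
    StrongDual.toWeakDual (InnerProductSpace.toDual ℝ V (F' n))
  have hx : ∀ n, x n ∈ WeakDual.toStrongDual ⁻¹' Metric.closedBall (0 : StrongDual ℝ V) R := by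
    intro n
    have : WeakDual.toStrongDual (x n) = InnerProductSpace.toDual ℝ V (F' n) := rfl
    rw [Set.mem_preimage, this, Metric.mem_closedBall]
    refine le_trans (le_of_eq ?_) (hF n)
    refine (dist_zero_right (InnerProductSpace.toDual ℝ V (F' n))).trans ?_
    rw [LinearIsometryEquiv.norm_map]
    rfl
  obtain ⟨φ, _, σ, hσ, hlim⟩ := WeakDual.isSeqCompact_closedBall ℝ V 0 R hx
  set W : V := (InnerProductSpace.toDual ℝ V).symm (WeakDual.toStrongDual φ) with hW
  refine ⟨σ, W, hσ, fun y => ?_⟩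
  have h1 := ((WeakDual.eval_continuous (V.orthogonalProjectionOnto y)).tendsto φ).comp hlim
  have h2 : φ (V.orthogonalProjectionOnto y) = inner ℝ (W : H) y := by
    rw [← Submodule.inner_orthogonalProjectionOnto_eq_of_mem_left, hW,
      InnerProductSpace.toDual_symm_apply]
    rfl
  rw [h2] at h1
  refine h1.congr fun n => ?_
  have : x (σ n) (V.orthogonalProjectionOnto y) = inner ℝ (F' (σ n)) (V.orthogonalProjectionOnto y) :=
    InnerProductSpace.toDual_apply_apply
  rw [Function.comp_apply, Function.comp_apply, this,
    Submodule.inner_orthogonalProjectionOnto_eq_of_mem_left]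

lemma mazur {H : Type*} [NormedAddCommGroup H] [InnerProductSpace ℝ H]
    [CompleteSpace H] (F : ℕ → H) (W : H)
    (hF : ∀ y, Tendsto (fun n => inner ℝ (F n) y) atTop (nhds (inner ℝ W y)))
    (N : ℕ) (ε : ℝ) (hε : 0 < ε) :
    ∃ (L : ℕ) (c : Fin L → ℝ) (t : Fin L → ℕ), (∀ i, 0 ≤ c i) ∧ ∑ i, c i = 1 ∧ (∀ i, N ≤ t i) ∧
      ‖∑ i, c i • F (t i) - W‖ < ε := by
  have hmem : W ∈ closure (convexHull ℝ (F '' Set.Ici N)) := by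
    by_contra hc
    obtain ⟨f, u, hfu, hu⟩ := geometric_hahn_banach_closed_point
      (convex_convexHull ℝ (F '' Set.Ici N)).closure isClosed_closure hc
    let y := (InnerProductSpace.toDual ℝ H).symm f
    have hy : ∀ z, f z = inner ℝ z y := fun z => by
      rw [real_inner_comm, InnerProductSpace.toDual_symm_apply]
    have h1 := hF y
    rw [← hy] at h1
    have h2 : f W ≤ u := by
      apply le_of_tendsto h1
      filter_upwards [eventually_ge_atTop N] with n hn
      rw [← hy]
      exact (hfu _ (subset_closure (subset_convexHull ℝ _ ⟨n, hn, rfl⟩))).le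
    linarith
  obtain ⟨y, hy, hd⟩ := Metric.mem_closure_iff.1 hmem ε hε
  rw [mem_convexHull_iff_exists_fintype] at hy
  obtain ⟨ι, _, c, z, hc0, hc1, hz, hsum⟩ := hy
  choose t ht htz using hz
  let e := (Fintype.equivFin ι).symm
  refine ⟨Fintype.card ι, fun i => c (e i), fun i => t (e i), fun i => hc0 _, ?_, fun i => ht _, ?_⟩
  · rw [← hc1]; exact Equiv.sum_comp e c
  · have : ∑ i, c (e i) • F (t (e i)) = y := by
      rw [← hsum]
      simp_rw [htz]
      exact Equiv.sum_comp e (fun i => c i • z i)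
    rw [this, ← dist_eq_norm, dist_comm]
    exact hd

lemma abs_le_of_wt {ι : Type*} (s : Finset ι) (c g : ι → ℝ) (hc : ∀ i ∈ s, 0 ≤ c i)
    (h1 : ∑ i ∈ s, c i = 1) {C : ℝ} (hg : ∀ i, |g i| ≤ C) : |∑ i ∈ s, c i * g i| ≤ C := by
  calc |∑ k ∈ s, c k * g k| ≤ ∑ k ∈ s, |c k * g k| := Finset.abs_sum_le_sum_abs _ _
    _ ≤ ∑ k ∈ s, c k * C := by
        apply Finset.sum_le_sum
        intro k hk
        rw [abs_mul, abs_of_nonneg (hc k hk)]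
        exact mul_le_mul_of_nonneg_left (hg k) (hc k hk)
    _ = C := by rw [← Finset.sum_mul, h1, one_mul]

variable {Ω : Type*} [MeasurableSpace Ω] {P : Measure Ω} [IsFiniteMeasure P]

lemma int_of_bdd {f : Ω → ℝ} (hf : Measurable f) {C : ℝ} (hb : ∀ x, |f x| ≤ C) :
    Integrable f P :=
  Integrable.of_bound hf.aestronglyMeasurable C (Eventually.of_forall hb)

/-- approximation by bounded functions in `L¹` -/
lemma exists_bdd_approx {Ω : Type*} [MeasurableSpace Ω] {P : Measure Ω} {h : Ω → ℝ} (hh : Integrable h P) {ε : ℝ} (hε : 0 < ε) :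
    ∃ h' : Ω → ℝ, Measurable h' ∧ (∃ B, ∀ x, |h' x| ≤ B) ∧ ∫ x, |h x - h' x| ∂P < ε := by
  obtain ⟨g, hg, hgm⟩ := (memLp_one_iff_integrable.2 hh).exists_simpleFunc_eLpNorm_sub_lt
    ENNReal.one_ne_top (ε := ENNReal.ofReal ε) (by simpa using hε)
  refine ⟨g, g.measurable, ?_, ?_⟩
  · obtain ⟨B, hB⟩ := g.exists_forall_norm_le
    exact ⟨B, hB⟩
  · have hi : Integrable (h - ⇑g) P := hh.sub (memLp_one_iff_integrable.1 hgm)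
    rw [eLpNorm_one_eq_lintegral_enorm, ← ofReal_integral_norm_eq_lintegral_enorm hi,
      ENNReal.ofReal_lt_ofReal_iff hε] at hg
    exact hg

/-- weak convergence in `L²` of bounded functions, tested against `L¹` -/
lemma tendsto_test_L1 (f : ℕ → Ω → ℝ) (w : Ω → ℝ) (C : ℝ) (hf : ∀ n, Measurable (f n))
    (hw : Measurable w) (hfb : ∀ n x, |f n x| ≤ C) (hwb : ∀ x, |w x| ≤ C)
    (ht : ∀ h : Ω → ℝ, Measurable h → (∃ B, ∀ x, |h x| ≤ B) →
      Tendsto (fun n => ∫ x, f n x * h x ∂P) atTop (nhds (∫ x, w x * h x ∂P)))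
    (h : Ω → ℝ) (hh : Integrable h P) :
    Tendsto (fun n => ∫ x, f n x * h x ∂P) atTop (nhds (∫ x, w x * h x ∂P)) := by
  rw [Metric.tendsto_atTop]
  intro ε hε
  have hC : 0 ≤ |C| + 1 := by positivity
  obtain ⟨h', hm', hB', hd⟩ := exists_bdd_approx hh (ε := ε / (3 * (|C| + 1))) (by positivity)
  obtain ⟨N, hN⟩ := (Metric.tendsto_atTop.1 (ht h' hm' hB')) (ε/3) (by positivity)
  refine ⟨N, fun n hn => ?_⟩
  have hi' : Integrable h' P := by
    obtain ⟨B, hB⟩ := hB'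
    exact int_of_bdd hm' hB
  have key : ∀ g : Ω → ℝ, Measurable g → (∀ x, |g x| ≤ C) →
      |∫ x, g x * h x ∂P - ∫ x, g x * h' x ∂P| ≤ ε / 3 := by
    intro g hg hb
    have i1 : Integrable (fun x => g x * h x) P :=
      hh.bdd_mul (c := C) hg.aestronglyMeasurable (Eventually.of_forall hb)
    have i2 : Integrable (fun x => g x * h' x) P :=
      hi'.bdd_mul (c := C) hg.aestronglyMeasurable (Eventually.of_forall hb)
    rw [← integral_sub i1 i2]
    calc |∫ x, (g x * h x - g x * h' x) ∂P| ≤ ∫ x, |g x * h x - g x * h' x| ∂P :=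
          abs_integral_le_integral_abs
      _ ≤ ∫ x, (|C| + 1) * |h x - h' x| ∂P := by
          apply integral_mono (i1.sub i2).abs ((hh.sub hi').abs.const_mul _)
          intro x
          show |g x * h x - g x * h' x| ≤ (|C| + 1) * |h x - h' x|
          rw [← mul_sub, abs_mul]
          apply mul_le_mul_of_nonneg_right _ (abs_nonneg _)
          linarith [hb x, le_abs_self C]
      _ = (|C| + 1) * ∫ x, |h x - h' x| ∂P := integral_const_mul _ _
      _ ≤ (|C| + 1) * (ε / (3 * (|C| + 1))) := by gcongr
      _ = ε / 3 := by field_simp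
  have h1 := abs_le.1 (key (f n) (hf n) (hfb n))
  have h2 := abs_le.1 (key w hw hwb)
  have h3 := hN n hn
  rw [Real.dist_eq, abs_lt] at h3 ⊢
  have hN' := hN n hn
  constructor
  · by_contra hc
    linarith [h1.1, h1.2, h2.1, h2.2, h3.1, h3.2]
  · by_contra hc
    linarith [h1.1, h1.2, h2.1, h2.2, h3.1, h3.2]

lemma weak_mazur (f : ℕ → Ω → ℝ) (C : ℝ) (hC : 0 ≤ C) (hf : ∀ n, Measurable (f n))
    (hfb : ∀ n x, |f n x| ≤ C) :
    ∃ (σ : ℕ → ℕ) (w : Ω → ℝ), StrictMono σ ∧ Measurable w ∧ (∀ x, |w x| ≤ C) ∧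
      (∀ h : Ω → ℝ, Integrable h P →
        Tendsto (fun n => ∫ x, f (σ n) x * h x ∂P) atTop (nhds (∫ x, w x * h x ∂P))) ∧
      ∃ (L : ℕ → ℕ) (c : ∀ N, Fin (L N) → ℝ) (t : ∀ N, Fin (L N) → ℕ),
        (∀ N i, 0 ≤ c N i) ∧ (∀ N, ∑ i, c N i = 1) ∧ (∀ N i, N ≤ t N i) ∧
        ∀ᵐ x ∂P, Tendsto (fun N => ∑ i, c N i * f (σ (t N i)) x) atTop (nhds (w x)) := by
  have hmem : ∀ n, MemLp (f n) 2 P := fun n =>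
    MemLp.of_bound (hf n).aestronglyMeasurable C (Eventually.of_forall (hfb n))
  let F : ℕ → Lp ℝ 2 P := fun n => (hmem n).toLp (f n)
  have hFb : ∀ n, ‖F n‖ ≤ (measureUnivNNReal P : ℝ) ^ (2:ENNReal).toReal⁻¹ * C := by
    intro n
    apply Lp.norm_le_of_ae_bound hC
    filter_upwards [(hmem n).coeFn_toLp] with x hx
    rw [hx]
    exact hfb n x
  obtain ⟨σ, W, hσ, hW⟩ := weak_seq_compact F _ hFb
  have hm := fun N : ℕ => mazur (fun n => F (σ n)) W hW N (1 / (N + 1 : ℝ)) (by positivity)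
  choose L c t hc0 hc1 ht hd using hm
  have hlim : Tendsto (fun N => ∑ i, c N i • F (σ (t N i))) atTop (nhds W) := by
    rw [tendsto_iff_norm_sub_tendsto_zero]
    exact squeeze_zero (fun _ => norm_nonneg _) (fun N => (hd N).le)
      tendsto_one_div_add_atTop_nhds_zero_nat
  obtain ⟨ns, hns, hae⟩ := (tendstoInMeasure_of_tendsto_Lp hlim).exists_seq_tendsto_ae
  have hcoe : ∀ᵐ x ∂P, ∀ N, (∑ i, c N i • F (σ (t N i)) : Lp ℝ 2 P) x =
      ∑ i, c N i * f (σ (t N i)) x := by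
    rw [ae_all_iff]
    intro N
    have h1 : (∑ i, c N i • F (σ (t N i)) : Lp ℝ 2 P) =
        MemLp.toLp (fun x => ∑ i, c N i * f (σ (t N i)) x)
          (memLp_finsetSum _ fun i _ => (hmem _).const_mul _) := by
      have : ∀ i, c N i • F (σ (t N i)) = MemLp.toLp (fun x => c N i * f (σ (t N i)) x)
          ((hmem _).const_mul _) := fun i => rfl
      simp_rw [this]
      ext1
      refine (Lp.coeFn_finsetSum _ _).trans ?_
      have h2 : ∀ᵐ x ∂P, ∀ i, (MemLp.toLp (fun x => c N i * f (σ (t N i)) x)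
          ((hmem _).const_mul _) : Lp ℝ 2 P) x = c N i * f (σ (t N i)) x := by
        rw [ae_all_iff]
        intro i
        exact MemLp.coeFn_toLp _
      refine EventuallyEq.trans ?_ (MemLp.coeFn_toLp _).symm
      filter_upwards [h2] with x hx
      simp only [Finset.sum_apply]
      exact Finset.sum_congr rfl fun i _ => hx i
    rw [h1]
    exact MemLp.coeFn_toLp _
  let w : Ω → ℝ := fun x => max (-C) (min (W x) C)
  have hwm : Measurable w :=
    measurable_const.max ((Lp.stronglyMeasurable W).measurable.min measurable_const)
  have hwb : ∀ x, |w x| ≤ C := fun x =>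
    abs_le.2 ⟨le_max_left _ _, max_le (by linarith) (min_le_right _ _)⟩
  have hae2 : ∀ᵐ x ∂P, Tendsto (fun N => ∑ i, c (ns N) i * f (σ (t (ns N) i)) x) atTop
      (nhds (W x)) := by
    filter_upwards [hae, hcoe] with x h1 h2
    exact h1.congr fun N => h2 (ns N)
  have hwW : ∀ᵐ x ∂P, w x = W x := by
    filter_upwards [hae2] with x hx
    have hb : |W x| ≤ C := le_of_tendsto hx.abs (Eventually.of_forall fun N =>
      abs_le_of_wt _ _ _ (fun i _ => hc0 _ i) (hc1 _) (fun i => hfb _ x))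
    have := abs_le.1 hb
    simp only [w]
    rw [min_eq_left this.2, max_eq_right this.1]
  refine ⟨σ, w, hσ, hwm, hwb, ?_, fun N => L (ns N), fun N => c (ns N), fun N => t (ns N),
    fun N => hc0 _, fun N => hc1 _, fun N i => (hns.id_le N).trans (ht _ i), ?_⟩
  · apply tendsto_test_L1 _ _ C (fun n => hf _) hwm (fun n => hfb _) hwb
    rintro h hhm ⟨B, hB⟩
    have hhL : MemLp h 2 P :=
      MemLp.of_bound hhm.aestronglyMeasurable B (Eventually.of_forall hB)
    have h1 := hW (hhL.toLp h)
    have e1 : inner ℝ W (hhL.toLp h) = ∫ x, w x * h x ∂P := by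
      rw [L2.inner_def]
      apply integral_congr_ae
      filter_upwards [hwW, hhL.coeFn_toLp] with x h1 h2
      rw [h1, h2]; simp [mul_comm]
    rw [e1] at h1
    refine h1.congr fun n => ?_
    rw [L2.inner_def]
    apply integral_congr_ae
    filter_upwards [(hmem (σ n)).coeFn_toLp, hhL.coeFn_toLp] with x h1 h2
    rw [h2]; simp only [F]; rw [h1]; simp [mul_comm]
  · filter_upwards [hae2, hwW] with x h1 h2
    rw [h2]; exact h1

lemma integral_prod_count_single {m : ℕ} (P : Measure Ω) [IsFiniteMeasure P]
    (F : Fin m → Ω → ℝ) (h : Ω → ℝ) (i : Fin m)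
    (hF : Integrable (fun x => F i x * h x) P) :
    ∫ p, F p.2 p.1 * ({p : Ω × Fin m | p.2 = i}.indicator (fun p => h p.1) p)
      ∂(P.prod (Measure.count : Measure (Fin m))) = ∫ x, F i x * h x ∂P := by
  have hset : MeasurableSet {p : Ω × Fin m | p.2 = i} := measurable_snd (measurableSet_singleton i)
  have he : (fun p : Ω × Fin m => F p.2 p.1 * ({p : Ω × Fin m | p.2 = i}.indicator
      (fun p => h p.1) p)) =
      {p : Ω × Fin m | p.2 = i}.indicator (fun p => F i p.1 * h p.1) := by
    ext ⟨x, j⟩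
    by_cases hj : j = i
    · subst hj; simp
    · simp [hj]
  rw [he, integral_prod]
  · congr 1
    ext x
    rw [integral_count]
    simp [Set.indicator]
  · exact Integrable.indicator (hF.comp_fst (Measure.count : Measure (Fin m))) hset

lemma weak_mazur_vec {m : ℕ} (f : ℕ → Fin m → Ω → ℝ) (C : ℝ) (hC : 0 ≤ C)
    (hf : ∀ n i, Measurable (f n i)) (hfb : ∀ n i x, |f n i x| ≤ C) :
    ∃ (σ : ℕ → ℕ) (w : Fin m → Ω → ℝ), StrictMono σ ∧ (∀ i, Measurable (w i)) ∧
      (∀ i x, |w i x| ≤ C) ∧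
      (∀ i (h : Ω → ℝ), Integrable h P →
        Tendsto (fun n => ∫ x, f (σ n) i x * h x ∂P) atTop (nhds (∫ x, w i x * h x ∂P))) ∧
      ∃ (L : ℕ → ℕ) (c : ∀ N, Fin (L N) → ℝ) (t : ∀ N, Fin (L N) → ℕ),
        (∀ N k, 0 ≤ c N k) ∧ (∀ N, ∑ k, c N k = 1) ∧ (∀ N k, N ≤ t N k) ∧
        ∀ᵐ x ∂P, ∀ i, Tendsto (fun N => ∑ k, c N k * f (σ (t N k)) i x) atTop
          (nhds (w i x)) := by
  have hmeas : ∀ g : Fin m → Ω → ℝ, (∀ i, Measurable (g i)) →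
      Measurable fun p : Ω × Fin m => g p.2 p.1 := fun g hg =>
    measurable_from_prod_countable_left fun i => hg i
  obtain ⟨σ, w, hσ, hwm, hwb, htest, L, c, t, hc0, hc1, ht, hae⟩ :=
    weak_mazur (P := P.prod (Measure.count : Measure (Fin m)))
      (fun n p => f n p.2 p.1) C hC (fun n => hmeas _ (hf n)) (fun n p => hfb n p.2 p.1)
  refine ⟨σ, fun i x => w (x, i), hσ, fun i => hwm.comp measurable_prodMk_right,
    fun i x => hwb _, fun i h hh => ?_, L, c, t, hc0, hc1, ht, ?_⟩
  · have hset : MeasurableSet {p : Ω × Fin m | p.2 = i} :=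
      measurable_snd (measurableSet_singleton i)
    have h1 := htest ({p : Ω × Fin m | p.2 = i}.indicator (fun p => h p.1))
      (Integrable.indicator (hh.comp_fst (Measure.count : Measure (Fin m))) hset)
    have hbi : ∀ g : Ω → ℝ, Measurable g → (∀ x, |g x| ≤ C) →
        Integrable (fun x => g x * h x) P := fun g hg hb =>
      hh.bdd_mul (c := C) hg.aestronglyMeasurable (Eventually.of_forall hb)
    have e1 := integral_prod_count_single P (fun i x => w (x, i)) h i
      (hbi _ (hwm.comp measurable_prodMk_right) (fun x => hwb _))
    have e2 := fun n => integral_prod_count_single P (fun i x => f n i x) h i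
      (hbi _ (hf n i) (hfb n i))
    simp only [Prod.mk.eta] at e1
    rw [e1] at h1
    exact h1.congr fun n => e2 (σ n)
  · have h1 := Measure.ae_ae_of_ae_prod hae
    filter_upwards [h1] with x hx i
    rw [ae_iff, Measure.count_eq_zero_iff] at hx
    by_contra hc
    have : i ∈ (∅ : Set (Fin m)) := hx ▸ hc
    exact this

end Weak
end SMPE

namespace SMPE

section CountGen
variable {S : Type*} [mS : MeasurableSpace S] {T : Type*} [MeasurableSpace T]

lemma gen_mono {B B' : ℕ → Set S} (h : ∀ k, ∃ l, B k = B' l) :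
    MeasurableSpace.generateFrom (Set.range B) ≤ MeasurableSpace.generateFrom (Set.range B') := by
  apply MeasurableSpace.generateFrom_mono
  rintro _ ⟨k, rfl⟩
  obtain ⟨l, hl⟩ := h k
  exact ⟨l, hl.symm⟩

/-- merging countably many countable families -/
lemma exists_merge (B : ℕ → ℕ → Set S) (hB : ∀ n k, MeasurableSet (B n k)) :
    ∃ B' : ℕ → Set S, (∀ k, MeasurableSet (B' k)) ∧
      ∀ n, MeasurableSpace.generateFrom (Set.range (B n)) ≤
        MeasurableSpace.generateFrom (Set.range B') :=
  ⟨fun k => B k.unpair.1 k.unpair.2, fun k => hB _ _, fun n => gen_mono fun k =>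
    ⟨Nat.pair n k, by simp⟩⟩

lemma exists_sections (E : Set (S × T)) (hE : MeasurableSet E) :
    ∃ B : ℕ → Set S, (∀ k, MeasurableSet (B k)) ∧
      ∀ t, MeasurableSet[MeasurableSpace.generateFrom (Set.range B)] {s | (s, t) ∈ E} := by
  rw [← generateFrom_prod] at hE
  induction E, hE using MeasurableSpace.generateFrom_induction with
  | hC E hE _ =>
    obtain ⟨A, hA, D, hD, rfl⟩ := hE
    refine ⟨fun _ => A, fun _ => hA, fun t => ?_⟩
    by_cases ht : t ∈ D
    · have : {s | (s, t) ∈ A ×ˢ D} = A := by ext; simp [ht]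
      rw [this]
      exact MeasurableSpace.measurableSet_generateFrom ⟨0, rfl⟩
    · have : {s | (s, t) ∈ A ×ˢ D} = ∅ := by ext; simp [ht]
      rw [this]
      exact @MeasurableSet.empty _ (_)
  | empty => exact ⟨fun _ => ∅, fun _ => MeasurableSet.empty, fun t => @MeasurableSet.empty _ (_)⟩
  | compl E _ ih =>
    obtain ⟨B, hB, h⟩ := ih
    exact ⟨B, hB, fun t => (h t).compl⟩
  | iUnion E _ ih =>
    choose B hB h using ih
    obtain ⟨B', hB', hle⟩ := exists_merge B hB
    refine ⟨B', hB', fun t => ?_⟩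
    have : {s | (s, t) ∈ ⋃ n, E n} = ⋃ n, {s | (s, t) ∈ E n} := by ext; simp
    rw [this]
    exact MeasurableSet.iUnion fun n => hle n _ (h n t)

lemma exists_sections_fun (F : S × T → ℝ) (hF : Measurable F) :
    ∃ B : ℕ → Set S, (∀ k, MeasurableSet (B k)) ∧
      ∀ t, Measurable[MeasurableSpace.generateFrom (Set.range B)] fun s => F (s, t) := by
  have h := fun r : ℚ => exists_sections {p | F p < r} (measurableSet_lt hF measurable_const)
  choose B hB h using h
  obtain ⟨e, he⟩ := exists_surjective_nat ℚ
  obtain ⟨B', hB', hle⟩ := exists_merge (fun n => B (e n)) (fun n => hB (e n))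
  refine ⟨B', hB', fun t => ?_⟩
  refine @measurable_of_Iio _ _ _ _ _ (MeasurableSpace.generateFrom (Set.range B')) _ _ _ _ ?_
  intro a
  have : (fun s => F (s, t)) ⁻¹' Set.Iio a = ⋃ r : ℚ, ⋃ (_ : (r:ℝ) < a), {s | F (s, t) < r} := by
    ext s
    simp only [Set.mem_preimage, Set.mem_Iio, Set.mem_iUnion, Set.mem_ofPred_eq, exists_prop]
    constructor
    · intro h
      obtain ⟨r, h1, h2⟩ := exists_rat_btwn h
      exact ⟨r, h2, h1⟩
    · rintro ⟨r, h1, h2⟩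
      exact h2.trans h1
  rw [this]
  refine MeasurableSet.iUnion fun r => MeasurableSet.iUnion fun _ => ?_
  obtain ⟨n, rfl⟩ := he r
  exact hle n _ (h (e n) t)

/-- all densities are measurable, up to null sets, for one countably generated σ-algebra -/
lemma exists_countgen {lam : Measure S} [IsFiniteMeasure lam] (S₁ S₂ : Set S)
    (hS₁ : MeasurableSet S₁)
    (h_union : S₁ ∪ S₂ = Set.univ)
    (hS₂_cnt : S₂.Countable) (hS₂_sing : ∀ s ∈ S₂, MeasurableSet ({s} : Set S))
    (q : T → S → ℝ) {J : ℕ} (qj : Fin J → S × T → ℝ) (rho : Fin J → S → ℝ)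
    (hqj_meas : ∀ j, Measurable (qj j))
    (hrho_int : ∀ j, Integrable (rho j) (lam.restrict S₁))
    (hq_decomp : ∀ t, ∀ s₁ ∈ S₁, q t s₁ = ∑ j, qj j (s₁, t) * rho j s₁) :
    ∃ B : ℕ → Set S, (∀ k, MeasurableSet (B k)) ∧ ∀ t, ∃ q' : S → ℝ,
      Measurable[MeasurableSpace.generateFrom (Set.range B)] q' ∧ q t =ᵐ[lam] q' := by
  classical
  have h1 := fun j => exists_sections_fun (qj j) (hqj_meas j)
  choose B1 hB1 hm1 using h1
  let rho' : Fin J → S → ℝ := fun j => (hrho_int j).1.mk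
  have hrho'm : ∀ j, Measurable (rho' j) := fun j =>
    (hrho_int j).1.stronglyMeasurable_mk.measurable
  have hrho'e : ∀ j, rho j =ᵐ[lam.restrict S₁] rho' j := fun j => (hrho_int j).1.ae_eq_mk
  have h2 := fun j => exists_sections_fun (S := S) (T := Unit) (fun p => rho' j p.1)
    ((hrho'm j).comp measurable_fst)
  choose B2 hB2 hm2 using h2
  obtain ⟨e, he⟩ : ∃ e : ℕ → Set S, Set.range e = insert S₁ ((fun s => {s}) '' S₂) := by
    obtain ⟨e, he⟩ := ((hS₂_cnt.image (fun s => ({s} : Set S))).insert S₁).exists_eq_range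
      (Set.insert_nonempty _ _)
    exact ⟨e, he.symm⟩
  have hem : ∀ k, MeasurableSet (e k) := by
    intro k
    have : e k ∈ insert S₁ ((fun s => ({s} : Set S)) '' S₂) := he ▸ Set.mem_range_self k
    rcases this with h | ⟨s, hs, h⟩
    · rw [h]; exact hS₁
    · rw [← h]; exact hS₂_sing s hs
  obtain ⟨B, hB, hle⟩ := exists_merge
    (fun n => if h : n < J then B1 ⟨n, h⟩ else if h : n - J < J then B2 ⟨n - J, h⟩ else e) (by
      intro n k
      split_ifs
      · exact hB1 _ _
      · exact hB2 _ _
      · exact hem _)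
  have l1 : ∀ j, MeasurableSpace.generateFrom (Set.range (B1 j)) ≤
      MeasurableSpace.generateFrom (Set.range B) := by
    intro j
    have := hle j
    simpa using this
  have l2 : ∀ j, MeasurableSpace.generateFrom (Set.range (B2 j)) ≤
      MeasurableSpace.generateFrom (Set.range B) := by
    intro j
    have := hle (j + J)
    simpa using this
  have l3 : MeasurableSpace.generateFrom (Set.range e) ≤
      MeasurableSpace.generateFrom (Set.range B) := by
    have := hle (J + J)
    simpa using this
  have m1 : MeasurableSet[MeasurableSpace.generateFrom (Set.range B)] S₁ := by
    apply l3
    apply MeasurableSpace.measurableSet_generateFrom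
    rw [he]; exact Set.mem_insert _ _
  have m2 : ∀ s ∈ S₂, MeasurableSet[MeasurableSpace.generateFrom (Set.range B)] ({s} : Set S) := by
    intro s hs
    apply l3
    apply MeasurableSpace.measurableSet_generateFrom
    rw [he]; exact Set.mem_insert_of_mem _ ⟨s, hs, rfl⟩
  refine ⟨B, hB, fun t => ⟨S₁.piecewise (fun s => ∑ j, qj j (s, t) * rho' j s) (q t), ?_, ?_⟩⟩
  · intro D hD
    rw [Set.piecewise_preimage, Set.ite]
    refine @MeasurableSet.union _ (_) _ _ ?_ ?_
    · have : Measurable[MeasurableSpace.generateFrom (Set.range B)]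
          (fun s => ∑ j, qj j (s, t) * rho' j s) := by
        refine @Finset.measurable_sum _ _ _ _ _ _ (_) _ _ fun j _ => ?_
        exact @Measurable.mul _ _ _ _ _ (_) _ _ ((hm1 j t).mono (l1 j) le_rfl)
          ((hm2 j ()).mono (l2 j) le_rfl)
      exact @MeasurableSet.inter _ (_) _ _ (this hD) m1
    · have hsub : q t ⁻¹' D \ S₁ ⊆ S₂ := by
        intro s hs
        have : s ∈ S₁ ∪ S₂ := h_union ▸ Set.mem_univ s
        exact this.resolve_left hs.2
      rw [← Set.biUnion_of_singleton (q t ⁻¹' D \ S₁)]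
      exact @MeasurableSet.biUnion _ _ (_) _ _ (hS₂_cnt.mono hsub) fun s hs => m2 s (hsub hs)
  · have : ∀ᵐ s ∂lam, s ∈ S₁ → ∀ j, rho j s = rho' j s := by
      have h3 : ∀ᵐ s ∂(lam.restrict S₁), ∀ j, rho j s = rho' j s := ae_all_iff.2 hrho'e
      exact (ae_restrict_iff' hS₁).1 h3
    filter_upwards [this] with s hs
    by_cases h : s ∈ S₁
    · rw [Set.piecewise_eq_of_mem _ _ _ h, hq_decomp t s h]
      exact Finset.sum_congr rfl fun j _ => by rw [hs h j]
    · rw [Set.piecewise_eq_of_notMem _ _ _ h]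

end CountGen

section Martingale
variable {S : Type*} [mS : MeasurableSpace S]

/-- the finite partition map -/
def pim (B : ℕ → Set S) (n : ℕ) : S → (Fin n → Prop) := fun s k => s ∈ B k

lemma measurable_pim (B : ℕ → Set S) (hB : ∀ k, MeasurableSet (B k)) (n : ℕ) :
    Measurable (pim B n) := by
  rw [measurable_pi_iff]
  intro k
  exact measurableSet_setOfPred.1 (hB k)

/-- the filtration generated by the partitions -/
def pfilt (B : ℕ → Set S) (hB : ∀ k, MeasurableSet (B k)) : Filtration ℕ mS where
  seq n := MeasurableSpace.comap (pim B n) inferInstance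
  mono' := by
    intro a b hab
    rintro _ ⟨D, hD, rfl⟩
    refine ⟨(fun (x : Fin b → Prop) (k : Fin a) => x (Fin.castLE hab k)) ⁻¹' D, ?_, rfl⟩
    exact (measurable_pi_lambda _ fun k => measurable_pi_apply _) hD
  le' n := (measurable_pim B hB n).comap_le

lemma gen_le_pfilt (B : ℕ → Set S) (hB : ∀ k, MeasurableSet (B k)) :
    MeasurableSpace.generateFrom (Set.range B) ≤ ⨆ n, pfilt B hB n := by
  apply MeasurableSpace.generateFrom_le
  rintro _ ⟨k, rfl⟩
  have h : MeasurableSet[pfilt B hB (k+1)] (B k) := by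
    refine ⟨{x | x (Fin.last k)}, ?_, ?_⟩
    · exact measurableSet_setOfPred.2 (measurable_pi_apply _)
    · ext s; simp [pim]
  exact (le_iSup (fun n => pfilt B hB n) (k+1)) _ h

lemma tendsto_condExp_L1 {lam : Measure S} [IsFiniteMeasure lam] (B : ℕ → Set S)
    (hB : ∀ k, MeasurableSet (B k)) (q q' : S → ℝ) (hq : Integrable q lam)
    (hq' : Measurable[MeasurableSpace.generateFrom (Set.range B)] q') (he : q =ᵐ[lam] q') :
    Tendsto (fun n => ∫ s, |(lam[q|pfilt B hB n]) s - q s| ∂lam) atTop (nhds 0) := by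
  have hi' : Integrable q' lam := hq.congr he
  have h1 := hi'.tendsto_eLpNorm_condExp (ℱ := pfilt B hB)
    ((hq'.mono (gen_le_pfilt B hB) le_rfl).stronglyMeasurable)
  have h2 := (ENNReal.tendsto_toReal ENNReal.zero_ne_top).comp h1
  refine h2.congr fun n => ?_
  have hi : Integrable (lam[q'|pfilt B hB n] - q') lam := integrable_condExp.sub hi'
  rw [Function.comp_apply, eLpNorm_one_eq_lintegral_enorm,
    ← ofReal_integral_norm_eq_lintegral_enorm hi, ENNReal.toReal_ofReal
      (integral_nonneg fun _ => norm_nonneg _)]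
  apply integral_congr_ae
  filter_upwards [condExp_congr_ae (m := pfilt B hB n) he, he] with s h3 h4
  rw [h3, h4]
  rfl

end Martingale

/-- comparison of `v` with its cell averages -/
lemma avg_compare {S : Type*} {F mS : MeasurableSpace S} {lam : Measure S} [IsFiniteMeasure lam] (hF : F ≤ mS)
    (v y q : S → ℝ) (C : ℝ) (hv : Measurable v) (hvb : ∀ s, |v s| ≤ C)
    (hy : Measurable[F] y) (hyb : ∀ s, |y s| ≤ C)
    (havg : ∀ D, MeasurableSet[F] D → ∫ s in D, y s ∂lam = ∫ s in D, v s ∂lam)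
    (hq : Integrable q lam) :
    |∫ s, y s * q s ∂lam - ∫ s, v s * q s ∂lam| ≤ C * ∫ s, |(lam[q|F]) s - q s| ∂lam := by
  have hvi : Integrable v lam := Integrable.of_bound hv.aestronglyMeasurable C
    (Eventually.of_forall hvb)
  have hyi : Integrable y lam := Integrable.of_bound (hy.mono hF le_rfl).aestronglyMeasurable C
    (Eventually.of_forall hyb)
  have hye : y =ᵐ[lam] lam[v|F] := ae_eq_condExp_of_forall_setIntegral_eq hF hvi
    (fun D _ _ => hyi.integrableOn) (fun D hD _ => havg D hD)
    hy.stronglyMeasurable.aestronglyMeasurable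
  have hyq : Integrable (y * q) lam := hq.bdd_mul (c := C)
    (hy.mono hF le_rfl).aestronglyMeasurable (Eventually.of_forall hyb)
  have hvq : Integrable (fun s => v s * q s) lam := hq.bdd_mul (c := C)
    hv.aestronglyMeasurable (Eventually.of_forall hvb)
  have hvq' : Integrable (v * lam[q|F]) lam := integrable_condExp.bdd_mul (c := C)
    hv.aestronglyMeasurable (Eventually.of_forall hvb)
  have e1 : ∫ s, y s * q s ∂lam = ∫ s, y s * (lam[q|F]) s ∂lam := by
    have := condExp_mul_of_stronglyMeasurable_left (m := F) hy.stronglyMeasurable hyq hq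
    calc ∫ s, y s * q s ∂lam = ∫ s, (lam[y * q|F]) s ∂lam := (integral_condExp hF).symm
      _ = _ := integral_congr_ae this
  have e2 : ∫ s, v s * (lam[q|F]) s ∂lam = ∫ s, y s * (lam[q|F]) s ∂lam := by
    have := condExp_mul_of_stronglyMeasurable_right (m := F) (f := v) (g := lam[q|F])
      stronglyMeasurable_condExp hvq' hvi
    calc ∫ s, v s * (lam[q|F]) s ∂lam = ∫ s, (lam[v * lam[q|F]|F]) s ∂lam :=
          (integral_condExp hF).symm
      _ = ∫ s, (lam[v|F]) s * (lam[q|F]) s ∂lam := integral_congr_ae this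
      _ = _ := by
        apply integral_congr_ae
        filter_upwards [hye] with s hs
        rw [hs]
  have hvq2 : Integrable (fun s => v s * (lam[q|F]) s) lam := hvq'
  rw [e1, ← e2, ← integral_sub hvq2 hvq, ← integral_const_mul]
  calc _ ≤ ∫ s, |v s * (lam[q|F]) s - v s * q s| ∂lam := abs_integral_le_integral_abs
    _ ≤ _ := by
      apply integral_mono (hvq'.sub hvq).abs ((integrable_condExp.sub hq).abs.const_mul C)
      intro s
      show |v s * (lam[q|F]) s - v s * q s| ≤ C * |(lam[q|F]) s - q s|
      rw [← mul_sub, abs_mul]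
      exact mul_le_mul_of_nonneg_right (hvb s) (abs_nonneg _)

end SMPE

namespace SMPE

lemma integral_fin {S : Type*} [MeasurableSpace S] {T : Type*} [Fintype T] (c : S → T)
    (hc : ∀ t, MeasurableSet (c ⁻¹' {t})) (μ : Measure S) [IsFiniteMeasure μ] (h : T → ℝ) :
    ∫ s, h (c s) ∂μ = ∑ t, μ.real (c ⁻¹' {t}) * h t := by
  let : MeasurableSpace T := ⊤
  have hcm : Measurable c := measurable_to_countable' hc
  rw [← integral_map (f := h) hcm.aemeasurable (by fun_prop), integral_fintype (by simp)]
  refine Finset.sum_congr rfl fun t _ => ?_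
  rw [smul_eq_mul, map_measureReal_apply hcm (measurableSet_singleton t)]

lemma quantize {S : Type*} [MeasurableSpace S] {I : Type} [Finite I] (r : S → I → ℝ)
    (hr : ∀ j, Measurable fun s => r s j) (M : ℝ) (hb : ∀ s j, |r s j| ≤ M) (η : ℝ) (hη : 0 < η) :
    ∃ (T : Type) (_ : Fintype T) (c : S → T) (rep : T → S), (∀ t, MeasurableSet (c ⁻¹' {t})) ∧
      ∀ s j, |r (rep (c s)) j - r s j| < η := by
  classical
  have : Fintype I := Fintype.ofFinite I
  let code : S → I → ℤ := fun s j => ⌊r s j / η⌋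
  have hfin : (Set.range code).Finite := by
    apply (Set.Finite.pi' (fun _ : I => Set.finite_Icc ⌊-M/η⌋ ⌊M/η⌋)).subset
    rintro _ ⟨s, rfl⟩ j
    obtain ⟨h1, h2⟩ := abs_le.1 (hb s j)
    exact ⟨Int.floor_mono (by gcongr), Int.floor_mono (by gcongr)⟩
  refine ⟨Set.range code, hfin.fintype, fun s => ⟨code s, s, rfl⟩, fun t => t.2.choose, ?_, ?_⟩
  · intro t
    have : (fun s => (⟨code s, s, rfl⟩ : Set.range code)) ⁻¹' {t}
        = ⋂ j, (fun s => ⌊r s j / η⌋) ⁻¹' {t.1 j} := by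
      ext s
      simp only [Set.mem_preimage, Set.mem_singleton_iff, Set.mem_iInter, Subtype.ext_iff,
        funext_iff]
      rfl
    rw [this]
    refine MeasurableSet.iInter fun j => ?_
    exact (Int.measurable_floor.comp ((hr j).div_const η)) (measurableSet_singleton _)
  · intro s j
    have h1 : code (⟨code s, s, rfl⟩ : Set.range code).2.choose = code s :=
      (⟨code s, s, rfl⟩ : Set.range code).2.choose_spec
    have h2 := Int.abs_sub_lt_one_of_floor_eq_floor (congrFun h1 j)
    rw [← sub_div, abs_div, abs_of_pos hη, div_lt_one hη] at h2
    exact h2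

section fm
variable {m K : ℕ} {X : Fin m → Type*} [∀ i, MeasurableSpace (X i)]
  [∀ i, MeasurableSingletonClass (X i)]

/-- finitely supported measure -/
noncomputable def fm {Y : Type*} [MeasurableSpace Y] {K : ℕ} (p : Fin K → ℝ) (g : Fin K → Y) :
    Measure Y := ∑ a, ENNReal.ofReal (p a) • Measure.dirac (g a)

lemma fm_prob {Y : Type*} [MeasurableSpace Y] {K : ℕ} (p : Fin K → ℝ) (g : Fin K → Y)
    (h0 : ∀ a, 0 ≤ p a) (h1 : ∑ a, p a = 1) : IsProbabilityMeasure (fm p g) := by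
  constructor
  simp only [fm, Measure.coe_finsetSum, Finset.sum_apply, Measure.smul_apply, measure_univ,
    smul_eq_mul, mul_one]
  rw [← ENNReal.ofReal_sum_of_nonneg (fun a _ => h0 a), h1, ENNReal.ofReal_one]

lemma integral_fm {Y : Type*} [MeasurableSpace Y] [MeasurableSingletonClass Y] {K : ℕ}
    (p : Fin K → ℝ) (g : Fin K → Y) (h0 : ∀ a, 0 ≤ p a) (h : Y → ℝ) :
    ∫ x, h x ∂(fm p g) = ∑ a, p a * h (g a) := by
  rw [fm, integral_finsetSum_measure]
  · refine Finset.sum_congr rfl fun a _ => ?_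
    rw [integral_smul_measure, integral_dirac, ENNReal.toReal_ofReal (h0 a), smul_eq_mul]
  · intro a _
    exact (integrable_dirac (by simp)).smul_measure ENNReal.ofReal_ne_top

lemma integral_pi_fm (p : Fin m → Fin K → ℝ) (g : ∀ i, Fin K → X i) (h0 : ∀ i a, 0 ≤ p i a)
    (h1 : ∀ i, ∑ a, p i a = 1) (h : (∀ i, X i) → ℝ) :
    ∫ x, h x ∂(Measure.pi fun i => fm (p i) (g i)) =
      ∑ b : Fin m → Fin K, (∏ j, p j (b j)) * h (fun j => g j (b j)) := by
  classical
  have := fun i => fm_prob (p i) (g i) (h0 i) (h1 i)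
  have key : (Measure.pi fun i => fm (p i) (g i)) = ∑ b : Fin m → Fin K,
      ENNReal.ofReal (∏ j, p j (b j)) • Measure.dirac (fun j => g j (b j)) := by
    apply Measure.pi_eq
    intro s hs
    simp only [fm, Measure.coe_finsetSum, Finset.sum_apply, Measure.smul_apply, smul_eq_mul]
    rw [Finset.prod_univ_sum, Fintype.piFinset_univ]
    refine Finset.sum_congr rfl fun b _ => ?_
    rw [Finset.prod_mul_distrib, ENNReal.ofReal_prod_of_nonneg (fun j _ => h0 j _),
      Measure.dirac_apply' _ (MeasurableSet.univ_pi hs)]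
    congr 1
    simp only [Measure.dirac_apply' _ (hs _)]
    by_cases hb : ∀ i, g i (b i) ∈ s i
    · rw [Set.indicator_of_mem (by simpa using hb)]
      symm
      apply Finset.prod_eq_one
      intro i _
      rw [Set.indicator_of_mem (hb i)]; rfl
    · rw [Set.indicator_of_notMem (by simpa using hb)]
      push Not at hb
      obtain ⟨i, hi⟩ := hb
      exact (Finset.prod_eq_zero (Finset.mem_univ i) (Set.indicator_of_notMem hi _)).symm
  rw [key, integral_finsetSum_measure]
  · refine Finset.sum_congr rfl fun a _ => ?_
    rw [integral_smul_measure, integral_dirac, ENNReal.toReal_ofReal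
      (Finset.prod_nonneg fun j _ => h0 j _), smul_eq_mul]
  · intro a _
    exact (integrable_dirac (by simp)).smul_measure ENNReal.ofReal_ne_top
end fm

lemma exists_grid {m : ℕ} (X : Fin m → Type*) [∀ i, MetricSpace (X i)] [∀ i, CompactSpace (X i)]
    [∀ i, Nonempty (X i)] (ε : ℝ) (hε : 0 < ε) :
    ∃ (K : ℕ) (g : ∀ i, Fin K → X i), ∀ i x, ∃ a, dist x (g i a) < ε := by
  have h : ∀ i, ∃ N : ℕ, ∀ x : X i, ∃ k < N, dist x (TopologicalSpace.denseSeq (X i) k) < ε := by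
    intro i
    obtain ⟨N, hN⟩ := isCompact_univ.elim_directed_cover
      (fun N : ℕ => ⋃ k ∈ Finset.range N, Metric.ball (TopologicalSpace.denseSeq (X i) k) ε)
      (fun N => isOpen_biUnion fun k _ => Metric.isOpen_ball) (by
        intro x _
        obtain ⟨k, hy⟩ := (TopologicalSpace.denseRange_denseSeq (X i)).exists_dist_lt x hε
        simp only [Set.mem_iUnion]
        exact ⟨k + 1, k, by simp, hy⟩) (by
        intro a b
        refine ⟨max a b, ?_, ?_⟩ <;>
        · apply Set.biUnion_subset_biUnion_left
          intro k hk
          simp only [Finset.coe_range, Set.mem_Iio] at *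
          simp_all)
    refine ⟨N, fun x => ?_⟩
    have := hN (Set.mem_univ x)
    simp only [Set.mem_iUnion, Finset.mem_range] at this
    obtain ⟨k, hk, hx⟩ := this
    exact ⟨k, hk, hx⟩
  choose N hN using h
  refine ⟨Finset.univ.sup N, fun i a => TopologicalSpace.denseSeq (X i) a, fun i x => ?_⟩
  obtain ⟨k, hk, hx⟩ := hN i x
  exact ⟨⟨k, hk.trans_le (Finset.le_sup (Finset.mem_univ i))⟩, hx⟩

end SMPE

namespace SMPE

lemma sum_wt_sub_le {ι : Type*} [Fintype ι] (w a b : ι → ℝ) (hw : ∀ k, 0 ≤ w k)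
    (h1 : ∑ k, w k = 1) (δ : ℝ) (h : ∀ k, |a k - b k| ≤ δ) :
    |∑ k, w k * a k - ∑ k, w k * b k| ≤ δ := by
  rw [← Finset.sum_sub_distrib]
  calc _ ≤ ∑ k, |w k * a k - w k * b k| := Finset.abs_sum_le_sum_abs _ _
    _ ≤ ∑ k, w k * δ := by
      refine Finset.sum_le_sum fun k _ => ?_
      rw [← mul_sub, abs_mul, abs_of_nonneg (hw k)]
      exact mul_le_mul_of_nonneg_left (h k) (hw k)
    _ = δ := by rw [← Finset.sum_mul, h1, one_mul]

theorem stage {m : ℕ} {S : Type*} [mS : MeasurableSpace S]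
    (lam : Measure S) [IsProbabilityMeasure lam]
    (X : Fin m → Type*) [∀ i, MetricSpace (X i)] [∀ i, CompactSpace (X i)]
    [∀ i, Nonempty (X i)] [∀ i, MeasurableSpace (X i)] [∀ i, BorelSpace (X i)]
    (A : ∀ i, S → Set (X i))
    (hA_ne : ∀ i s, (A i s).Nonempty)
    (hA_meas : ∀ i (U : Set (X i)), IsOpen U → MeasurableSet {s | (A i s ∩ U).Nonempty})
    (C : ℝ) (hC : 0 ≤ C) (u : Fin m → S → (∀ j, X j) → ℝ)
    (hu_bd : ∀ i s x, |u i s x| ≤ C)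
    (hu_meas : ∀ i x, Measurable fun s => u i s x)
    (β : Fin m → ℝ) (hβ : ∀ i, β i ∈ Set.Ico (0 : ℝ) 1)
    (Q : S → (∀ j, X j) → Measure S)
    (hQ_prob : ∀ s x, IsProbabilityMeasure (Q s x))
    (hQ_meas : ∀ x (E : Set S), MeasurableSet E → Measurable fun s => Q s x E)
    {D : Type} [Finite D] [MeasurableSpace D] [MeasurableSingletonClass D]
    (π : S → D) (hπ : Measurable π) (ε : ℝ) (hε : 0 < ε) :
    ∃ (T : Type) (_ : Finite T) (c : S → T) (V : Fin m → T → ℝ) (Y : Fin m → D → ℝ)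
      (f : T → ∀ i, ProbabilityMeasure (X i)),
      (∀ t, MeasurableSet (c ⁻¹' {t})) ∧ (∀ i t, |V i t| ≤ C) ∧ (∀ i d, |Y i d| ≤ C) ∧
      (∀ i (E : Set D), ∫ s in π ⁻¹' E, Y i (π s) ∂lam = ∫ s in π ⁻¹' E, V i (c s) ∂lam) ∧
      (∀ i s, |V i (c s) - ∫ x, ((1 - β i) * u i s x + β i * ∫ s₁, Y i (π s₁) ∂(Q s x))
        ∂(Measure.pi fun j => (f (c s) j : Measure (X j)))| ≤ ε) ∧
      (∀ i s, ∀ a ∈ A i s, ∃ a', dist a a' < ε ∧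
        ∫ x, ((1 - β i) * u i s (Function.update x i a')
          + β i * ∫ s₁, Y i (π s₁) ∂(Q s (Function.update x i a')))
        ∂(Measure.pi fun j => (f (c s) j : Measure (X j))) ≤ V i (c s) + ε) ∧
      (∀ i s, ∫ x, Metric.infDist x (A i s) ∂(f (c s) i : Measure (X i)) ≤ ε) := by
  classical
  have : Fintype D := Fintype.ofFinite D
  obtain ⟨K, g, hg⟩ := exists_grid X ε hε
  let gr : (Fin m → Fin K) → ∀ j, X j := fun b j => g j (b j)
  let fe : S → Fin m → Fin K → Prop := fun s i a => (A i s ∩ Metric.ball (g i a) ε).Nonempty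
  have hπd : ∀ d, MeasurableSet (π ⁻¹' {d}) := fun d => hπ (measurableSet_singleton d)
  let I := (Fin m × Fin K) ⊕ ((Fin m × (Fin m → Fin K)) ⊕ ((Fin m → Fin K) × D))
  let r : S → I → ℝ := fun s => Sum.elim (fun p => if fe s p.1 p.2 then 1 else 0)
    (Sum.elim (fun p => u p.1 s (gr p.2)) (fun p => (Q s (gr p.1)).real (π ⁻¹' {p.2})))
  let N : ℝ := Fintype.card D
  have hN : 0 ≤ N := Nat.cast_nonneg _
  let η : ℝ := min 1 (ε / (2 * (1 + N * C)))
  have hη : 0 < η := by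
    apply lt_min one_pos
    positivity
  have hη2 : η * (1 + N * C) ≤ ε / 2 := by
    have h1 : η ≤ ε / (2 * (1 + N * C)) := min_le_right _ _
    have h2 : 0 < 1 + N * C := by positivity
    calc η * (1 + N * C) ≤ ε / (2 * (1 + N * C)) * (1 + N * C) := by gcongr
      _ = ε / 2 := by field_simp
  obtain ⟨T, hT, c, rep, hc, hrep⟩ := quantize r (by
    rintro (p | p | p)
    · exact Measurable.ite (hA_meas _ _ Metric.isOpen_ball) measurable_const measurable_const
    · exact hu_meas _ _
    · exact (hQ_meas _ _ (hπd _)).ennreal_toReal) (max 1 C) (by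
    rintro s (p | p | p)
    · simp only [r, Sum.elim_inl]
      split_ifs <;> simp
    · exact (hu_bd _ _ _).trans (le_max_right _ _)
    · refine le_trans ?_ (le_max_left _ _)
      have := hQ_prob s (gr p.1)
      simp only [r, Sum.elim_inr]
      rw [abs_of_nonneg measureReal_nonneg]
      exact measureReal_le_one) η hη
  have hfe : ∀ s i a, fe (rep (c s)) i a ↔ fe s i a := by
    intro s i a
    have h1 := (hrep s (Sum.inl (i, a))).trans_le (min_le_left _ _)
    simp only [r, Sum.elim_inl] at h1
    by_cases h2 : fe (rep (c s)) i a <;> by_cases h3 : fe s i a <;> simp [h2, h3] at h1 ⊢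
  have hun : ∀ s i b, |u i (rep (c s)) (gr b) - u i s (gr b)| ≤ η := fun s i b =>
    (hrep s (Sum.inr (Sum.inl (i, b)))).le
  have hQn : ∀ s b d, |(Q (rep (c s)) (gr b)).real (π ⁻¹' {d}) - (Q s (gr b)).real (π ⁻¹' {d})|
    ≤ η := fun s b d => (hrep s (Sum.inr (Sum.inr (b, d)))).le
  obtain ⟨s0⟩ : Nonempty S := by
    by_contra h
    rw [not_nonempty_iff] at h
    have := measure_univ (μ := lam)
    rw [Set.univ_eq_empty_iff.2 h] at this
    simp at this
  let ld : D → ℝ := fun d => lam.real (π ⁻¹' {d})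
  let ldt : D → T → ℝ := fun d t => lam.real ((fun s => (π s, c s)) ⁻¹' {(d, t)})
  have hpc : ∀ p : D × T, MeasurableSet ((fun s => (π s, c s)) ⁻¹' {p}) := by
    rintro ⟨d, t⟩
    have : (fun s => (π s, c s)) ⁻¹' {(d, t)} = π ⁻¹' {d} ∩ c ⁻¹' {t} := by
      ext s; simp
    rw [this]; exact (hπd d).inter (hc t)
  have hsum : ∀ d, ∑ t, ldt d t = ld d := by
    intro d
    have h1 := integral_fin (fun s => (π s, c s)) hpc lam (fun p => if p.1 = d then 1 else 0)
    have h2 := integral_fin π hπd lam (fun d' => if d' = d then 1 else 0)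
    simp only [mul_ite, mul_one, mul_zero, Finset.sum_ite_eq', Finset.mem_univ, if_true] at h2
    rw [Fintype.sum_prod_type] at h1
    have h3 : ∀ d', (∑ t, lam.real ((fun s => (π s, c s)) ⁻¹' {(d', t)}) * (if d' = d then 1 else 0))
        = if d' = d then ∑ t, ldt d t else 0 := by
      intro d'
      split_ifs with h
      · subst h; simp [ldt]
      · simp
    simp only [h3, Finset.sum_ite_eq', Finset.mem_univ, if_true] at h1
    exact h1.symm.trans h2
  have hldt0 : ∀ d t, 0 ≤ ldt d t := fun d t => measureReal_nonneg
  let α : D → T → ℝ := fun d t => if ld d = 0 then (if t = c s0 then 1 else 0) else ldt d t / ld d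
  have hα0 : ∀ d t, 0 ≤ α d t := by
    intro d t
    simp only [α]
    split_ifs
    · exact zero_le_one
    · exact le_rfl
    · exact div_nonneg measureReal_nonneg measureReal_nonneg
  have hα1 : ∀ d, ∑ t, α d t = 1 := by
    intro d
    simp only [α]
    split_ifs with h
    · simp
    · rw [← Finset.sum_div, hsum, div_self h]
  have hαld : ∀ d t, ld d * α d t = ldt d t := by
    intro d t
    simp only [α]
    split_ifs with h h'
    · have := (Finset.sum_eq_zero_iff_of_nonneg (fun t _ => hldt0 d t)).1 ((hsum d).trans h) t
        (Finset.mem_univ t)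
      rw [h, this, zero_mul]
    · have := (Finset.sum_eq_zero_iff_of_nonneg (fun t _ => hldt0 d t)).1 ((hsum d).trans h) t
        (Finset.mem_univ t)
      rw [this, mul_zero]
    · field_simp
  let κ : T → (Fin m → Fin K) → T → ℝ := fun t b t' =>
    ∑ d, (Q (rep t) (gr b)).real (π ⁻¹' {d}) * α d t'
  have hQsum : ∀ s b, ∑ d, (Q s (gr b)).real (π ⁻¹' {d}) = 1 := by
    intro s b
    have := hQ_prob s (gr b)
    have h2 := integral_fin π hπd (Q s (gr b)) (fun _ => 1)
    simpa using h2.symm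
  obtain ⟨p, V, hp0, hp1, hpf, hVb, hV, hN⟩ := finite_game β hβ (fun i t b => u i (rep t) (gr b)) C
    (fun _ _ _ => hu_bd _ _ _) κ
    (fun t b t' => Finset.sum_nonneg fun d _ => mul_nonneg measureReal_nonneg (hα0 _ _))
    (fun t b => by
      rw [Finset.sum_comm]
      simp only [← Finset.mul_sum, hα1, mul_one]
      exact hQsum _ _)
    (fun t i => Finset.univ.filter fun a => fe (rep t) i a)
    (fun t i => by
      obtain ⟨x, hx⟩ := hA_ne i (rep t)
      obtain ⟨a, ha⟩ := hg i x
      exact ⟨a, by simpa [fe] using ⟨x, hx, ha⟩⟩) (ε / 2) (by positivity)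
  let Y : Fin m → D → ℝ := fun i d => ∑ t, α d t * V i t
  have hYb : ∀ i d, |Y i d| ≤ C := by
    intro i d
    have := sum_wt_sub_le (α d) (V i) (fun _ => 0) (hα0 d) (hα1 d) C (by simpa using hVb i)
    simpa using this
  have hUfin : ∀ i s b, |finU β (fun i t b => u i (rep t) (gr b)) κ V i (c s) b -
      ((1 - β i) * u i s (gr b) + β i * ∫ s₁, Y i (π s₁) ∂(Q s (gr b)))| ≤ ε / 2 := by
    intro i s b
    have hk : ∑ t, κ (c s) b t * V i t = ∑ d, (Q (rep (c s)) (gr b)).real (π ⁻¹' {d}) * Y i d := by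
      simp only [κ, Y, Finset.sum_mul, Finset.mul_sum]
      rw [Finset.sum_comm]
      simp only [mul_assoc]
    have := hQ_prob s (gr b)
    rw [finU, hk, integral_fin π hπd]
    have h1 : |∑ d, (Q (rep (c s)) (gr b)).real (π ⁻¹' {d}) * Y i d -
        ∑ d, (Q s (gr b)).real (π ⁻¹' {d}) * Y i d| ≤ η * (N * C) := by
      rw [← Finset.sum_sub_distrib]
      calc _ ≤ ∑ d, |(Q (rep (c s)) (gr b)).real (π ⁻¹' {d}) * Y i d -
            (Q s (gr b)).real (π ⁻¹' {d}) * Y i d| := Finset.abs_sum_le_sum_abs _ _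
        _ ≤ ∑ d : D, η * C := by
          refine Finset.sum_le_sum fun d _ => ?_
          rw [← sub_mul, abs_mul]
          exact mul_le_mul (hQn s b d) (hYb i d) (abs_nonneg _) hη.le
        _ = η * (N * C) := by
          rw [Finset.sum_const, nsmul_eq_mul, Finset.card_univ]; ring
    have h2 := hun s i b
    obtain ⟨hb0, hb1⟩ := hβ i
    rw [abs_le] at h1 h2 ⊢
    constructor <;> nlinarith
  have hfp := fun t i => fm_prob (p t i) (g i) (hp0 t i) (hp1 t i)
  have hPsum : ∀ t, ∑ b : Fin m → Fin K, ∏ j, p t j (b j) = 1 := fun t =>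
    sum_prod_eq_one _ (hp1 t)
  have hP0 : ∀ t (b : Fin m → Fin K), 0 ≤ ∏ j, p t j (b j) := fun t b =>
    Finset.prod_nonneg fun j _ => hp0 _ _ _
  refine ⟨T, inferInstance, c, V, Y, fun t i => (⟨fm (p t i) (g i), hfp t i⟩ : ProbabilityMeasure (X i)), hc, hVb, hYb,
    ?_, ?_, ?_, ?_⟩
  · intro i E
    have hE : MeasurableSet (π ⁻¹' E) := hπ E.toFinite.measurableSet
    rw [← integral_indicator hE, ← integral_indicator hE]
    have e1 : (π ⁻¹' E).indicator (fun s => Y i (π s)) =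
        fun s => (fun d => if d ∈ E then Y i d else 0) (π s) := by
      ext s; simp [Set.indicator]
    have e2 : (π ⁻¹' E).indicator (fun s => V i (c s)) =
        fun s => (fun q : D × T => if q.1 ∈ E then V i q.2 else 0) (π s, c s) := by
      ext s; simp [Set.indicator]
    rw [e1, e2, integral_fin π hπd, integral_fin (fun s => (π s, c s)) hpc, Fintype.sum_prod_type]
    refine Finset.sum_congr rfl fun d _ => ?_
    by_cases hd : d ∈ E
    · simp only [hd, if_true, Y, Finset.mul_sum, ← mul_assoc]
      refine Finset.sum_congr rfl fun t _ => ?_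
      have := hαld d t
      simp only [ld, ldt] at this
      rw [this]
    · simp [hd]
  · intro i s
    have := integral_pi_fm (p (c s)) g (hp0 _) (hp1 _)
      (fun x => (1 - β i) * u i s x + β i * ∫ s₁, Y i (π s₁) ∂(Q s x))
    simp only [ProbabilityMeasure.coe_mk]
    rw [this, hV i (c s)]
    exact (sum_wt_sub_le _ _ _ (hP0 _) (hPsum _) _ fun b => hUfin i s b).trans (by linarith)
  · intro i s a ha
    obtain ⟨k, hk⟩ := hg i a
    refine ⟨g i k, hk, ?_⟩
    have := integral_pi_fm (p (c s)) g (hp0 _) (hp1 _)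
      (fun x => (1 - β i) * u i s (Function.update x i (g i k))
          + β i * ∫ s₁, Y i (π s₁) ∂(Q s (Function.update x i (g i k))))
    simp only [ProbabilityMeasure.coe_mk]
    have hupd : ∀ b : Fin m → Fin K, Function.update (fun j => g j (b j)) i (g i k)
        = gr (Function.update b i k) := by
      intro b
      ext j
      by_cases h : j = i
      · subst h; simp [gr]
      · simp [gr, h]
    rw [this]
    simp only [hupd]
    have h1 := hN i (c s) k (by
      simp only [Finset.mem_filter, Finset.mem_univ, true_and]
      rw [hfe]
      exact ⟨a, ha, hk⟩)
    have h2 := abs_le.1 (sum_wt_sub_le _ _ _ (hP0 (c s)) (hPsum _) _ fun b => hUfin i s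
      (Function.update b i k))
    linarith [h2.1]
  · intro i s
    simp only [ProbabilityMeasure.coe_mk]
    rw [integral_fm _ _ (hp0 _ _)]
    calc _ ≤ ∑ a, p (c s) i a * ε := by
          refine Finset.sum_le_sum fun a _ => ?_
          by_cases h : fe (rep (c s)) i a
          · apply mul_le_mul_of_nonneg_left _ (hp0 _ _ _)
            rw [hfe] at h
            obtain ⟨x, hx, hxa⟩ := h
            refine (Metric.infDist_le_dist_of_mem hx).trans ?_
            rw [dist_comm]; exact (Metric.mem_ball.1 hxa).le
          · rw [hpf (c s) i a (by simpa using h)]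
            simp
      _ = ε := by rw [← Finset.sum_mul, hp1, one_mul]

end SMPE

namespace SMPE

/-- joint limits of integrals -/
lemma tendsto_integral_joint {Z : Type*} [MetricSpace Z] [CompactSpace Z] [MeasurableSpace Z]
    [BorelSpace Z] (μ : ℕ → ProbabilityMeasure Z) (ν : ProbabilityMeasure Z)
    (hμ : Tendsto μ atTop (nhds ν)) (h : ℕ → Z → ℝ) (k : Z → ℝ) (hh : ∀ n, Continuous (h n))
    (hk : Continuous k) (hu : TendstoUniformly h k atTop) :
    Tendsto (fun n => ∫ z, h n z ∂(μ n : Measure Z)) atTop (nhds (∫ z, k z ∂(ν : Measure Z))) := by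
  have h1 := (ProbabilityMeasure.tendsto_iff_forall_integral_tendsto.1 hμ)
    (BoundedContinuousFunction.mkOfCompact ⟨k, hk⟩)
  simp only [BoundedContinuousFunction.mkOfCompact_apply, ContinuousMap.coe_mk] at h1
  have h2 : Tendsto (fun n => ∫ z, h n z ∂(μ n : Measure Z) - ∫ z, k z ∂(μ n : Measure Z)) atTop
      (nhds 0) := by
    rw [Metric.tendsto_atTop]
    intro ε hε
    obtain ⟨N, hN⟩ := eventually_atTop.1 (Metric.tendstoUniformly_iff.1 hu (ε/2) (half_pos hε))
    refine ⟨N, fun n hn => ?_⟩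
    have i1 : Integrable (h n) (μ n : Measure Z) := (hh n).integrable_of_hasCompactSupport
      (HasCompactSupport.of_compactSpace _)
    have i2 : Integrable k (μ n : Measure Z) := hk.integrable_of_hasCompactSupport
      (HasCompactSupport.of_compactSpace _)
    rw [dist_zero_right, ← integral_sub i1 i2]
    refine lt_of_le_of_lt (norm_integral_le_of_norm_le_const (C := ε/2)
      (Eventually.of_forall fun z => ?_)) ?_
    · have := hN n hn z
      rw [dist_comm, Real.dist_eq] at this
      exact this.le
    · simp [hε]
  have := h2.add h1
  simpa using this

lemma continuous_update_fst {m : ℕ} (X : Fin m → Type*) [∀ i, TopologicalSpace (X i)] (i : Fin m) :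
    Continuous fun p : (∀ j, X j) × X i => Function.update p.1 i p.2 := by
  fun_prop

lemma limit_nash {m : ℕ} 
    (X : Fin m → Type*) [∀ i, MetricSpace (X i)] [∀ i, CompactSpace (X i)]
    [∀ i, MeasurableSpace (X i)] [∀ i, BorelSpace (X i)]
    (A : ∀ i, Set (X i)) (hA_ne : ∀ i, (A i).Nonempty) (hA_cp : ∀ i, IsCompact (A i))
    (f : ℕ → ∀ i, ProbabilityMeasure (X i)) (f0 : ∀ i, ProbabilityMeasure (X i))
    (hf : Tendsto f atTop (nhds f0))
    (h : ℕ → Fin m → (∀ i, X i) → ℝ) (h0 : Fin m → (∀ i, X i) → ℝ) (hh : ∀ n i, Continuous (h n i))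
    (hh0 : ∀ i, Continuous (h0 i)) (hu : ∀ i, TendstoUniformly (fun n => h n i) (h0 i) atTop)
    (v : ℕ → Fin m → ℝ) (ε : ℕ → ℝ) (hε : Tendsto ε atTop (nhds 0))
    (h1 : ∀ n i, |v n i - ∫ x, h n i x ∂(Measure.pi fun j => (f n j : Measure (X j)))| ≤ ε n)
    (h2 : ∀ n i, ∀ a ∈ A i, ∃ a', dist a a' < ε n ∧
      ∫ x, h n i (Function.update x i a') ∂(Measure.pi fun j => (f n j : Measure (X j)))
        ≤ v n i + ε n)
    (h3 : ∀ n i, ∫ x, Metric.infDist x (A i) ∂(f n i : Measure (X i)) ≤ ε n) :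
    (∀ i, Tendsto (fun n => v n i) atTop
      (nhds (∫ x, h0 i x ∂(Measure.pi fun j => (f0 j : Measure (X j)))))) ∧
    (∀ i, ∀ a ∈ A i, ∫ x, h0 i (Function.update x i a)
      ∂(Measure.pi fun j => (f0 j : Measure (X j))) ≤
        ∫ x, h0 i x ∂(Measure.pi fun j => (f0 j : Measure (X j)))) ∧
    (∀ i, (f0 i : Measure (X i)) (A i) = 1) := by
  have hpi : Tendsto (fun n => ProbabilityMeasure.pi (f n)) atTop
      (nhds (ProbabilityMeasure.pi f0)) :=
    (ProbabilityMeasure.continuous_pi.tendsto f0).comp hf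
  have hv : ∀ i, Tendsto (fun n => v n i) atTop
      (nhds (∫ x, h0 i x ∂(Measure.pi fun j => (f0 j : Measure (X j))))) := by
    intro i
    have e1 := tendsto_integral_joint _ _ hpi (fun n => h n i) (h0 i) (fun n => hh n i) (hh0 i)
      (hu i)
    have e2 : Tendsto (fun n => v n i -
        ∫ x, h n i x ∂(Measure.pi fun j => (f n j : Measure (X j)))) atTop (nhds 0) :=
      squeeze_zero_norm (fun n => h1 n i) hε
    have := e2.add e1
    simp only [zero_add] at this
    refine this.congr fun n => ?_
    exact sub_add_cancel _ _
  refine ⟨hv, ?_, ?_⟩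
  · intro i a ha
    choose a' ha' hle using fun n => h2 n i a ha
    have hat : Tendsto a' atTop (nhds a) := by
      rw [tendsto_iff_dist_tendsto_zero]
      refine squeeze_zero (fun _ => dist_nonneg) (fun n => ?_) hε
      rw [dist_comm]; exact (ha' n).le
    have hcu := continuous_update_fst X i
    have hun : TendstoUniformly (fun n x => h n i (Function.update x i (a' n)))
        (fun x => h0 i (Function.update x i a)) atTop := by
      have huc : UniformContinuous fun p : (∀ j, X j) × X i => h0 i (Function.update p.1 i p.2) :=
        CompactSpace.uniformContinuous_of_continuous ((hh0 i).comp hcu)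
      rw [Metric.tendstoUniformly_iff]
      intro δ hδ
      obtain ⟨γ, hγ, hγ2⟩ := Metric.uniformContinuous_iff.1 huc (δ/2) (half_pos hδ)
      filter_upwards [Metric.tendstoUniformly_iff.1 (hu i) (δ/2) (half_pos hδ),
        Metric.tendsto_nhds.1 hat γ hγ] with n hn1 hn2 x
      have e1 := hn1 (Function.update x i (a' n))
      have e2 := @hγ2 (x, a) (x, a' n) (by
        rw [Prod.dist_eq, dist_self, dist_comm]; simpa using hn2)
      calc _ ≤ dist (h0 i (Function.update x i a)) (h0 i (Function.update x i (a' n))) +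
            dist (h0 i (Function.update x i (a' n))) (h n i (Function.update x i (a' n))) :=
              dist_triangle _ _ _
        _ < δ/2 + δ/2 := add_lt_add e2 e1
        _ = δ := add_halves δ
    have e1 := tendsto_integral_joint _ _ hpi (fun n x => h n i (Function.update x i (a' n)))
      (fun x => h0 i (Function.update x i a))
      (fun n => (hh n i).comp (hcu.comp (Continuous.prodMk continuous_id continuous_const)))
      ((hh0 i).comp (hcu.comp (Continuous.prodMk continuous_id continuous_const))) hun
    have e2 := (hv i).add hε
    rw [add_zero] at e2
    exact le_of_tendsto_of_tendsto' e1 e2 hle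
  · intro i
    have e1 := tendsto_integral_joint (fun n => f n i) (f0 i)
      (((continuous_apply i).tendsto f0).comp hf)
      (fun _ x => Metric.infDist x (A i)) (fun x => Metric.infDist x (A i))
      (fun _ => Metric.continuous_infDist_pt _) (Metric.continuous_infDist_pt _) (by
        rw [Metric.tendstoUniformly_iff]
        intro δ hδ
        simp [hδ])
    have e2 := le_of_tendsto_of_tendsto' e1 hε (fun n => h3 n i)
    have e3 : ∫ x, Metric.infDist x (A i) ∂(f0 i : Measure (X i)) = 0 :=
      le_antisymm e2 (integral_nonneg fun _ => Metric.infDist_nonneg)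
    rw [integral_eq_zero_iff_of_nonneg (fun _ => Metric.infDist_nonneg)
      ((Metric.continuous_infDist_pt _).integrable_of_hasCompactSupport
        (HasCompactSupport.of_compactSpace _))] at e3
    rw [prob_compl_eq_zero_iff (hA_cp i).measurableSet |>.symm]
    refine measure_mono_null ?_ e3
    intro x hx hx0
    exact hx (((hA_cp i).isClosed.mem_iff_infDist_zero (hA_ne i)).2 hx0)

end SMPE

namespace SMPE

/-- Carathéodory with exactly `m + 1` points -/
lemma carath {m L : ℕ} (c : Fin L → ℝ) (hc0 : ∀ l, 0 ≤ c l) (hc1 : ∑ l, c l = 1)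
    (P : Fin L → Fin m → ℝ) :
    ∃ (w : Fin (m+1) → ℝ) (l : Fin (m+1) → Fin L), (∀ k, 0 ≤ w k) ∧ ∑ k, w k = 1 ∧
      ∀ i, ∑ k, w k * P (l k) i = ∑ l, c l * P l i := by
  classical
  have hL : Nonempty (Fin L) := by
    by_contra h
    rw [not_nonempty_iff] at h
    simp at hc1
  have hx : ∑ l, c l • P l ∈ convexHull ℝ (Set.range P) :=
    (convex_convexHull ℝ _).sum_mem (fun l _ => hc0 l) hc1
      (fun l _ => subset_convexHull ℝ _ ⟨l, rfl⟩)
  obtain ⟨ι, hι, z, w, hz, hai, hw0, hw1, hwz⟩ := eq_pos_convex_span_of_mem_convexHull hx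
  have hcard : Fintype.card ι ≤ m + 1 := by
    have h1 := hai.card_le_finrank_succ
    have h2 := Submodule.finrank_le (vectorSpan ℝ (Set.range z))
    rw [Module.finrank_fin_fun] at h2
    lia
  choose l hl using fun a => hz ⟨a, rfl⟩
  obtain ⟨e⟩ : Nonempty (ι ↪ Fin (m+1)) := Function.Embedding.nonempty_of_card_le (by simpa using hcard)
  have hext : ∀ F : ι → ℝ, ∑ k, (Function.extend e F 0) k = ∑ a, F a := by
    intro F
    rw [← Finset.sum_subset (Finset.subset_univ (Finset.univ.map e)), Finset.sum_map]
    · exact Finset.sum_congr rfl fun a _ => e.injective.extend_apply _ _ _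
    · intro k _ hk
      rw [Function.extend_apply']
      · rfl
      · rintro ⟨a, rfl⟩
        exact hk (by simp)
  refine ⟨Function.extend e w 0, Function.extend e l (fun _ => Classical.arbitrary _), ?_, ?_, ?_⟩
  · intro k
    by_cases hk : ∃ a, e a = k
    · obtain ⟨a, rfl⟩ := hk
      rw [e.injective.extend_apply]; exact (hw0 a).le
    · rw [Function.extend_apply' _ _ _ hk]; rfl
  · rw [hext, hw1]
  · intro i
    have h1 := congrFun hwz i
    simp only [Finset.sum_apply, Pi.smul_apply, smul_eq_mul] at h1
    rw [← h1, ← hext (fun a => w a * z a i)]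
    refine Finset.sum_congr rfl fun k _ => ?_
    by_cases hk : ∃ a, e a = k
    · obtain ⟨a, rfl⟩ := hk
      simp only [e.injective.extend_apply, hl]
    · simp only [Function.extend_apply' _ _ _ hk]
      simp

/-- measurability of weakly measurable families of probability measures -/
lemma measurable_of_forall_integral {S Z : Type*} [MeasurableSpace S] [MetricSpace Z]
    [CompactSpace Z] [MeasurableSpace Z] [BorelSpace Z] (f : S → ProbabilityMeasure Z)
    (hf : ∀ h : Z → ℝ, Continuous h → Measurable fun s => ∫ z, h z ∂(f s : Measure Z))
    (B : Set Z) (hB : MeasurableSet B) : Measurable fun s => (f s : Measure Z) B := by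
  have key : Measurable fun s => (f s : Measure Z) := by
    refine Measurable.measure_of_isPiSystem_of_isProbabilityMeasure
      (S := {s | IsClosed s}) ?_ isPiSystem_isClosed ?_
    · rw [BorelSpace.measurable_eq (α := Z), borel_eq_generateFrom_isClosed]
    · intro F hF
      have hlim : ∀ s, Tendsto (fun n : ℕ => ENNReal.ofReal (∫ z,
          ((thickenedIndicator (δ := 1 / ((n:ℝ) + 1)) Nat.one_div_pos_of_nat F z : NNReal) : ℝ)
            ∂(f s : Measure Z))) atTop (nhds ((f s : Measure Z) F)) := by
        intro s
        have h1 := tendsto_lintegral_thickenedIndicator_of_isClosed (f s : Measure Z) hF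
          (fun n => Nat.one_div_pos_of_nat) tendsto_one_div_add_atTop_nhds_zero_nat
        refine h1.congr fun n => ?_
        rw [ofReal_integral_eq_lintegral_ofReal]
        · simp
        · apply Continuous.integrable_of_hasCompactSupport
          · exact NNReal.continuous_coe.comp (thickenedIndicator _ F).continuous
          · exact HasCompactSupport.of_compactSpace _
        · exact Eventually.of_forall fun z => NNReal.coe_nonneg _
      refine measurable_of_tendsto_metrizable (f := fun (n : ℕ) s => ENNReal.ofReal (∫ z,
          ((thickenedIndicator (δ := 1 / ((n:ℝ) + 1)) Nat.one_div_pos_of_nat F z : NNReal) : ℝ)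
            ∂(f s : Measure Z))) (fun n => ?_) (tendsto_pi_nhds.2 hlim)
      exact (hf _ (NNReal.continuous_coe.comp (thickenedIndicator _ F).continuous)).ennreal_ofReal
  exact (Measure.measurable_coe hB).comp key

/-- at every point of a product, someone attains the mean -/
lemma integral_pi_update {m : ℕ} (X : Fin m → Type*) [∀ i, MeasurableSpace (X i)]
    (f : ∀ i, Measure (X i)) [∀ i, IsProbabilityMeasure (f i)] (i : Fin m)
    (h : (∀ j, X j) → ℝ) (hm : Measurable h) (C : ℝ) (hb : ∀ x, |h x| ≤ C) :
    ∫ a, (∫ x, h (Function.update x i a) ∂(Measure.pi f)) ∂(f i) = ∫ x, h x ∂(Measure.pi f) := by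
  have hmu : Measurable fun p : X i × (∀ j, X j) => Function.update p.2 i p.1 := by
    rw [measurable_pi_iff]
    intro j
    by_cases hj : j = i
    · subst hj; simpa using measurable_fst
    · simp only [Function.update_of_ne hj]
      exact (measurable_pi_apply j).comp measurable_snd
  have key : ((f i).prod (Measure.pi f)).map (fun p => Function.update p.2 i p.1) = Measure.pi f := by
    symm
    apply Measure.pi_eq
    intro B hB
    rw [Measure.map_apply hmu (MeasurableSet.univ_pi hB)]
    have : (fun p : X i × (∀ j, X j) => Function.update p.2 i p.1) ⁻¹' (Set.univ.pi B) =
        B i ×ˢ (Set.univ.pi (Function.update B i Set.univ)) := by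
      ext p
      simp only [Set.mem_preimage, Set.mem_pi, Set.mem_univ, true_implies, Set.mem_prod]
      constructor
      · intro hp
        refine ⟨by simpa using hp i, fun j => ?_⟩
        by_cases hj : j = i
        · subst hj; simp
        · simpa [hj] using hp j
      · rintro ⟨h1, h2⟩ j
        by_cases hj : j = i
        · subst hj; simpa using h1
        · simpa [hj] using h2 j
    rw [this, Measure.prod_prod, Measure.pi_pi, ← Finset.mul_prod_erase _ _ (Finset.mem_univ i),
      ← Finset.mul_prod_erase (a := i) _ (fun j => f j (B j)) (Finset.mem_univ i)]
    simp only [Function.update_self, measure_univ, one_mul]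
    congr 1
    refine Finset.prod_congr rfl fun j hj => ?_
    rw [Function.update_of_ne (Finset.ne_of_mem_erase hj)]
  conv_rhs => rw [← key]
  rw [integral_map hmu.aemeasurable hm.aestronglyMeasurable, integral_prod]
  exact Integrable.of_bound (hm.comp hmu).aestronglyMeasurable C (Eventually.of_forall fun p => hb _)

end SMPE

namespace SMPE

lemma int_withDensity {S : Type*} [MeasurableSpace S] (lam : Measure S) (q : S → ℝ)
    (hq0 : ∀ s, 0 ≤ q s) (hqm : Measurable q) (y : S → ℝ) :
    ∫ s, y s ∂(lam.withDensity fun s => ENNReal.ofReal (q s)) = ∫ s, y s * q s ∂lam := by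
  rw [integral_withDensity_eq_integral_toReal_smul hqm.ennreal_ofReal
    (Eventually.of_forall fun _ => ENNReal.ofReal_lt_top)]
  refine integral_congr_ae (Eventually.of_forall fun s => ?_)
  simp [hq0 s, mul_comm]

lemma integrable_density {S : Type*} [MeasurableSpace S] (lam : Measure S) (q : S → ℝ)
    (hqm : Measurable q) (hq0 : ∀ s, 0 ≤ q s)
    (hp : IsProbabilityMeasure (lam.withDensity fun s => ENNReal.ofReal (q s))) :
    Integrable q lam := by
  refine ⟨hqm.aestronglyMeasurable, ?_⟩
  rw [hasFiniteIntegral_iff_ofReal (Eventually.of_forall hq0)]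
  have := hp.measure_univ
  rw [withDensity_apply _ MeasurableSet.univ, Measure.restrict_univ] at this
  rw [this]; exact ENNReal.one_lt_top

section
variable {Z S : Type*} [MetricSpace Z] [CompactSpace Z] [MeasurableSpace S] (lam : Measure S)
  (q : Z → S → ℝ) (hqi : ∀ x, Integrable (q x) lam)
  (hq_cont : ∀ (xs : ℕ → Z) (x0 : Z), Tendsto xs atTop (nhds x0) →
      Tendsto (fun n => ∫ s₁, |q (xs n) s₁ - q x0 s₁| ∂lam) atTop (nhds 0))

lemma mul_q_le (hqi : ∀ x, Integrable (q x) lam) (y : S → ℝ) (hy : Measurable y) (C : ℝ)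
    (hb : ∀ s, |y s| ≤ C) (x x0 : Z) :
    |∫ s, y s * q x s ∂lam - ∫ s, y s * q x0 s ∂lam| ≤ C * ∫ s, |q x s - q x0 s| ∂lam := by
  have hi : ∀ x, Integrable (fun s => y s * q x s) lam := fun x =>
    (hqi x).bdd_mul (c := C) hy.aestronglyMeasurable (Eventually.of_forall hb)
  rw [← integral_sub (hi x) (hi x0), ← integral_const_mul]
  calc _ ≤ ∫ s, |y s * q x s - y s * q x0 s| ∂lam := abs_integral_le_integral_abs
    _ ≤ _ := by
      apply integral_mono ((hi x).sub (hi x0)).abs (((hqi x).sub (hqi x0)).abs.const_mul C)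
      intro s
      show |y s * q x s - y s * q x0 s| ≤ C * |q x s - q x0 s|
      rw [← mul_sub, abs_mul]
      exact mul_le_mul_of_nonneg_right (hb s) (abs_nonneg _)

lemma q_modulus (hq_cont : ∀ (xs : ℕ → Z) (x0 : Z), Tendsto xs atTop (nhds x0) →
      Tendsto (fun n => ∫ s₁, |q (xs n) s₁ - q x0 s₁| ∂lam) atTop (nhds 0)) (C : ℝ) (x0 : Z) :
    Tendsto (fun x => C * ∫ s, |q x s - q x0 s| ∂lam) (nhds x0) (nhds 0) := by
  have h : Tendsto (fun x => ∫ s, |q x s - q x0 s| ∂lam) (nhds x0) (nhds 0) :=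
    tendsto_of_seq_tendsto fun xs hxs => hq_cont xs x0 hxs
  simpa using h.const_mul C

lemma equi_R (hqi : ∀ x, Integrable (q x) lam)
    (hq_cont : ∀ (xs : ℕ → Z) (x0 : Z), Tendsto xs atTop (nhds x0) →
      Tendsto (fun n => ∫ s₁, |q (xs n) s₁ - q x0 s₁| ∂lam) atTop (nhds 0))
    {ι : Type*} (y : ι → S → ℝ) (hy : ∀ n, Measurable (y n)) (C : ℝ)
    (hb : ∀ n s, |y n s| ≤ C) : Equicontinuous fun n x => ∫ s, y n s * q x s ∂lam := by
  intro x0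
  refine Metric.equicontinuousAt_of_continuity_modulus _ (q_modulus lam q hq_cont C x0) _
    (Eventually.of_forall fun x n => ?_)
  rw [dist_comm, Real.dist_eq]
  exact mul_q_le lam q hqi (y n) (hy n) C (hb n) x x0

lemma unif_R (hqi : ∀ x, Integrable (q x) lam)
    (hq_cont : ∀ (xs : ℕ → Z) (x0 : Z), Tendsto xs atTop (nhds x0) →
      Tendsto (fun n => ∫ s₁, |q (xs n) s₁ - q x0 s₁| ∂lam) atTop (nhds 0))
    (y : ℕ → S → ℝ) (hy : ∀ n, Measurable (y n)) (C : ℝ)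
    (hb : ∀ n s, |y n s| ≤ C) (w : S → ℝ)
    (hw : ∀ x, Tendsto (fun n => ∫ s, y n s * q x s ∂lam) atTop (nhds (∫ s, w s * q x s ∂lam))) :
    TendstoUniformly (fun n x => ∫ s, y n s * q x s ∂lam) (fun x => ∫ s, w s * q x s ∂lam)
      atTop := by
  have h1 := (equi_R lam q hqi hq_cont y hy C hb).tendsto_uniformFun_iff_pi atTop
    (fun x => ∫ s, w s * q x s ∂lam)
  have h2 := h1.2 (tendsto_pi_nhds.2 hw)
  exact UniformFun.tendsto_iff_tendstoUniformly.1 h2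

lemma cont_R (hqi : ∀ x, Integrable (q x) lam)
    (hq_cont : ∀ (xs : ℕ → Z) (x0 : Z), Tendsto xs atTop (nhds x0) →
      Tendsto (fun n => ∫ s₁, |q (xs n) s₁ - q x0 s₁| ∂lam) atTop (nhds 0))
    (y : S → ℝ) (hy : Measurable y) (C : ℝ)
    (hb : ∀ s, |y s| ≤ C) : Continuous fun x => ∫ s, y s * q x s ∂lam :=
  (equi_R lam q hqi hq_cont (fun _ : Unit => y) (fun _ => hy) C (fun _ => hb)).continuous ()

lemma unif_affine (y : ℕ → Z → ℝ) (w : Z → ℝ) (h : TendstoUniformly y w atTop) (u : Z → ℝ) (b : ℝ) :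
    TendstoUniformly (fun n x => u x + b * y n x) (fun x => u x + b * w x) atTop := by
  rw [Metric.tendstoUniformly_iff] at h ⊢
  intro ε hε
  filter_upwards [h (ε / (|b| + 1)) (by positivity)] with n hn x
  have h1 := hn x
  rw [lt_div_iff₀ (by positivity)] at h1
  rw [Real.dist_eq, add_sub_add_left_eq_sub, ← mul_sub, abs_mul]
  rw [Real.dist_eq] at h1
  nlinarith [abs_nonneg (w x - y n x)]
end

end SMPE

namespace SMPE

lemma pullout {W : Type*} {G mW : MeasurableSpace W} {μ : Measure W} [IsFiniteMeasure μ]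
    (hG : G ≤ mW) (h1 h2 k : W → ℝ) (i1 : Integrable h1 μ) (i2 : Integrable h2 μ)
    (hk : Measurable[G] k) (i1k : Integrable (h1 * k) μ) (i2k : Integrable (h2 * k) μ)
    (h : ∀ B, MeasurableSet[G] B → ∫ x in B, h1 x ∂μ = ∫ x in B, h2 x ∂μ) :
    ∫ x, h1 x * k x ∂μ = ∫ x, h2 x * k x ∂μ := by
  have e : μ[h1|G] =ᵐ[μ] μ[h2|G] := by
    refine ae_eq_condExp_of_forall_setIntegral_eq hG i2
      (fun D _ _ => integrable_condExp.integrableOn) (fun D hD _ => ?_)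
      stronglyMeasurable_condExp.aestronglyMeasurable
    rw [setIntegral_condExp hG i1 hD, h D hD]
  have p1 := condExp_mul_of_stronglyMeasurable_right (m := G) hk.stronglyMeasurable i1k i1
  have p2 := condExp_mul_of_stronglyMeasurable_right (m := G) hk.stronglyMeasurable i2k i2
  calc ∫ x, h1 x * k x ∂μ = ∫ x, (μ[h1 * k|G]) x ∂μ := (integral_condExp hG).symm
    _ = ∫ x, (μ[h2 * k|G]) x ∂μ := by
      apply integral_congr_ae
      filter_upwards [e, p1, p2] with x hx h1x h2x
      rw [h1x, h2x, Pi.mul_apply, Pi.mul_apply, hx]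
    _ = _ := integral_condExp hG

lemma purify_density {W : Type*} {G mW : MeasurableSpace W} {μ : Measure W} [IsFiniteMeasure μ]
    (hG : G ≤ mW) (hna : NoAtom G μ) {Θ : Type*} {J m M : ℕ} (rho : Fin J → W → ℝ)
    (hr0 : ∀ j x, 0 ≤ rho j x) (hri : ∀ j, Integrable (rho j) μ)
    (qj : Fin J → Θ → W → ℝ) (hqG : ∀ j θ, Measurable[G] (qj j θ))
    (hint : ∀ j θ, Integrable (fun x => qj j θ x * rho j x) μ)
    (a : Fin (M + 1) → W → ℝ) (ham : ∀ k, Measurable (a k)) (ha0 : ∀ k x, 0 ≤ a k x)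
    (ha1 : ∀ x, ∑ k, a k x = 1)
    (y : Fin (M + 1) → Fin m → W → ℝ) (hy : ∀ k i, Measurable (y k i)) (C : ℝ)
    (hyb : ∀ k i x, |y k i x| ≤ C) :
    ∃ κ : W → Fin (M + 1), Measurable κ ∧ ∀ j θ i,
      ∫ x, y (κ x) i x * (qj j θ x * rho j x) ∂μ =
        ∫ x, (∑ k, a k x * y k i x) * (qj j θ x * rho j x) ∂μ := by
  let r : Fin J → W → ℝ := fun j x => |(hri j).1.mk (rho j) x|
  have hrm : ∀ j, Measurable (r j) := fun j =>
    ((hri j).1.stronglyMeasurable_mk.measurable).abs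
  have hre : ∀ j, rho j =ᵐ[μ] r j := by
    intro j
    filter_upwards [(hri j).1.ae_eq_mk] with x hx
    simp only [r]
    rw [← hx, abs_of_nonneg (hr0 j x)]
  have hr0' : ∀ j x, 0 ≤ r j x := fun j x => abs_nonneg _
  have hri' : ∀ j, Integrable (r j) μ := fun j => (hri j).congr (hre j)
  let D : W → ℝ := fun x => 1 + ∑ j, r j x
  have hDm : Measurable D := measurable_const.add (Finset.measurable_sum _ fun j _ => hrm j)
  have hD1 : ∀ x, 1 ≤ D x := fun x => le_add_of_nonneg_right (Finset.sum_nonneg fun j _ => hr0' j x)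
  have hD0 : ∀ x, 0 < D x := fun x => zero_lt_one.trans_le (hD1 x)
  have hDi : Integrable D μ := (integrable_const 1).add (integrable_finsetSum _ fun j _ => hri' j)
  let μ' := μ.withDensity fun x => ENNReal.ofReal (D x)
  have hfin : IsFiniteMeasure μ' := isFiniteMeasure_withDensity_ofReal hDi.2
  have hac : μ' ≪ μ := withDensity_absolutelyContinuous _ _
  have hac' : μ ≪ μ' := withDensity_absolutelyContinuous' hDm.ennreal_ofReal.aemeasurable
    (Eventually.of_forall fun x => by simpa using hD0 x)
  have hna' : NoAtom G μ' := by
    rintro E hE ⟨hpos, hall⟩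
    refine hna E hE ⟨?_, fun D₀ hD₀ hm => ?_⟩
    · rw [pos_iff_ne_zero] at hpos ⊢
      exact fun h => hpos (hac h)
    · obtain ⟨D₁, h1, h2⟩ := hall D₀ hD₀ hm
      exact ⟨D₁, h1, hac' h2⟩
  have hrD : ∀ j x, |r j x / D x| ≤ 1 := by
    intro j x
    rw [abs_of_nonneg (div_nonneg (hr0' j x) (hD0 x).le), div_le_one (hD0 x)]
    have := Finset.single_le_sum (f := fun j => r j x) (fun j _ => hr0' j x) (Finset.mem_univ j)
    simp only [D]; linarith
  obtain ⟨κ, hκ, hB⟩ := purify hG hna' M a ham ha0 ha1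
    (fun k (l : Fin m × Fin J) x => y k l.1 x * (r l.2 x / D x))
    (fun k l => (hy k l.1).mul ((hrm l.2).div hDm)) C (fun k l x => by
      rw [abs_mul]
      calc _ ≤ C * 1 := mul_le_mul (hyb k l.1 x) (hrD l.2 x) (abs_nonneg _)
            ((abs_nonneg _).trans (hyb k l.1 x))
        _ = C := mul_one C)
  refine ⟨κ, hκ, fun j θ i => ?_⟩
  -- transfer between the two measures
  have htr : ∀ Y : W → ℝ, ∫ x, Y x * (qj j θ x * rho j x) ∂μ =
      ∫ x, (Y x * (r j x / D x)) * qj j θ x ∂μ' := by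
    intro Y
    rw [integral_withDensity_eq_integral_toReal_smul hDm.ennreal_ofReal
      (Eventually.of_forall fun _ => ENNReal.ofReal_lt_top)]
    apply integral_congr_ae
    filter_upwards [hre j] with x hx
    rw [ENNReal.toReal_ofReal (hD0 x).le, smul_eq_mul, hx]
    have := (hD0 x).ne'
    field_simp
  have hti : ∀ Y : W → ℝ, Measurable Y → (∀ x, |Y x| ≤ C) →
      Integrable ((fun x => Y x * (r j x / D x)) * qj j θ) μ' := by
    intro Y hY hYb
    rw [integrable_withDensity_iff_integrable_smul' hDm.ennreal_ofReal
      (Eventually.of_forall fun _ => ENNReal.ofReal_lt_top)]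
    have h1 : Integrable (fun x => Y x * (qj j θ x * rho j x)) μ :=
      (hint j θ).bdd_mul (c := C) hY.aestronglyMeasurable (Eventually.of_forall hYb)
    refine h1.congr ?_
    filter_upwards [hre j] with x hx
    rw [ENNReal.toReal_ofReal (hD0 x).le, smul_eq_mul, hx, Pi.mul_apply]
    have := (hD0 x).ne'
    field_simp
  have hti' : ∀ Y : W → ℝ, Measurable Y → (∀ x, |Y x| ≤ C) →
      Integrable (fun x => Y x * (r j x / D x)) μ' := by
    intro Y hY hYb
    refine Integrable.of_bound (hY.mul ((hrm j).div hDm)).aestronglyMeasurable C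
      (Eventually.of_forall fun x => ?_)
    rw [Real.norm_eq_abs, abs_mul]
    calc _ ≤ C * 1 := mul_le_mul (hYb x) (hrD j x) (abs_nonneg _) ((abs_nonneg _).trans (hYb x))
      _ = C := mul_one C
  have m1 : Measurable fun x => y (κ x) i x := by
    have : Measurable fun p : Fin (M+1) × W => y p.1 i p.2 :=
      measurable_from_prod_countable_right fun k => hy k i
    exact this.comp (hκ.prodMk measurable_id)
  have m2 : Measurable fun x => ∑ k, a k x * y k i x :=
    Finset.measurable_sum _ fun k _ => (ham k).mul (hy k i)
  have b2 : ∀ x, |∑ k, a k x * y k i x| ≤ C := by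
    intro x
    calc _ ≤ ∑ k, |a k x * y k i x| := Finset.abs_sum_le_sum_abs _ _
      _ ≤ ∑ k, a k x * C := by
        refine Finset.sum_le_sum fun k _ => ?_
        rw [abs_mul, abs_of_nonneg (ha0 k x)]
        exact mul_le_mul_of_nonneg_left (hyb k i x) (ha0 k x)
      _ = C := by rw [← Finset.sum_mul, ha1, one_mul]
  rw [htr, htr]
  refine pullout (μ := μ') hG _ _ _ (hti' _ m1 fun x => hyb _ _ _) (hti' _ m2 b2) (hqG j θ)
    (hti _ m1 fun x => hyb _ _ _) (hti _ m2 b2) fun B hBm => ?_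
  rw [hB B hBm (i, j)]
  simp only [Finset.sum_mul, mul_assoc]

lemma purify_apply {S : Type*} [mS : MeasurableSpace S] (lam : Measure S) [IsFiniteMeasure lam]
    (S₁ : Set S) {W : Type*} {G mW : MeasurableSpace W} (e : W → S)
    (hemb : MeasurableEmbedding e) (hrange : Set.range e = S₁)
    (hG : G ≤ mW) (hna : NoAtom G (Measure.comap e lam)) {Θ : Type*} {J m M : ℕ}
    (q : Θ → S → ℝ) (hqi : ∀ θ, Integrable (q θ) lam) (hq0 : ∀ θ s, 0 ≤ q θ s)
    (qj : Fin J → Θ → S → ℝ) (hqj0 : ∀ j θ s, 0 ≤ qj j θ s) (rho : Fin J → S → ℝ)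
    (hr0 : ∀ j x, 0 ≤ rho j x) (hri : ∀ j, Integrable (rho j) (lam.restrict S₁))
    (hdec : ∀ θ, ∀ s ∈ S₁, q θ s = ∑ j, qj j θ s * rho j s)
    (hqG : ∀ j θ, Measurable[G] fun s : W => qj j θ (e s))
    (a : Fin (M + 1) → S → ℝ) (ham : ∀ k, Measurable (a k)) (ha0 : ∀ k x, 0 ≤ a k x)
    (ha1 : ∀ x, ∑ k, a k x = 1)
    (y : Fin (M + 1) → Fin m → S → ℝ) (hy : ∀ k i, Measurable (y k i)) (C : ℝ)
    (hyb : ∀ k i x, |y k i x| ≤ C) :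
    ∃ κ : S → Fin (M + 1), Measurable κ ∧ ∀ θ i,
      ∫ s in S₁, y (κ s) i s * q θ s ∂lam = ∫ s in S₁, (∑ k, a k s * y k i s) * q θ s ∂lam := by
  classical
  let μ : Measure W := Measure.comap e lam
  have hmem : ∀ x, e x ∈ S₁ := fun x => hrange ▸ ⟨x, rfl⟩
  have hmap : μ.map e = lam.restrict S₁ := by
    rw [← hrange]; exact hemb.map_comap lam
  have hfin : IsFiniteMeasure μ := by
    constructor
    have : μ Set.univ = lam S₁ := by
      rw [hemb.comap_apply, Set.image_univ, hrange]
    rw [this]; exact measure_lt_top _ _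
  have hsub : ∀ h : S → ℝ, Integrable h (lam.restrict S₁) → Integrable (fun x : W => h (e x)) μ := by
    intro h hh
    rw [← hmap, hemb.integrable_map_iff] at hh
    exact hh
  have hint : ∀ j θ, Integrable (fun x : W => qj j θ (e x) * rho j (e x)) μ := by
    intro j θ
    refine Integrable.mono' (hsub (q θ) (hqi θ).integrableOn) ?_ (Eventually.of_forall fun x => ?_)
    · exact (((hqG j θ).mono hG le_rfl).aestronglyMeasurable).mul (hsub _ (hri j)).1
    · rw [Real.norm_eq_abs, abs_of_nonneg (mul_nonneg (hqj0 _ _ _) (hr0 _ _)), hdec θ (e x) (hmem x)]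
      exact Finset.single_le_sum (f := fun j => qj j θ (e x) * rho j (e x))
        (fun j _ => mul_nonneg (hqj0 _ _ _) (hr0 _ _)) (Finset.mem_univ j)
  obtain ⟨κ, hκ, h⟩ := purify_density (μ := μ) hG hna (fun j (x : W) => rho j (e x))
    (fun j x => hr0 j (e x)) (fun j => hsub _ (hri j)) (fun j θ (x : W) => qj j θ (e x)) hqG hint
    (fun k (x : W) => a k (e x)) (fun k => (ham k).comp hemb.measurable) (fun k x => ha0 k (e x))
    (fun x => ha1 (e x)) (fun k i (x : W) => y k i (e x))
    (fun k i => (hy k i).comp hemb.measurable) C (fun k i x => hyb k i (e x))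
  let κ' : S → Fin (M+1) := Function.extend e κ (fun _ => 0)
  have hκ' : Measurable κ' := hemb.measurable_extend hκ measurable_const
  have hκκ : ∀ x, κ' (e x) = κ x := fun x => hemb.injective.extend_apply _ _ _
  refine ⟨κ', hκ', fun θ i => ?_⟩
  rw [← hmap, hemb.integral_map, hemb.integral_map]
  simp only [hκκ]
  have hm1 : Measurable fun x : W => y (κ x) i (e x) := by
    have : Measurable fun p : Fin (M+1) × W => y p.1 i (e p.2) :=
      measurable_from_prod_countable_right fun k => (hy k i).comp hemb.measurable
    exact this.comp (hκ.prodMk measurable_id)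
  have hm2 : Measurable fun x : W => ∑ k, a k (e x) * y k i (e x) :=
    Finset.measurable_sum _ fun k _ => ((ham k).mul (hy k i)).comp hemb.measurable
  have b2 : ∀ x : W, |∑ k, a k (e x) * y k i (e x)| ≤ C := by
    intro x
    calc _ ≤ ∑ k, |a k (e x) * y k i (e x)| := Finset.abs_sum_le_sum_abs _ _
      _ ≤ ∑ k, a k (e x) * C := by
        refine Finset.sum_le_sum fun k _ => ?_
        rw [abs_mul, abs_of_nonneg (ha0 k (e x))]
        exact mul_le_mul_of_nonneg_left (hyb k i (e x)) (ha0 k (e x))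
      _ = C := by rw [← Finset.sum_mul, ha1, one_mul]
  have key : ∀ Y : W → ℝ, Measurable Y → (∀ x, |Y x| ≤ C) →
      ∫ x, Y x * q θ (e x) ∂μ = ∑ j, ∫ x, Y x * (qj j θ (e x) * rho j (e x)) ∂μ := by
    intro Y hY hYb
    rw [← integral_finsetSum _ fun j _ => (hint j θ).bdd_mul (c := C) hY.aestronglyMeasurable
      (Eventually.of_forall hYb)]
    refine integral_congr_ae (Eventually.of_forall fun x => ?_)
    simp only [← Finset.mul_sum]
    rw [hdec θ (e x) (hmem x)]
  exact (key _ hm1 fun x => hyb _ _ _).trans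
    ((Finset.sum_congr rfl fun j _ => h j θ i).trans (key _ hm2 b2).symm)

end SMPE

namespace SMPE

/-- the compact metrizable space of candidate limits -/
abbrev KT {m : ℕ} (X : Fin m → Type*) [∀ i, MeasurableSpace (X i)] (C : ℝ) :=
  (Fin (m+1) → Set.Icc (0:ℝ) 1) ×
    (Fin (m+1) → ((Fin m → Set.Icc (-C) C) × ∀ i, ProbabilityMeasure (X i)))

lemma cara_select {m : ℕ} {S : Type*} [MeasurableSpace S]
    (X : Fin m → Type*) [∀ i, MetricSpace (X i)] [∀ i, CompactSpace (X i)]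
    [∀ i, Nonempty (X i)] [∀ i, MeasurableSpace (X i)] [∀ i, BorelSpace (X i)]
    (T : ℕ → Type) (hT : ∀ n, Finite (T n)) (c : ∀ n, S → T n)
    (hc : ∀ n t, MeasurableSet (c n ⁻¹' {t})) (C : ℝ) (hC : 0 ≤ C)
    (V : ∀ n, Fin m → T n → ℝ) (hV : ∀ n i t, |V n i t| ≤ C)
    (f : ∀ n, T n → ∀ i, ProbabilityMeasure (X i))
    (L : ℕ → ℕ) (a : ∀ N, Fin (L N) → ℝ) (t : ∀ N, Fin (L N) → ℕ)
    (ha0 : ∀ N k, 0 ≤ a N k) (ha1 : ∀ N, ∑ k, a N k = 1) (ht : ∀ N k, N ≤ t N k) :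
    ∃ (b : Fin (m+1) → S → ℝ) (y : Fin (m+1) → Fin m → S → ℝ)
      (F : Fin (m+1) → S → ∀ i, ProbabilityMeasure (X i)),
      (∀ k, Measurable (b k)) ∧ (∀ k s, 0 ≤ b k s) ∧ (∀ s, ∑ k, b k s = 1) ∧
      (∀ k i, Measurable (y k i)) ∧ (∀ k i s, |y k i s| ≤ C) ∧
      (∀ k i (B : Set (X i)), MeasurableSet B → Measurable fun s => (F k s i : Measure (X i)) B) ∧
      ∀ s, ∃ (N : ℕ → ℕ) (τ : Fin (m+1) → ℕ → ℕ), StrictMono N ∧ (∀ k r, N r ≤ τ k r) ∧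
        (∀ k i, Tendsto (fun r => V (τ k r) i (c _ s)) atTop (nhds (y k i s))) ∧
        (∀ k, Tendsto (fun r => f (τ k r) (c _ s)) atTop (nhds (F k s))) ∧
        (∀ i, Tendsto (fun r => ∑ l, a (N r) l * V (t (N r) l) i (c _ s)) atTop
          (nhds (∑ k, b k s * y k i s))) := by
  classical
  have sel := fun (N : ℕ) (τ : ∀ l : Fin (L N), T (t N l)) =>
    carath (a N) (ha0 N) (ha1 N) (fun l i => V (t N l) i (τ l))
  choose w l hw0 hw1 hwl using sel
  let K := KT X C
  have c1 : ∀ k, Continuous fun z : KT X C => ((z.1 k : Set.Icc (0:ℝ) 1) : ℝ) := by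
    intro k; fun_prop
  have c2 : ∀ k i, Continuous fun z : KT X C => (((z.2 k).1 i : Set.Icc (-C) C) : ℝ) := by
    intro k i; fun_prop
  have c3 : ∀ k, Continuous fun z : KT X C => (z.2 k).2 := by
    intro k; fun_prop
  have c4 : Continuous fun z : KT X C => ∑ k, ((z.1 k : Set.Icc (0:ℝ) 1) : ℝ) := by
    fun_prop
  have w1 : ∀ N τ k, w N τ k ≤ 1 := fun N τ k => by
    rw [← hw1 N τ]
    exact Finset.single_le_sum (f := w N τ) (fun k _ => hw0 N τ k) (Finset.mem_univ k)
  let g0 : ∀ N, (∀ l : Fin (L N), T (t N l)) → K := fun N τ =>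
    (fun k => ⟨w N τ k, hw0 N τ k, w1 N τ k⟩,
     fun k => (fun i => ⟨V _ i (τ (l N τ k)), abs_le.1 (hV _ _ _)⟩, f _ (τ (l N τ k))))
  let τ : ∀ N, S → (∀ l : Fin (L N), T (t N l)) := fun N s l => c _ s
  let g : ℕ → S → K := fun N s => g0 N (τ N s)
  let _ : MetricSpace K := TopologicalSpace.metrizableSpaceMetric K
  have : Nonempty K := by
    have n1 : Nonempty (Set.Icc (-C) C) := ⟨⟨0, by constructor <;> linarith⟩⟩
    have n2 : ∀ i, Nonempty (ProbabilityMeasure (X i)) := fun i =>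
      ⟨⟨Measure.dirac (Classical.arbitrary _), inferInstance⟩⟩
    exact inferInstanceAs (Nonempty (KT X C))
  have hg : ∀ n (B : Set K), MeasurableSet (g n ⁻¹' B) := by
    intro N B
    have : g N ⁻¹' B = ⋃ z ∈ (g0 N ⁻¹' B), ⋂ l, c (t N l) ⁻¹' {z l} := by
      ext s
      simp only [Set.mem_preimage, Set.mem_iUnion, Set.mem_iInter, Set.mem_singleton_iff]
      constructor
      · intro h; exact ⟨τ N s, h, fun l => rfl⟩
      · rintro ⟨z, hz, h⟩
        have : τ N s = z := funext h
        simp only [g, this]; exact hz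
    rw [this]
    exact MeasurableSet.biUnion (Set.to_countable _) fun z _ =>
      MeasurableSet.iInter fun l => hc _ _
  obtain ⟨φ, hφ, hψ⟩ := exists_measurable_cluster g hg
  refine ⟨fun k s => (φ s).1 k, fun k i s => ((φ s).2 k).1 i, fun k s => ((φ s).2 k).2,
    ?_, ?_, ?_, ?_, ?_, ?_, ?_⟩
  · intro k
    exact hψ _ (c1 k)
  · intro k s; exact ((φ s).1 k).2.1
  · intro s
    have hcl : IsClosed {z : K | ∑ k, ((z.1 k : Set.Icc (0:ℝ) 1) : ℝ) = 1} :=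
      isClosed_eq c4 continuous_const
    exact (hcl.mem_of_mapClusterPt (hφ s)
      (Eventually.of_forall fun n => hw1 n (τ n s)) : _)
  · intro k i
    exact hψ _ (c2 k i)
  · intro k i s; exact abs_le.2 (((φ s).2 k).1 i).2
  · intro k i B hB
    refine measurable_of_forall_integral (fun s => ((φ s).2 k).2 i) (fun h hh => ?_) B hB
    refine hψ (fun z => ∫ x, h x ∂((z.2 k).2 i : Measure (X i))) ?_
    have e : Continuous fun μ : ProbabilityMeasure (X i) => ∫ x, h x ∂(μ : Measure (X i)) :=
      ProbabilityMeasure.continuous_integral_boundedContinuousFunction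
        (BoundedContinuousFunction.mkOfCompact ⟨h, hh⟩)
    exact e.comp ((continuous_apply i).comp (c3 k))
  · intro s
    obtain ⟨N, hN, hlim⟩ := MapClusterPt.tendsto_subseq (hφ s)
    have hb : ∀ k, Tendsto (fun r => (((g (N r) s).1 k : Set.Icc (0:ℝ) 1) : ℝ)) atTop
        (nhds ((φ s).1 k)) := fun k =>
      ((c1 k).tendsto (φ s)).comp hlim
    have hy : ∀ k i, Tendsto (fun r => ((((g (N r) s).2 k).1 i : Set.Icc (-C) C) : ℝ)) atTop
        (nhds (((φ s).2 k).1 i)) := fun k i =>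
      ((c2 k i).tendsto (φ s)).comp hlim
    refine ⟨N, fun k r => t (N r) (l (N r) (τ (N r) s) k), hN, fun k r => ht _ _, hy, ?_, ?_⟩
    · intro k
      exact ((c3 k).tendsto (φ s)).comp hlim
    · intro i
      have := tendsto_finsetSum Finset.univ (fun k _ => (hb k).mul (hy k i))
      refine this.congr fun r => ?_
      exact hwl (N r) (τ (N r) s) i

end SMPE

namespace SMPE

theorem core {m : ℕ} {S : Type*} [mS : MeasurableSpace S]
    (lam : Measure S) [IsProbabilityMeasure lam]
    (S₁ S₂ : Set S) (hS₁ : MeasurableSet S₁)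
    (h_union : S₁ ∪ S₂ = Set.univ)
    (hS₂_cnt : S₂.Countable) (hS₂_sing : ∀ s ∈ S₂, MeasurableSet ({s} : Set S))
    (X : Fin m → Type*) [∀ i, MetricSpace (X i)] [∀ i, CompactSpace (X i)]
    [∀ i, Nonempty (X i)] [∀ i, MeasurableSpace (X i)] [∀ i, BorelSpace (X i)]
    (A : ∀ i, S → Set (X i))
    (hA_ne : ∀ i s, (A i s).Nonempty)
    (hA_cp : ∀ i s, IsCompact (A i s))
    (hA_meas : ∀ i (U : Set (X i)), IsOpen U → MeasurableSet {s | (A i s ∩ U).Nonempty})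
    (C : ℝ) (hC : 0 ≤ C) (u : Fin m → S → (∀ j, X j) → ℝ)
    (hu_bd : ∀ i s x, |u i s x| ≤ C)
    (hu_meas : ∀ i x, Measurable fun s => u i s x)
    (hu_cont : ∀ i s, Continuous (u i s))
    (β : Fin m → ℝ) (hβ : ∀ i, β i ∈ Set.Ico (0 : ℝ) 1)
    (Q : S → (∀ j, X j) → Measure S)
    (hQ_prob : ∀ s x, IsProbabilityMeasure (Q s x))
    (hQ_meas : ∀ E : Set S, MeasurableSet E →
      Measurable fun p : S × (∀ j, X j) => Q p.1 p.2 E)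
    (q : S → (∀ j, X j) → S → ℝ)
    (hq_nonneg : ∀ s x s₁, 0 ≤ q s x s₁)
    (hq_meas : ∀ s x, Measurable (q s x))
    (hQq : ∀ s x, Q s x = lam.withDensity fun s₁ => ENNReal.ofReal (q s x s₁))
    (hq_cont : ∀ s (xs : ℕ → ∀ j, X j) (x0 : ∀ j, X j), Tendsto xs atTop (nhds x0) →
      Tendsto (fun n => ∫ s₁, |q s (xs n) s₁ - q s x0 s₁| ∂lam) atTop (nhds 0))
    (J : ℕ)
    (qj : Fin J → S → S → (∀ j, X j) → ℝ) (rho : Fin J → S → ℝ)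
    (hqj_meas : ∀ j, Measurable fun p : S × S × (∀ j, X j) => qj j p.1 p.2.1 p.2.2)
    (hrho_int : ∀ j, Integrable (rho j) (lam.restrict S₁))
    (hq_decomp : ∀ s x, ∀ s₁ ∈ S₁, q s x s₁ = ∑ j, qj j s₁ s x * rho j s₁) :
    ∃ (w : Fin m → S → ℝ) (b : Fin (m+1) → S → ℝ) (y : Fin (m+1) → Fin m → S → ℝ)
      (F : Fin (m+1) → S → ∀ i, ProbabilityMeasure (X i)),
      (∀ i, Measurable (w i)) ∧ (∀ i s, |w i s| ≤ C) ∧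
      (∀ k, Measurable (b k)) ∧ (∀ k s, 0 ≤ b k s) ∧ (∀ s, ∑ k, b k s = 1) ∧
      (∀ k i, Measurable (y k i)) ∧ (∀ k i s, |y k i s| ≤ C) ∧
      (∀ k i (B : Set (X i)), MeasurableSet B → Measurable fun s => (F k s i : Measure (X i)) B) ∧
      (∀ k i s, y k i s = ∫ x, ((1 - β i) * u i s x + β i * ∫ s₁, w i s₁ * q s x s₁ ∂lam)
        ∂(Measure.pi fun j => (F k s j : Measure (X j)))) ∧
      (∀ k i s, ∀ a ∈ A i s, ∫ x, ((1 - β i) * u i s (Function.update x i a)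
        + β i * ∫ s₁, w i s₁ * q s (Function.update x i a) s₁ ∂lam)
        ∂(Measure.pi fun j => (F k s j : Measure (X j))) ≤ y k i s) ∧
      (∀ k i s, (F k s i : Measure (X i)) (A i s) = 1) ∧
      (∀ᵐ s ∂lam, ∀ i, w i s = ∑ k, b k s * y k i s) ∧
      (∀ s, MeasurableSet ({s} : Set S) → lam {s} ≠ 0 → ∀ k i, y k i s = w i s) := by
  classical
  have hqi : ∀ s x, Integrable (q s x) lam := fun s x =>
    integrable_density lam (q s x) (hq_meas s x) (hq_nonneg s x) (hQq s x ▸ hQ_prob s x)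
  have hQi : ∀ s x (g : S → ℝ), ∫ s₁, g s₁ ∂(Q s x) = ∫ s₁, g s₁ * q s x s₁ ∂lam := fun s x g => by
    rw [hQq]; exact int_withDensity lam (q s x) (hq_nonneg s x) (hq_meas s x) g
  obtain ⟨B, hB, hBq⟩ := exists_countgen (lam := lam) S₁ S₂ hS₁ h_union hS₂_cnt hS₂_sing
    (fun (t : S × ∀ j, X j) s₁ => q t.1 t.2 s₁) (fun j p => qj j p.1 p.2.1 p.2.2) rho hqj_meas
    hrho_int (fun t s₁ h => hq_decomp t.1 t.2 s₁ h)
  have hst := fun n : ℕ => stage lam X A hA_ne hA_meas C hC u hu_bd hu_meas β hβ Q hQ_prob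
    (fun x E hE => (hQ_meas E hE).comp measurable_prodMk_right)
    (pim B n) (measurable_pim B hB n) (1 / ((n:ℝ) + 1)) (by positivity)
  choose T hT c V Y f hc hV hY havg h1 h2 h3 using hst
  have hcm : ∀ n (E : Set (T n)), MeasurableSet (c n ⁻¹' E) := by
    intro n E
    have : c n ⁻¹' E = ⋃ t ∈ E, c n ⁻¹' {t} := by ext s; simp
    rw [this]
    have := hT n
    exact MeasurableSet.biUnion (Set.to_countable _) fun t _ => hc n t
  have hvm : ∀ n i, Measurable fun s => V n i (c n s) := fun n i E _ => hcm n (V n i ⁻¹' E)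
  obtain ⟨σ, w, hσ, hwm, hwb, htest, L, a, t, ha0, ha1, ht, hae⟩ :=
    weak_mazur_vec (P := lam) (fun n i s => V n i (c n s)) C hC hvm (fun n i s => hV n i _)
  obtain ⟨b, y, F, hbm, hb0, hb1, hym, hyb, hFm, hlim⟩ := cara_select X (fun n => T (σ n))
    (fun n => hT _) (fun n => c (σ n)) (fun n => hc _) C hC (fun n => V (σ n)) (fun n => hV _)
    (fun n => f (σ n)) L a t ha0 ha1 ht
  have hYm : ∀ n i, Measurable fun s => Y n i (pim B n s) := fun n i =>
    (measurable_of_finite (Y n i)).comp (measurable_pim B hB n)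
  -- weak convergence of the averaged values against the densities
  have hYq : ∀ i s x, Tendsto (fun n => ∫ s₁, Y (σ n) i (pim B (σ n) s₁) * q s x s₁ ∂lam) atTop
      (nhds (∫ s₁, w i s₁ * q s x s₁ ∂lam)) := by
    intro i s x
    obtain ⟨q', hq', he⟩ := hBq (s, x)
    have e0 := (tendsto_condExp_L1 B hB (q s x) q' (hqi s x) hq' he).comp hσ.tendsto_atTop
    have e1 := e0.const_mul C
    rw [mul_zero] at e1
    have e2 : Tendsto (fun n => (∫ s₁, Y (σ n) i (pim B (σ n) s₁) * q s x s₁ ∂lam)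
        - ∫ s₁, V (σ n) i (c (σ n) s₁) * q s x s₁ ∂lam) atTop (nhds 0) := by
      refine squeeze_zero_norm (fun n => ?_) e1
      refine avg_compare ((pfilt B hB).le (σ n)) (fun s => V (σ n) i (c (σ n) s))
        (fun s => Y (σ n) i (pim B (σ n) s)) (q s x) C
        (hvm _ _) (fun _ => hV _ _ _) ?_ (fun _ => hY _ _ _) ?_ (hqi s x)
      · exact (measurable_of_finite (Y (σ n) i)).comp (comap_measurable _)
      · rintro _ ⟨E, _, rfl⟩
        exact havg (σ n) i E
    have e3 := e2.add (htest i (q s x) (hqi s x))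
    rw [zero_add] at e3
    exact e3.congr fun n => sub_add_cancel _ _
  have hUu : ∀ i s, TendstoUniformly (fun n x => (1 - β i) * u i s x
      + β i * ∫ s₁, Y (σ n) i (pim B (σ n) s₁) * q s x s₁ ∂lam)
      (fun x => (1 - β i) * u i s x + β i * ∫ s₁, w i s₁ * q s x s₁ ∂lam) atTop := by
    intro i s
    exact unif_affine _ _ (unif_R lam (q s) (hqi s) (hq_cont s)
      (fun n s₁ => Y (σ n) i (pim B (σ n) s₁)) (fun n => hYm _ _) C (fun n _ => hY _ _ _) (w i)
      (hYq i s)) (fun x => (1 - β i) * u i s x) (β i)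
  have hcontU : ∀ i s (g : S → ℝ), Measurable g → (∀ s, |g s| ≤ C) →
      Continuous fun x => (1 - β i) * u i s x + β i * ∫ s₁, g s₁ * q s x s₁ ∂lam := by
    intro i s g hg hgb
    exact (continuous_const.mul (hu_cont i s)).add
      (continuous_const.mul (cont_R lam (q s) (hqi s) (hq_cont s) g hg C hgb))
  have hτ : ∀ (N τ : ℕ → ℕ), StrictMono N → (∀ r, N r ≤ τ r) → Tendsto τ atTop atTop :=
    fun N τ hN h => tendsto_atTop_mono h hN.tendsto_atTop
  have key : ∀ s k, (∀ i, y k i s = ∫ x, ((1 - β i) * u i s x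
        + β i * ∫ s₁, w i s₁ * q s x s₁ ∂lam) ∂(Measure.pi fun j => (F k s j : Measure (X j)))) ∧
      (∀ i, ∀ a ∈ A i s, ∫ x, ((1 - β i) * u i s (Function.update x i a)
        + β i * ∫ s₁, w i s₁ * q s (Function.update x i a) s₁ ∂lam)
        ∂(Measure.pi fun j => (F k s j : Measure (X j))) ≤ y k i s) ∧
      (∀ i, (F k s i : Measure (X i)) (A i s) = 1) := by
    intro s k
    obtain ⟨N, τ, hN, hNτ, hy1, hf1, -⟩ := hlim s
    have hτk := hτ N (τ k) hN (hNτ k)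
    have hε : Tendsto (fun r => 1 / (((σ (τ k r) : ℕ) : ℝ) + 1)) atTop (nhds 0) :=
      tendsto_one_div_add_atTop_nhds_zero_nat.comp (hσ.tendsto_atTop.comp hτk)
    have res := limit_nash X (fun i => A i s) (fun i => hA_ne i s) (fun i => hA_cp i s)
      (fun r => f (σ (τ k r)) (c _ s)) (F k s) (hf1 k)
      (fun r i x => (1 - β i) * u i s x
        + β i * ∫ s₁, Y (σ (τ k r)) i (pim B (σ (τ k r)) s₁) * q s x s₁ ∂lam)
      (fun i x => (1 - β i) * u i s x + β i * ∫ s₁, w i s₁ * q s x s₁ ∂lam)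
      (fun r i => hcontU i s _ (hYm _ _) (fun _ => hY _ _ _))
      (fun i => hcontU i s _ (hwm i) (hwb i))
      (fun i => fun U hU => hτk.eventually (hUu i s U hU))
      (fun r i => V (σ (τ k r)) i (c _ s)) _ hε
      (fun r i => by simpa only [hQi] using h1 (σ (τ k r)) i s)
      (fun r i a' ha' => by simpa only [hQi] using h2 (σ (τ k r)) i s a' ha')
      (fun r i => h3 (σ (τ k r)) i s)
    obtain ⟨r1, r2, r3⟩ := res
    have hyeq : ∀ i, y k i s = ∫ x, ((1 - β i) * u i s x
        + β i * ∫ s₁, w i s₁ * q s x s₁ ∂lam) ∂(Measure.pi fun j => (F k s j : Measure (X j))) :=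
      fun i => tendsto_nhds_unique (hy1 k i) (r1 i)
    exact ⟨hyeq, fun i a ha => (r2 i a ha).trans_eq (hyeq i).symm, r3⟩
  refine ⟨w, b, y, F, hwm, hwb, hbm, hb0, hb1, hym, hyb, hFm, fun k i s => (key s k).1 i,
    fun k i s => (key s k).2.1 i, fun k i s => (key s k).2.2 i, ?_, ?_⟩
  · filter_upwards [hae] with s hs i
    obtain ⟨N, τ, hN, hNτ, hy1, hf1, hs1⟩ := hlim s
    exact tendsto_nhds_unique ((hs i).comp hN.tendsto_atTop) (hs1 i)
  · intro s hs hpos k i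
    obtain ⟨N, τ, hN, hNτ, hy1, hf1, hs1⟩ := hlim s
    have e := htest i (Set.indicator {s} fun _ => 1) ((integrable_const (1:ℝ)).indicator hs)
    have e' : ∀ g : S → ℝ, ∫ x, g x * Set.indicator {s} (fun _ => (1:ℝ)) x ∂lam
        = lam.real {s} * g s := by
      intro g
      have : (fun x => g x * Set.indicator {s} (fun _ => (1:ℝ)) x)
          = Set.indicator {s} (fun _ => g s) := by
        ext x
        by_cases hx : x = s
        · subst hx; simp
        · simp [hx]
      rw [this, integral_indicator hs, setIntegral_const, smul_eq_mul]
    simp only [e'] at e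
    have hp : lam.real {s} ≠ 0 := by
      rw [measureReal_def]
      exact ENNReal.toReal_ne_zero.2 ⟨hpos, measure_ne_top _ _⟩
    have e3 := (e.comp (hτ N (τ k) hN (hNτ k))).const_mul (lam.real {s})⁻¹
    simp only [Function.comp_def, inv_mul_cancel_left₀ hp] at e3
    exact tendsto_nhds_unique (hy1 k i) e3

end SMPE

namespace SMPE

theorem finish {m : ℕ} {S : Type*} [mS : MeasurableSpace S]
    (lam : Measure S) [IsProbabilityMeasure lam]
    (S₁ S₂ : Set S) (hS₁ : MeasurableSet S₁) (hS₂ : MeasurableSet S₂)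
    (h_disj : Disjoint S₁ S₂) (h_union : S₁ ∪ S₂ = Set.univ)
    (hS₂_cnt : S₂.Countable) (hS₂_sing : ∀ s ∈ S₂, MeasurableSet ({s} : Set S))
    (X : Fin m → Type*) [∀ i, MetricSpace (X i)] [∀ i, CompactSpace (X i)]
    [∀ i, MeasurableSpace (X i)] [∀ i, BorelSpace (X i)]
    (A : ∀ i, S → Set (X i)) (hA_cp : ∀ i s, IsCompact (A i s))
    (C : ℝ) (u : Fin m → S → (∀ j, X j) → ℝ)
    (hu_cont : ∀ i s, Continuous (u i s))
    (β : Fin m → ℝ)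
    (Q : S → (∀ j, X j) → Measure S)
    (q : S → (∀ j, X j) → S → ℝ)
    (hqi : ∀ s x, Integrable (q s x) lam)
    (hq_cont : ∀ s (xs : ℕ → ∀ j, X j) (x0 : ∀ j, X j), Tendsto xs atTop (nhds x0) →
      Tendsto (fun n => ∫ s₁, |q s (xs n) s₁ - q s x0 s₁| ∂lam) atTop (nhds 0))
    (hQi : ∀ s x (g : S → ℝ), ∫ s₁, g s₁ ∂(Q s x) = ∫ s₁, g s₁ * q s x s₁ ∂lam)
    (w : Fin m → S → ℝ) (b : Fin (m+1) → S → ℝ) (y : Fin (m+1) → Fin m → S → ℝ)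
    (F : Fin (m+1) → S → ∀ i, ProbabilityMeasure (X i))
    (hwm : ∀ i, Measurable (w i)) (hwb : ∀ i s, |w i s| ≤ C)
    (hym : ∀ k i, Measurable (y k i)) (hyb : ∀ k i s, |y k i s| ≤ C)
    (hFm : ∀ k i (B : Set (X i)), MeasurableSet B → Measurable fun s => (F k s i : Measure (X i)) B)
    (hyeq : ∀ k i s, y k i s = ∫ x, ((1 - β i) * u i s x + β i * ∫ s₁, w i s₁ * q s x s₁ ∂lam)
        ∂(Measure.pi fun j => (F k s j : Measure (X j))))
    (hnash : ∀ k i s, ∀ a ∈ A i s, ∫ x, ((1 - β i) * u i s (Function.update x i a)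
        + β i * ∫ s₁, w i s₁ * q s (Function.update x i a) s₁ ∂lam)
        ∂(Measure.pi fun j => (F k s j : Measure (X j))) ≤ y k i s)
    (hFA : ∀ k i s, (F k s i : Measure (X i)) (A i s) = 1)
    (hae : ∀ᵐ s ∂lam, ∀ i, w i s = ∑ k, b k s * y k i s)
    (hat : ∀ s, MeasurableSet ({s} : Set S) → lam {s} ≠ 0 → ∀ k i, y k i s = w i s)
    (κ : S → Fin (m+1)) (hκ : Measurable κ)
    (hpur : ∀ s x, ∀ i, ∫ s₁ in S₁, y (κ s₁) i s₁ * q s x s₁ ∂lam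
      = ∫ s₁ in S₁, (∑ k, b k s₁ * y k i s₁) * q s x s₁ ∂lam) :
    ∃ (f : ∀ i, S → Measure (X i)) (v : Fin m → S → ℝ),
      (∀ i s, IsProbabilityMeasure (f i s)) ∧
      (∀ i (B : Set (X i)), MeasurableSet B → Measurable fun s => f i s B) ∧
      (∀ i s, f i s (A i s) = 1) ∧
      (∀ i, Measurable (v i)) ∧ (∀ i s, |v i s| ≤ C) ∧
      (∀ i s, v i s = ∫ x, ((1 - β i) * u i s x
        + β i * ∫ s₁, v i s₁ ∂(Q s x)) ∂(Measure.pi fun j => f j s)) ∧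
      (∀ i s, IsGreatest ((fun a => ∫ x, ((1 - β i) * u i s (Function.update x i a)
        + β i * ∫ s₁, v i s₁ ∂(Q s (Function.update x i a))) ∂(Measure.pi fun j => f j s))
        '' (A i s)) (v i s)) := by
  have hsel : ∀ {R : Type} [MeasurableSpace R] (g : Fin (m+1) → S → R), (∀ k, Measurable (g k)) →
      Measurable fun s => g (κ s) s := by
    intro R _ g hg
    have : Measurable fun p : Fin (m+1) × S => g p.1 p.2 := measurable_from_prod_countable_right hg
    exact this.comp (hκ.prodMk measurable_id)
  have hvm : ∀ i, Measurable fun s => y (κ s) i s := fun i => hsel (fun k s => y k i s) (fun k => hym k i)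
  have hvw : ∀ i s x, ∫ s₁, y (κ s₁) i s₁ ∂(Q s x) = ∫ s₁, w i s₁ * q s x s₁ ∂lam := by
    intro i s x
    rw [hQi]
    have hint : ∀ g : S → ℝ, Measurable g → (∀ s, |g s| ≤ C) →
        Integrable (fun s₁ => g s₁ * q s x s₁) lam := fun g hg hgb =>
      (hqi s x).bdd_mul (c := C) hg.aestronglyMeasurable (Eventually.of_forall hgb)
    have hc : S₂ = S₁ᶜ := by
      ext z
      have h1 : z ∈ S₁ ∪ S₂ := h_union ▸ Set.mem_univ z
      have h2 : ¬ (z ∈ S₁ ∧ z ∈ S₂) := fun h => Set.disjoint_left.1 h_disj h.1 h.2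
      simp only [Set.mem_union, Set.mem_compl_iff] at *
      tauto
    rw [← integral_add_compl hS₁ (hint _ (hvm i) (fun _ => hyb _ _ _)),
      ← integral_add_compl hS₁ (hint _ (hwm i) (hwb i)), hpur s x i]
    congr 1
    · refine integral_congr_ae ?_
      filter_upwards [ae_restrict_of_ae hae] with z hz
      rw [hz i]
    · rw [← hc]
      refine integral_congr_ae ?_
      have h0 : ∀ᵐ z ∂lam, z ∈ S₂ → lam {z} ≠ 0 := by
        have hn : lam {z | z ∈ S₂ ∧ lam {z} = 0} = 0 := by
          have hcnt : Set.Countable {z | z ∈ S₂ ∧ lam {z} = 0} := hS₂_cnt.mono fun z hz => hz.1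
          rw [← Set.biUnion_of_singleton {z | z ∈ S₂ ∧ lam {z} = 0}]
          exact (measure_biUnion_null_iff hcnt).2 fun z hz => hz.2
        rw [ae_iff]
        refine measure_mono_null (fun z hz => ?_) hn
        simpa using hz
      rw [EventuallyEq, ae_restrict_iff' hS₂]
      filter_upwards [h0] with z hz hz2
      rw [hat z (hS₂_sing z hz2) (hz hz2)]
  have hUc : ∀ i s, Continuous fun x => (1 - β i) * u i s x + β i * ∫ s₁, w i s₁ * q s x s₁ ∂lam :=
    fun i s => (continuous_const.mul (hu_cont i s)).add
      (continuous_const.mul (cont_R lam (q s) (hqi s) (hq_cont s) (w i) (hwm i) C (hwb i)))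
  refine ⟨fun i s => (F (κ s) s i : Measure (X i)), fun i s => y (κ s) i s,
    fun i s => inferInstance, fun i B hB => hsel (fun k s => (F k s i : Measure (X i)) B)
      (fun k => hFm k i B hB), fun i s => hFA _ _ _, hvm, fun i s => hyb _ _ _, ?_, ?_⟩
  · intro i s
    simp only [hvw]
    exact hyeq _ _ _
  · intro i s
    simp only [hvw]
    refine ⟨?_, ?_⟩
    · obtain ⟨D, hD⟩ : ∃ D, ∀ x, |(1 - β i) * u i s x + β i * ∫ s₁, w i s₁ * q s x s₁ ∂lam| ≤ D := by
        have := isCompact_univ.exists_bound_of_continuousOn (hUc i s).continuousOn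
        obtain ⟨D, hD⟩ := this
        exact ⟨D, fun x => hD x (Set.mem_univ x)⟩
      have hup := integral_pi_update X (fun j => (F (κ s) s j : Measure (X j))) i
        (fun x => (1 - β i) * u i s x + β i * ∫ s₁, w i s₁ * q s x s₁ ∂lam)
        (hUc i s).measurable D hD
      by_contra hne
      simp only [Set.mem_image, not_exists, not_and] at hne
      set Φ : X i → ℝ := fun a => ∫ x, ((1 - β i) * u i s (Function.update x i a)
        + β i * ∫ s₁, w i s₁ * q s (Function.update x i a) s₁ ∂lam)
        ∂(Measure.pi fun j => (F (κ s) s j : Measure (X j))) with hΦ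
      have hAe : ∀ᵐ a ∂(F (κ s) s i : Measure (X i)), a ∈ A i s :=
        (mem_ae_iff_prob_eq_one (hA_cp i s).measurableSet).2 (hFA _ _ _)
      have hlt : ∀ᵐ a ∂(F (κ s) s i : Measure (X i)), Φ a < y (κ s) i s :=
        hAe.mono fun a ha => lt_of_le_of_ne (hnash _ _ _ a ha) (hne a ha)
      have hΦm : AEStronglyMeasurable Φ (F (κ s) s i : Measure (X i)) := by
        have hc2 : Continuous fun p : X i × (∀ j, X j) => Function.update p.2 i p.1 := by fun_prop
        have hm2 := ((hUc i s).comp hc2).stronglyMeasurable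
        exact (hm2.integral_prod_right' (ν := Measure.pi fun j =>
          (F (κ s) s j : Measure (X j)))).aestronglyMeasurable
      have hΦi : Integrable Φ (F (κ s) s i : Measure (X i)) := by
        refine Integrable.of_bound hΦm D (Eventually.of_forall fun a => ?_)
        refine (norm_integral_le_of_norm_le_const (C := D) (Eventually.of_forall fun x => hD _)).trans ?_
        simp
      have h0 : ∫ a, (y (κ s) i s - Φ a) ∂(F (κ s) s i : Measure (X i)) = 0 := by
        rw [integral_sub (integrable_const _) hΦi, hup, ← hyeq]
        simp
      have h1 := (integral_eq_zero_iff_of_nonneg_ae (hlt.mono fun a ha => sub_nonneg.2 ha.le)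
        ((integrable_const _).sub hΦi)).1 h0
      have h2 : ∀ᵐ a ∂(F (κ s) s i : Measure (X i)), False := by
        filter_upwards [h1, hlt] with a ha hb
        simp only [Pi.zero_apply] at ha
        linarith
      simp only [eventually_false_iff_eq_bot, ae_eq_bot] at h2
      exact IsProbabilityMeasure.ne_zero _ h2
    · rintro _ ⟨a, ha, rfl⟩
      exact hnash _ _ _ a ha

end SMPE

/-- **Proposition 1 (He–Sun)**: every discounted stochastic game with a decomposable
coarser transition kernel on the atomless part has a stationary Markov perfect
equilibrium. -/
theorem exists_stationary_markov_perfect_equilibrium_of_decomposable_coarser_kernel_atomless_part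
    {m : ℕ} {S : Type*} [mS : MeasurableSpace S]
    (lam : Measure S) [IsProbabilityMeasure lam]
    -- `S` splits into the atomless part `S₁` and the purely atomic part `S₂`,
    -- where `S₂` is countable and each of its points is measurable
    (S₁ S₂ : Set S) (hS₁ : MeasurableSet S₁) (hS₂ : MeasurableSet S₂)
    (h_disj : Disjoint S₁ S₂) (h_union : S₁ ∪ S₂ = Set.univ)
    (hS₂_cnt : S₂.Countable) (hS₂_sing : ∀ s ∈ S₂, MeasurableSet ({s} : Set S))
    (h_atomless₁ : ∀ D ⊆ S₁, MeasurableSet D → 0 < lam D →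
      ∃ D₀ ⊆ D, MeasurableSet D₀ ∧ 0 < lam D₀ ∧ lam D₀ < lam D)
    -- compact metric action spaces
    (X : Fin m → Type*) [∀ i, MetricSpace (X i)] [∀ i, CompactSpace (X i)]
    [∀ i, Nonempty (X i)] [∀ i, MeasurableSpace (X i)] [∀ i, BorelSpace (X i)]
    -- feasible-action correspondences
    (A : ∀ i, S → Set (X i))
    (hA_ne : ∀ i s, (A i s).Nonempty)
    (hA_cp : ∀ i s, IsCompact (A i s))
    (hA_meas : ∀ i (U : Set (X i)), IsOpen U → MeasurableSet {s | (A i s ∩ U).Nonempty})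
    -- stage payoffs, bounded by `C`, measurable in `s`, continuous in `x`
    (C : ℝ) (u : Fin m → S → (∀ j, X j) → ℝ)
    (hu_bd : ∀ i s x, |u i s x| ≤ C)
    (hu_meas : ∀ i x, Measurable fun s => u i s x)
    (hu_cont : ∀ i s, Continuous (u i s))
    -- discount factors
    (β : Fin m → ℝ) (hβ : ∀ i, β i ∈ Set.Ico (0 : ℝ) 1)
    -- transition probability
    (Q : S → (∀ j, X j) → Measure S)
    (hQ_prob : ∀ s x, IsProbabilityMeasure (Q s x))
    (hQ_meas : ∀ E : Set S, MeasurableSet E →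
      Measurable fun p : S × (∀ j, X j) => Q p.1 p.2 E)
    -- transition kernel (Radon–Nikodym derivative with respect to `lam`)
    (q : S → (∀ j, X j) → S → ℝ)
    (hq_nonneg : ∀ s x s₁, 0 ≤ q s x s₁)
    (hq_meas : ∀ s x, Measurable (q s x))
    (hQq : ∀ s x, Q s x = lam.withDensity fun s₁ => ENNReal.ofReal (q s x s₁))
    -- L¹-norm continuity of the kernel in the action variable
    (hq_cont : ∀ s (xs : ℕ → ∀ j, X j) (x0 : ∀ j, X j), Tendsto xs atTop (nhds x0) →
      Tendsto (fun n => ∫ s₁, |q s (xs n) s₁ - q s x0 s₁| ∂lam) atTop (nhds 0))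
    -- on the atomless part, the kernel decomposes as
    -- `q(s₁|s,x) = ∑ⱼ qj j (s₁,s,x) * rho j s₁` for `s₁ ∈ S₁`
    (J : ℕ) (hJ : 0 < J)
    (qj : Fin J → S → S → (∀ j, X j) → ℝ) (rho : Fin J → S → ℝ)
    (hqj_nonneg : ∀ j s₁ s x, 0 ≤ qj j s₁ s x)
    (hqj_meas : ∀ j, Measurable fun p : S × S × (∀ j, X j) => qj j p.1 p.2.1 p.2.2)
    (hrho_nonneg : ∀ j s₁, 0 ≤ rho j s₁)
    (hrho_int : ∀ j, Integrable (rho j) (lam.restrict S₁))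
    (hq_decomp : ∀ s x, ∀ s₁ ∈ S₁, q s x s₁ = ∑ j, qj j s₁ s x * rho j s₁)
    -- decomposable coarser transition kernel on the atomless part: for some
    -- sub-σ-algebra `G` of the trace σ-algebra on `S₁`, each `qj j (·,s,x)` is
    -- `G`-measurable on `S₁` and the trace σ-algebra has no `G`-atom under `lam`
    (G : MeasurableSpace ↥S₁) (hG : G ≤ Subtype.instMeasurableSpace)
    (hqj_G : ∀ j s x, Measurable[G] fun s₁ : ↥S₁ => qj j s₁.val s x)
    (h_no_atom : ∀ D : Set ↥S₁, MeasurableSet[Subtype.instMeasurableSpace] D →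
      ¬ IsGAtom Subtype.instMeasurableSpace G
        (@Measure.comap ↥S₁ S Subtype.instMeasurableSpace mS Subtype.val lam) D) :
    ∃ (f : ∀ i, S → Measure (X i)) (v : Fin m → S → ℝ),
      -- `f` is a stationary Markov strategy profile
      (∀ i s, IsProbabilityMeasure (f i s)) ∧
      (∀ i (B : Set (X i)), MeasurableSet B → Measurable fun s => f i s B) ∧
      (∀ i s, f i s (A i s) = 1) ∧
      -- `v` are the (essentially bounded measurable) continuation values of `f`
      (∀ i, Measurable (v i)) ∧ (∀ i s, |v i s| ≤ C) ∧
      (∀ i s, v i s = ∫ x, ((1 - β i) * u i s x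
        + β i * ∫ s₁, v i s₁ ∂(Q s x)) ∂(Measure.pi fun j => f j s)) ∧
      -- `f` is a stationary Markov perfect equilibrium: for all `i` and `s`,
      -- `v i s` is the maximum over `a ∈ A i s` of the expected payoff
      (∀ i s, IsGreatest ((fun a => ∫ x, ((1 - β i) * u i s (Function.update x i a)
        + β i * ∫ s₁, v i s₁ ∂(Q s (Function.update x i a))) ∂(Measure.pi fun j => f j s))
        '' (A i s)) (v i s)) := by
  classical
  rcases Nat.eq_zero_or_pos m with rfl | hm
  · exact ⟨fun i => i.elim0, fun i => i.elim0, fun i => i.elim0, fun i => i.elim0,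
      fun i => i.elim0, fun i => i.elim0, fun i => i.elim0, fun i => i.elim0, fun i => i.elim0⟩
  have hSne : Nonempty S := by
    by_contra h
    rw [not_nonempty_iff] at h
    have := measure_univ (μ := lam)
    rw [Measure.eq_zero_of_isEmpty lam] at this
    simp at this
  have hC : 0 ≤ C := (abs_nonneg _).trans
    (hu_bd ⟨0, hm⟩ (Classical.arbitrary S) (fun j => Classical.arbitrary (X j)))
  obtain ⟨w, b, y, F, hwm, hwb, hbm, hb0, hb1, hym, hyb, hFm, hyeq, hnash, hFA, hae, hat⟩ :=
    SMPE.core lam S₁ S₂ hS₁ h_union hS₂_cnt hS₂_sing X A hA_ne hA_cp hA_meas C hC u hu_bd hu_meas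
      hu_cont β hβ Q hQ_prob hQ_meas q hq_nonneg hq_meas hQq hq_cont J qj rho hqj_meas hrho_int
      hq_decomp
  have hna : SMPE.NoAtom G
      (@Measure.comap ↥S₁ S Subtype.instMeasurableSpace mS Subtype.val lam) := h_no_atom
  have hqi : ∀ s x, Integrable (q s x) lam := fun s x =>
    SMPE.integrable_density lam (q s x) (hq_meas s x) (hq_nonneg s x) (hQq s x ▸ hQ_prob s x)
  have hQi : ∀ s x (g : S → ℝ), ∫ s₁, g s₁ ∂(Q s x) = ∫ s₁, g s₁ * q s x s₁ ∂lam := fun s x g => by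
    rw [hQq]; exact SMPE.int_withDensity lam (q s x) (hq_nonneg s x) (hq_meas s x) g
  obtain ⟨κ, hκ, hpur⟩ := SMPE.purify_apply (mW := Subtype.instMeasurableSpace) lam S₁ Subtype.val
    (MeasurableEmbedding.subtype_coe hS₁) Subtype.range_coe hG hna
    (fun (θ : S × ∀ j, X j) s₁ => q θ.1 θ.2 s₁) (fun θ => hqi θ.1 θ.2)
    (fun θ => hq_nonneg θ.1 θ.2) (fun j θ s₁ => qj j s₁ θ.1 θ.2)
    (fun j θ s => hqj_nonneg j s θ.1 θ.2) rho hrho_nonneg hrho_int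
    (fun θ s hs => hq_decomp θ.1 θ.2 s hs) (fun j θ => hqj_G j θ.1 θ.2) b hbm hb0 hb1 y hym C hyb
  exact SMPE.finish lam S₁ S₂ hS₁ hS₂ h_disj h_union hS₂_cnt hS₂_sing X A hA_cp C u hu_cont β
    Q q hqi hq_cont hQi w b y F hwm hwb hym hyb hFm hyeq hnash hFA hae hat κ hκ
    (fun s x => hpur (s, x))
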